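/- arXiv:2203.06733 — 2 statements merged into one kernel-verified Lean document; each statement's English description precedes it below -/
import Mathlib

section
/- Let μ_1, …, μ_S be purely point measures on ℝ^d belonging to S*(ℝ^d) with uniformly discrete supports Λ_1, …, Λ_S, such that each μ̂_s is a purely point measure satisfying |μ̂_s|(B(0,r)) = O(r^d) as r → ∞, and inf_{λ ∈ Λ_1 ∪ ⋯ ∪ Λ_S} Σ_{s=1}^S |μ_s(λ)| > 0 (where μ_s(λ) := 0 if λ ∉ Λ_s). If in addition the union Λ_1 ∪ ⋯ ∪ Λ_S is uniformly discrete, then every μ_s whose spectrum supp μ̂_s is locally finite is a generalized lattice Dirac comb. -/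
open MeasureTheory SchwartzMap Metric Set
open scoped Pointwise RealInnerProductSpace ENNReal NNReal

noncomputable section

/-- Euclidean space `ℝ^d`. -/
abbrev Rd (d : ℕ) : Type := EuclideanSpace ℝ (Fin d)

/-- The space `S*(ℝ^d)` of tempered distributions: continuous linear functionals
on the Schwartz space `S(ℝ^d)`. -/
abbrev TemperedDist (d : ℕ) : Type := SchwartzMap (Rd d) ℂ →L[ℂ] ℂ

/-- The Fourier transform of a tempered distribution: `f̂(φ) = f(φ̂)`. -/
def fourierTD {d : ℕ} (f : TemperedDist d) : TemperedDist d :=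
  f.comp (fourierTransformCLM ℂ)

/-- The support of a tempered distribution: `x ∈ supp f` iff for every open
neighbourhood `U` of `x` there is a smooth compactly supported test function
supported in `U` on which `f` does not vanish. -/
def tdSupport {d : ℕ} (f : TemperedDist d) : Set (Rd d) :=
  {x | ∀ U : Set (Rd d), IsOpen U → x ∈ U →
    ∃ φ : SchwartzMap (Rd d) ℂ, HasCompactSupport (⇑φ) ∧ tsupport (⇑φ) ⊆ U ∧ f φ ≠ 0}

/-- A set is locally finite if its intersection with every ball is finite. -/
def LocFinite {d : ℕ} (A : Set (Rd d)) : Prop :=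
  ∀ (x : Rd d) (r : ℝ), (A ∩ Metric.ball x r).Finite

/-- A set is uniformly discrete if distances between distinct points are
bounded below by a positive constant. -/
def UniformlyDiscrete {d : ℕ} (A : Set (Rd d)) : Prop :=
  ∃ η > (0:ℝ), ∀ x ∈ A, ∀ y ∈ A, x ≠ y → η ≤ dist x y

/-- A set is polynomially discrete (p-discrete) if
`|x - x'| ≥ c min{1, |x|^{-h}}` for distinct points `x, x'` of the set. -/
def PDiscrete {d : ℕ} (A : Set (Rd d)) : Prop :=
  ∃ c > (0:ℝ), ∃ h > (0:ℝ), ∀ x ∈ A, ∀ y ∈ A, x ≠ y →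
    c * (if ‖x‖ ≤ 1 then 1 else ‖x‖ ^ (-h)) ≤ dist x y

/-- A set has bounded density if it is locally finite and the number of its
points in balls of radius 1 is uniformly bounded. -/
def BoundedDensity {d : ℕ} (A : Set (Rd d)) : Prop :=
  LocFinite A ∧ ∃ N : ℕ, ∀ x : Rd d, (A ∩ Metric.ball x 1).ncard ≤ N

/-- A set is relatively dense if it intersects every ball of some fixed radius `R`. -/
def RelDense {d : ℕ} (A : Set (Rd d)) : Prop :=
  ∃ R : ℝ, 0 < R ∧ ∀ x : Rd d, ∃ a ∈ A, dist x a ≤ R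

/-- A full-rank lattice in `ℝ^d` is the image of `ℤ^d` under an invertible
linear operator. -/
def IsFullRankLattice {d : ℕ} (L : Set (Rd d)) : Prop :=
  ∃ T : Rd d →ₗ[ℝ] Rd d, Function.Bijective T ∧
    L = T '' {x : Rd d | ∀ i, ∃ n : ℤ, x i = (n : ℝ)}

/-- The multi-indices `k ∈ (ℕ ∪ {0})^d` with `‖k‖ = k₁ + ⋯ + k_d ≤ K`. -/
def mIdx (d K : ℕ) : Finset (Fin d → ℕ) :=
  (Finset.Iic fun _ => K).filter fun k => (∑ i, k i) ≤ K

/-- Partial derivative in the `i`-th coordinate direction. -/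
def pderiv' {d : ℕ} (i : Fin d) (φ : Rd d → ℂ) : Rd d → ℂ :=
  fun x => fderiv ℝ φ x (EuclideanSpace.single i (1:ℝ))

/-- The mixed partial derivative `D^k = ∂^{k₁}_{x₁} ⋯ ∂^{k_d}_{x_d}`. -/
def Dmulti {d : ℕ} (k : Fin d → ℕ) : (Rd d → ℂ) → (Rd d → ℂ) :=
  ((List.finRange d).map fun i => (pderiv' i)^[k i]).foldr (· ∘ ·) id

/-- The action of `D^k δ_λ` on a test function: `φ ↦ (-1)^{‖k‖} (D^k φ)(λ)`. -/
def dkDelta {d : ℕ} (k : Fin d → ℕ) (lam : Rd d) (φ : SchwartzMap (Rd d) ℂ) : ℂ :=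
  (-1 : ℂ) ^ (∑ i, k i) * Dmulti k (⇑φ) lam

/-- The exponential `e^{2πi⟨x,w⟩}`. -/
def e2pi {d : ℕ} (x w : Rd d) : ℂ :=
  Complex.exp (((2 * Real.pi : ℝ) : ℂ) * Complex.I * ((⟪x, w⟫ : ℝ) : ℂ))

/-- A trigonometric polynomial: a finite sum `Σ c_ω e^{2πi⟨x,ω⟩}`. -/
def IsTrigPoly {d : ℕ} (P : Rd d → ℂ) : Prop :=
  ∃ (n : ℕ) (cc : Fin n → ℂ) (w : Fin n → Rd d),
    ∀ x, P x = ∑ i, cc i * e2pi x (w i)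

/-- The monomial `x^m = x₁^{m₁} ⋯ x_d^{m_d}` (as a complex number). -/
def monom {d : ℕ} (m : Fin d → ℕ) (x : Rd d) : ℂ := ((∏ i, (x i) ^ (m i) : ℝ) : ℂ)

/-- The total variation of the pure point measure with masses `b` on the open
ball `B(0,r)`: `Σ_{|γ| < r} |b(γ)|` (as an extended nonnegative real). -/
def ballVar {d : ℕ} (b : Rd d → ℂ) (r : ℝ) : ℝ≥0∞ :=
  ∑' γ : Rd d, if ‖γ‖ < r then (‖b γ‖₊ : ℝ≥0∞) else 0

/-- The pure point measure `μ = Σ_λ a(λ) δ_λ` belongs to `S*(ℝ^d)` and is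
represented there by the tempered distribution `f`: its support is countable,
`Σ_λ |a(λ)| |φ(λ)| < ∞` for every Schwartz function `φ`, and the (automatically
continuous) functional `φ ↦ Σ_λ a(λ) φ(λ)` coincides with `f`. -/
def RepMeasure {d : ℕ} (a : Rd d → ℂ) (f : TemperedDist d) : Prop :=
  {x | a x ≠ 0}.Countable ∧
  (∀ φ : SchwartzMap (Rd d) ℂ, Summable fun lam => ‖a lam‖ * ‖φ lam‖) ∧
  (∀ φ : SchwartzMap (Rd d) ℂ, f φ = ∑' lam, a lam * φ lam)

/-- A continuous function on `ℝ^d` is almost periodic if for every `ε > 0` its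
set of `ε`-almost periods is relatively dense. -/
def APFunction {d : ℕ} (g : Rd d → ℂ) : Prop :=
  Continuous g ∧ ∀ ε > (0:ℝ), RelDense {τ : Rd d | ∀ t, ‖g (t + τ) - g t‖ < ε}

/-- A tempered distribution is almost periodic if for every smooth compactly
supported `ψ` the function `t ↦ f(ψ(t - ·))` is almost periodic. -/
def APDistribution {d : ℕ} (f : TemperedDist d) : Prop :=
  ∀ ψ : Rd d → ℂ, ContDiff ℝ (⊤ : ℕ∞) ψ → HasCompactSupport ψ →
    ∀ Φ : Rd d → SchwartzMap (Rd d) ℂ, (∀ t y, Φ t y = ψ (t - y)) →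
      APFunction fun t => f (Φ t)

section Helpers
open Filter Topology FourierTransform

lemma e2pi_norm {d : ℕ} (x w : Rd d) : ‖e2pi x w‖ = 1 := by
  unfold e2pi
  rw [show ((2 * Real.pi : ℝ) : ℂ) * Complex.I * ((⟪x, w⟫ : ℝ) : ℂ)
    = ((2 * Real.pi * ⟪x, w⟫ : ℝ) : ℂ) * Complex.I by push_cast; ring]
  exact Complex.norm_exp_ofReal_mul_I _

lemma e2pi_add_left {d : ℕ} (x y w : Rd d) : e2pi (x + y) w = e2pi x w * e2pi y w := by
  unfold e2pi
  rw [← Complex.exp_add, inner_add_left]; push_cast; ring_nf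

lemma e2pi_add_right {d : ℕ} (x v w : Rd d) : e2pi x (v + w) = e2pi x v * e2pi x w := by
  unfold e2pi
  rw [← Complex.exp_add, inner_add_right]; push_cast; ring_nf

lemma e2pi_comm {d : ℕ} (x w : Rd d) : e2pi x w = e2pi w x := by
  unfold e2pi
  rw [real_inner_comm]

@[simp] lemma e2pi_zero_left {d : ℕ} (w : Rd d) : e2pi 0 w = 1 := by
  simp [e2pi]

@[simp] lemma e2pi_zero_right {d : ℕ} (w : Rd d) : e2pi w 0 = 1 := by
  simp [e2pi]

lemma e2pi_ne_zero {d : ℕ} (x w : Rd d) : e2pi x w ≠ 0 := by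
  unfold e2pi; exact Complex.exp_ne_zero _

lemma e2pi_neg_left {d : ℕ} (x w : Rd d) : e2pi (-x) w = (e2pi x w)⁻¹ := by
  apply eq_inv_of_mul_eq_one_left; rw [← e2pi_add_left]; simp

lemma e2pi_neg_right {d : ℕ} (x w : Rd d) : e2pi x (-w) = (e2pi x w)⁻¹ := by
  rw [e2pi_comm, e2pi_neg_left, e2pi_comm]

lemma e2pi_conj {d : ℕ} (x w : Rd d) : (starRingEnd ℂ) (e2pi x w) = (e2pi x w)⁻¹ := by
  rw [Complex.inv_def, Complex.normSq_eq_norm_sq, e2pi_norm]; simp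

lemma e2pi_eq_one_iff {d : ℕ} (x w : Rd d) : e2pi x w = 1 ↔ ∃ n : ℤ, ⟪x, w⟫ = (n : ℝ) := by
  unfold e2pi
  rw [Complex.exp_eq_one_iff]
  constructor
  · rintro ⟨n, hn⟩
    refine ⟨n, ?_⟩
    have h2 : ((2 * Real.pi : ℝ) : ℂ) * Complex.I ≠ 0 := by
      simp [Real.pi_ne_zero]
    have : ((⟪x, w⟫ : ℝ) : ℂ) = (n : ℂ) := by
      apply mul_left_cancel₀ h2
      rw [hn]; push_cast; ring
    exact_mod_cast this
  · rintro ⟨n, hn⟩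
    refine ⟨n, ?_⟩
    rw [hn]; push_cast; ring

/-- Fourier pair of pure point measures. -/
structure FPair {d : ℕ} (a b : Rd d → ℂ) : Prop where
  sa : ∀ φ : SchwartzMap (Rd d) ℂ, Summable fun x => ‖a x‖ * ‖φ x‖
  sb : ∀ φ : SchwartzMap (Rd d) ℂ, Summable fun x => ‖b x‖ * ‖φ x‖
  eq : ∀ φ : SchwartzMap (Rd d) ℂ, ∑' x, a x * (𝓕 φ) x = ∑' x, b x * φ x

lemma FPair.of_rep {d : ℕ} {a b : Rd d → ℂ} {f : TemperedDist d}
    (h1 : RepMeasure a f) (h2 : RepMeasure b (fourierTD f)) : FPair a b := by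
  refine ⟨h1.2.1, h2.2.1, fun φ => ?_⟩
  rw [← h2.2.2 φ, ← h1.2.2 (𝓕 φ)]
  rfl

lemma FPair.sa' {d : ℕ} {a b : Rd d → ℂ} (h : FPair a b) (φ : SchwartzMap (Rd d) ℂ) :
    Summable fun x => a x * φ x := by
  apply Summable.of_norm
  simpa using h.sa φ

lemma FPair.sb' {d : ℕ} {a b : Rd d → ℂ} (h : FPair a b) (φ : SchwartzMap (Rd d) ℂ) :
    Summable fun x => b x * φ x := by
  apply Summable.of_norm
  simpa using h.sb φ

lemma FPair.add {d : ℕ} {a b a' b' : Rd d → ℂ} (h : FPair a b) (h' : FPair a' b') :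
    FPair (fun x => a x + a' x) (fun x => b x + b' x) := by
  refine ⟨fun φ => ?_, fun φ => ?_, fun φ => ?_⟩
  · refine Summable.of_nonneg_of_le (fun x => by positivity) (fun x => ?_) ((h.sa φ).add (h'.sa φ))
    rw [← add_mul]
    gcongr
    exact norm_add_le _ _
  · refine Summable.of_nonneg_of_le (fun x => by positivity) (fun x => ?_) ((h.sb φ).add (h'.sb φ))
    rw [← add_mul]
    gcongr
    exact norm_add_le _ _
  · simp only [add_mul]
    rw [(h.sa' _).tsum_add (h'.sa' _), (h.sb' _).tsum_add (h'.sb' _), h.eq, h'.eq]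

lemma FPair.smul {d : ℕ} {a b : Rd d → ℂ} (h : FPair a b) (c : ℂ) :
    FPair (fun x => c * a x) (fun x => c * b x) := by
  refine ⟨fun φ => ?_, fun φ => ?_, fun φ => ?_⟩
  · simpa [mul_assoc] using (h.sa φ).mul_left ‖c‖
  · simpa [mul_assoc] using (h.sb φ).mul_left ‖c‖
  · simp only [mul_assoc]
    rw [tsum_mul_left, tsum_mul_left, h.eq]

lemma fourier_e2pi {d : ℕ} (φ : Rd d → ℂ) (x : Rd d) :
    (𝓕 φ) x = ∫ v, (e2pi x v)⁻¹ * φ v := by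
  rw [Real.fourier_eq']
  congr 1; ext v
  rw [← e2pi_neg_left, e2pi, smul_eq_mul]
  congr 2
  rw [inner_neg_left, real_inner_comm]
  push_cast; ring

lemma fourierInv_e2pi {d : ℕ} (φ : Rd d → ℂ) (x : Rd d) :
    (𝓕⁻ φ) x = ∫ v, (e2pi x v) * φ v := by
  rw [Real.fourierInv_eq']
  congr 1; ext v
  rw [e2pi, smul_eq_mul]
  congr 2
  rw [real_inner_comm]
  push_cast; ring

lemma fourier_translate {d : ℕ} (φ : SchwartzMap (Rd d) ℂ) (w x : Rd d) :
    (𝓕 (compSubConstCLM ℂ (-w) φ)) x = e2pi x w * (𝓕 φ) x := by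
  rw [SchwartzMap.fourier_coe, SchwartzMap.fourier_coe, fourier_e2pi, fourier_e2pi,
    ← integral_const_mul]
  rw [← integral_sub_right_eq_self _ w]
  congr 1; ext v
  rw [compSubConstCLM_apply, sub_eq_add_neg v w, e2pi_add_right, e2pi_neg_right]
  field_simp [e2pi_ne_zero]
  simp

lemma FPair.modul {d : ℕ} {a b : Rd d → ℂ} (h : FPair a b) (w : Rd d) :
    FPair (fun x => e2pi x w * a x) (fun x => b (x - w)) := by
  have key : ∀ φ : SchwartzMap (Rd d) ℂ, ∀ x,
      (compSubConstCLM ℂ (-w) φ) x = φ (x + w) := by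
    intro φ x; rw [compSubConstCLM_apply, sub_neg_eq_add]
  refine ⟨fun φ => ?_, fun φ => ?_, fun φ => ?_⟩
  · simpa [e2pi_norm] using h.sa φ
  · have := h.sb (compSubConstCLM ℂ (-w) φ)
    rw [← (Equiv.subRight w).summable_iff] at this
    refine this.congr fun x => ?_
    simp [key]
  · have := h.eq (compSubConstCLM ℂ (-w) φ)
    rw [← (Equiv.subRight w).tsum_eq (fun x => b x * (compSubConstCLM ℂ (-w) φ) x)] at this
    simp only [key, Equiv.subRight_apply, sub_add_cancel] at this
    rw [← this]
    refine tsum_congr fun x => ?_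
    rw [fourier_translate]; ring

/-- scaled and translated test function `y ↦ ψ((y - x)/δ)` -/
def scaled {d : ℕ} (ψ : SchwartzMap (Rd d) ℂ) (δ : ℝ) (hδ : δ ≠ 0) (x : Rd d) :
    SchwartzMap (Rd d) ℂ :=
  compSubConstCLM ℂ x (compCLMOfContinuousLinearEquiv ℂ
    (ContinuousLinearEquiv.smulLeft (Units.mk0 δ⁻¹ (inv_ne_zero hδ))) ψ)

lemma scaled_apply {d : ℕ} (ψ : SchwartzMap (Rd d) ℂ) (δ : ℝ) (hδ : δ ≠ 0) (x y : Rd d) :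
    scaled ψ δ hδ x y = ψ (δ⁻¹ • (y - x)) := by
  unfold scaled
  rw [compSubConstCLM_apply]
  rfl

/-- The weight `δ^d ψ̌(δ γ)`. -/
def Wt {d : ℕ} (ψ : SchwartzMap (Rd d) ℂ) (δ : ℝ) (γ : Rd d) : ℂ :=
  ((δ ^ d : ℝ) : ℂ) * (𝓕⁻ ψ) (δ • γ)

lemma fourierInv_scaled {d : ℕ} (ψ : SchwartzMap (Rd d) ℂ) (δ : ℝ) (hδ : 0 < δ) (x γ : Rd d) :
    (𝓕⁻ (scaled ψ δ hδ.ne' x)) γ = Wt ψ δ γ * e2pi x γ := by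
  rw [SchwartzMap.fourierInv_coe, fourierInv_e2pi, Wt, SchwartzMap.fourierInv_coe, fourierInv_e2pi]
  rw [← integral_add_right_eq_self _ x]
  have := Measure.integral_comp_smul (volume : Measure (Rd d))
    (fun v => e2pi γ (δ • v + x) * ψ v) δ⁻¹
  simp only [finrank_euclideanSpace, Fintype.card_fin] at this
  have h2 : ∀ v : Rd d, e2pi γ (v + x) * (scaled ψ δ hδ.ne' x) (v + x)
      = e2pi γ (δ • δ⁻¹ • v + x) * ψ (δ⁻¹ • v) := by
    intro v
    rw [scaled_apply, smul_smul, mul_inv_cancel₀ hδ.ne', one_smul, add_sub_cancel_right]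
  simp only [h2]
  rw [this]
  have h3 : |((δ⁻¹ ^ d)⁻¹ : ℝ)| = δ ^ d := by
    rw [inv_pow, inv_inv, abs_of_pos (by positivity)]
  rw [h3, Complex.real_smul, mul_assoc]
  congr 1
  rw [mul_comm, ← integral_const_mul]
  congr 1; ext v
  have h4 : e2pi γ (δ • v) = e2pi (δ • γ) v := by
    unfold e2pi; rw [real_inner_smul_right, real_inner_smul_left]
  rw [e2pi_add_right, h4, e2pi_comm γ x]; ring

lemma FPair.key {d : ℕ} {a b : Rd d → ℂ} (h : FPair a b) (ψ : SchwartzMap (Rd d) ℂ) (δ : ℝ)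
    (hδ : 0 < δ) (x : Rd d) :
    ∑' y, a y * ψ (δ⁻¹ • (y - x)) = ∑' γ, b γ * Wt ψ δ γ * e2pi x γ := by
  have := h.eq (𝓕⁻ (scaled ψ δ hδ.ne' x))
  rw [FourierTransform.fourier_fourierInv_eq] at this
  simp only [scaled_apply] at this
  rw [this]
  refine tsum_congr fun γ => ?_
  rw [fourierInv_scaled ψ δ hδ, mul_assoc]

lemma FPair.summable_Wt {d : ℕ} {a b : Rd d → ℂ} (h : FPair a b) (ψ : SchwartzMap (Rd d) ℂ) (δ : ℝ)
    (hδ : 0 < δ) : Summable fun γ => ‖b γ * Wt ψ δ γ‖ := by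
  have := h.sb (𝓕⁻ (scaled ψ δ hδ.ne' 0))
  refine this.congr fun γ => ?_
  rw [fourierInv_scaled ψ δ hδ]; simp

/-- a fixed bump function -/
lemma exists_bump (d : ℕ) : ∃ ψ : SchwartzMap (Rd d) ℂ, ψ 0 = 1 ∧ (∀ y, 1 ≤ ‖y‖ → ψ y = 0) ∧
    (∀ y, ‖ψ y‖ ≤ 1) := by
  let β : ContDiffBump (0 : Rd d) := ⟨1/2, 1, by norm_num, by norm_num⟩
  have hc : HasCompactSupport (fun y => ((β y : ℝ) : ℂ)) := by
    have := β.hasCompactSupport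
    exact this.comp_left (g := fun r : ℝ => (r : ℂ)) (by simp)
  have hs : ContDiff ℝ (⊤ : ℕ∞) (fun y => ((β y : ℝ) : ℂ)) :=
    Complex.ofRealCLM.contDiff.comp β.contDiff
  refine ⟨hc.toSchwartzMap hs, ?_, ?_, ?_⟩
  · change ((β 0 : ℝ) : ℂ) = 1
    rw [β.one_of_mem_closedBall (by simp [β.rIn_pos.le])]; simp
  · intro y hy
    change ((β y : ℝ) : ℂ) = 0
    rw [β.zero_of_le_dist (by simpa using hy)]; simp
  · intro y
    change ‖((β y : ℝ) : ℂ)‖ ≤ 1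
    rw [Complex.norm_real, Real.norm_of_nonneg β.nonneg]
    exact β.le_one

/-- If all mass points in the ball around `x` are `x` itself, the smoothing gives `a x`. -/
lemma isolate {d : ℕ} {a : Rd d → ℂ} (ψ : SchwartzMap (Rd d) ℂ) (h0 : ψ 0 = 1)
    (h1 : ∀ y, 1 ≤ ‖y‖ → ψ y = 0) (δ : ℝ) (hδ : 0 < δ) (x : Rd d)
    (hx : ∀ y, a y ≠ 0 → dist y x < δ → y = x) :
    ∑' y, a y * ψ (δ⁻¹ • (y - x)) = a x := by
  rw [tsum_eq_single x]
  · simp [h0]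
  · intro y hy
    by_cases ha : a y = 0
    · simp [ha]
    rw [h1, mul_zero]
    rw [norm_smul, norm_inv, Real.norm_of_nonneg hδ.le, ← dist_eq_norm]
    have : ¬ dist y x < δ := fun h => hy (hx y ha h)
    rw [inv_mul_eq_div, le_div_iff₀ hδ]; linarith

lemma LocFinite.isolated {d : ℕ} {A : Set (Rd d)} (hA : LocFinite A) (x : Rd d) :
    ∃ δ > (0:ℝ), ∀ y ∈ A, dist y x < δ → y = x := by
  have hf : ((A ∩ ball x 1) \ {x}).Finite := (hA x 1).subset sdiff_subset
  have : ((A ∩ ball x 1) \ {x})ᶜ ∈ 𝓝 x := hf.isClosed.isOpen_compl.mem_nhds (by simp)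
  obtain ⟨δ, hδ, hb⟩ := Metric.mem_nhds_iff.1 this
  refine ⟨min δ 1, by positivity, fun y hy hd => ?_⟩
  by_contra hne
  have h1 := hb (show y ∈ ball x δ from lt_of_lt_of_le hd (min_le_left _ _))
  exact h1 ⟨⟨hy, lt_of_lt_of_le hd (min_le_right _ _)⟩, hne⟩

/-- uniqueness of the spectrum, in the locally finite case -/
lemma FPair.unique {d : ℕ} {a b b' : Rd d → ℂ} (h : FPair a b) (h' : FPair a b')
    (hb : LocFinite {x | b x ≠ 0}) (hb' : LocFinite {x | b' x ≠ 0}) : b = b' := by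
  obtain ⟨ψ, h0, h1, -⟩ := exists_bump d
  ext x
  obtain ⟨δ, hδ, hx⟩ := hb.isolated x
  obtain ⟨δ', hδ', hx'⟩ := hb'.isolated x
  have hm : 0 < min δ δ' := lt_min hδ hδ'
  have e1 := isolate (a := b) ψ h0 h1 (min δ δ') hm x
    (fun y hy hd => hx y hy (hd.trans_le (min_le_left _ _)))
  have e2 := isolate (a := b') ψ h0 h1 (min δ δ') hm x
    (fun y hy hd => hx' y hy (hd.trans_le (min_le_right _ _)))
  rw [← e1, ← e2]
  have := (h.eq (scaled ψ _ hm.ne' x)).symm.trans (h'.eq (scaled ψ _ hm.ne' x))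
  simpa only [scaled_apply] using this


/-- covered by finitely many cosets of uniformly discrete subgroups -/
def InJ {d : ℕ} (A : Set (Rd d)) : Prop :=
  ∃ s : Set (Rd d × AddSubgroup (Rd d)), s.Finite ∧
    (∀ p ∈ s, UniformlyDiscrete (p.2 : Set (Rd d))) ∧ ∀ x ∈ A, ∃ p ∈ s, x - p.1 ∈ p.2

lemma InJ.empty {d : ℕ} : InJ (∅ : Set (Rd d)) := ⟨∅, finite_empty, by simp, by simp⟩

lemma InJ.mono {d : ℕ} {A B : Set (Rd d)} (h : A ⊆ B) (hB : InJ B) : InJ A := by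
  obtain ⟨s, hs, h1, h2⟩ := hB
  exact ⟨s, hs, h1, fun x hx => h2 x (h hx)⟩

lemma InJ.union {d : ℕ} {A B : Set (Rd d)} (hA : InJ A) (hB : InJ B) : InJ (A ∪ B) := by
  obtain ⟨s, hs, h1, h2⟩ := hA
  obtain ⟨t, ht, k1, k2⟩ := hB
  refine ⟨s ∪ t, hs.union ht, ?_, ?_⟩
  · rintro p (hp | hp)
    exacts [h1 p hp, k1 p hp]
  · rintro x (hx | hx)
    · obtain ⟨p, hp, h⟩ := h2 x hx
      exact ⟨p, Or.inl hp, h⟩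
    · obtain ⟨p, hp, h⟩ := k2 x hx
      exact ⟨p, Or.inr hp, h⟩

lemma InJ.translate {d : ℕ} {A : Set (Rd d)} (hA : InJ A) (z : Rd d) : InJ {y | y + z ∈ A} := by
  obtain ⟨s, hs, h1, h2⟩ := hA
  refine ⟨(fun p => (p.1 - z, p.2)) '' s, hs.image _, ?_, ?_⟩
  · rintro _ ⟨p, hp, rfl⟩; exact h1 p hp
  · intro x hx
    obtain ⟨p, hp, h⟩ := h2 _ hx
    refine ⟨_, ⟨p, hp, rfl⟩, ?_⟩
    simpa [sub_sub_eq_add_sub, sub_eq_add_neg, add_comm, add_assoc, add_left_comm] using h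

lemma exists_ultra_avoid {α : Type*} (I : Set α → Prop) (h0 : I ∅)
    (hm : ∀ A B, A ⊆ B → I B → I A) (hu : ∀ A B, I A → I B → I (A ∪ B)) (E : Set α) (hE : ¬ I E) :
    ∃ 𝒰 : Ultrafilter α, E ∈ 𝒰 ∧ ∀ A ∈ 𝒰, ¬ I A := by
  let F : Filter α := Filter.comk I h0 (fun A hA B hBA => hm B A hBA hA) (fun A hA B hB => hu A B hA hB)
  have hne : (F ⊓ 𝓟 E).NeBot := by
    rw [Filter.inf_principal_neBot_iff]
    intro A hA
    by_contra hcon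
    rw [Set.not_nonempty_iff_eq_empty] at hcon
    apply hE
    have : I Aᶜ := hA
    refine hm _ _ ?_ this
    intro x hx hxA
    have : x ∈ A ∩ E := ⟨hxA, hx⟩
    rw [hcon] at this; exact this
  refine ⟨Ultrafilter.of (F ⊓ 𝓟 E), ?_, ?_⟩
  · exact Ultrafilter.of_le _ (mem_inf_of_right (mem_principal_self E))
  · intro A hA hI
    have h1 : Aᶜ ∈ F := by
      change I Aᶜᶜ
      rwa [compl_compl]
    have h2 : Aᶜ ∈ Ultrafilter.of (F ⊓ 𝓟 E) := Ultrafilter.of_le _ (mem_inf_of_left h1)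
    exact (Ultrafilter.compl_mem_iff_notMem.1 h2) hA

lemma tendsto_bind {α β : Type*} {X : Type*} [TopologicalSpace X] (𝒱 : Ultrafilter α)
    (𝒰 : α → Ultrafilter β) (f : β → X) (c : α → X) (c0 : X)
    (h1 : ∀ x, Tendsto f (𝒰 x) (𝓝 (c x))) (h2 : Tendsto c 𝒱 (𝓝 c0)) :
    Tendsto f (Ultrafilter.bind 𝒱 𝒰) (𝓝 c0) := by
  rw [_root_.tendsto_nhds]
  intro O hO hc
  have h3 := h2.eventually (hO.mem_nhds hc)
  change ∀ᶠ x in (𝒱 : Filter α), f ⁻¹' O ∈ 𝒰 x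
  filter_upwards [h3] with x hx
  exact (h1 x).eventually (hO.mem_nhds hx)

lemma ultra_bdd {α : Type*} (𝒰 : Ultrafilter α) (f : α → ℂ) (C : ℝ) (h : ∀ x, ‖f x‖ ≤ C) :
    ∃ c, Tendsto f 𝒰 (𝓝 c) ∧ ‖c‖ ≤ C := by
  have hc := (isCompact_closedBall (0:ℂ) C).ultrafilter_le_nhds (𝒰.map f) (by
    rw [le_principal_iff]
    change ∀ᶠ x in (𝒰 : Filter α), f x ∈ _
    exact Eventually.of_forall (fun x => by simpa using h x))
  obtain ⟨c, hc, hle⟩ := hc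
  exact ⟨c, hle, by simpa using hc⟩

structure USys {d : ℕ} {H : Type*} [NormedAddCommGroup H] [InnerProductSpace ℂ H]
    (U : Rd d → H →L[ℂ] H) : Prop where
  add : ∀ x y v, U (x + y) v = U x (U y v)
  zero : ∀ v, U 0 v = v
  inn : ∀ x v w, (inner ℂ (U x v) (U x w) : ℂ) = (inner ℂ (v) (w) : ℂ)

namespace USys

variable {d : ℕ} {H : Type*} [NormedAddCommGroup H] [InnerProductSpace ℂ H] {U : Rd d → H →L[ℂ] H}

lemma nrm (h : USys U) (x : Rd d) (v : H) : ‖U x v‖ = ‖v‖ := by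
  rw [@norm_eq_sqrt_re_inner ℂ, @norm_eq_sqrt_re_inner ℂ _ _ _ _ v, h.inn]

lemma adj (h : USys U) (x : Rd d) (v w : H) : (inner ℂ (U x v) (w) : ℂ) = (inner ℂ (v) (U (-x) w) : ℂ) := by
  rw [← h.inn (-x) (U x v), ← h.add]; simp [h.zero]

lemma comm (h : USys U) (x y : Rd d) (v : H) : U x (U y v) = U y (U x v) := by
  rw [← h.add, ← h.add, add_comm]

lemma exists_T [CompleteSpace H] (h : USys U) (𝒰 : Ultrafilter (Rd d)) :
    ∃ T : H →L[ℂ] H, ∀ v u, Tendsto (fun x => (inner ℂ (v) (U x u) : ℂ)) 𝒰 (𝓝 (inner ℂ (v) (T u) : ℂ)) := by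
  have hb : ∀ v u, ∃ c, Tendsto (fun x => (inner ℂ (v) (U x u) : ℂ)) 𝒰 (𝓝 c) ∧ ‖c‖ ≤ ‖v‖ * ‖u‖ := by
    intro v u
    apply ultra_bdd
    intro x
    rw [← h.nrm x u]
    exact norm_inner_le_norm _ _
  choose B hB hn using hb
  let B2 : H →L⋆[ℂ] H →L[ℂ] ℂ := LinearMap.mkContinuous₂
    (LinearMap.mk₂'ₛₗ (starRingEnd ℂ) (RingHom.id ℂ) B
      (fun v v' u => by
        refine tendsto_nhds_unique (hB _ _) ?_
        simpa only [inner_add_left] using (hB v u).add (hB v' u))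
      (fun c v u => by
        refine tendsto_nhds_unique (hB _ _) ?_
        simpa only [inner_smul_left, smul_eq_mul] using (hB v u).const_mul _)
      (fun v u u' => by
        refine tendsto_nhds_unique (hB _ _) ?_
        simpa only [map_add, inner_add_right] using (hB v u).add (hB v u'))
      (fun c v u => by
        refine tendsto_nhds_unique (hB _ _) ?_
        simpa only [map_smul, inner_smul_right, smul_eq_mul, RingHom.id_apply] using (hB v u).const_mul _))
    1 (fun v u => by simpa using hn v u)
  refine ⟨ContinuousLinearMap.adjoint (InnerProductSpace.continuousLinearMapOfBilin B2), fun v u => ?_⟩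
  rw [ContinuousLinearMap.adjoint_inner_right, InnerProductSpace.continuousLinearMapOfBilin_apply]
  exact hB v u

end USys

namespace USys

variable {d : ℕ} {H : Type*} [NormedAddCommGroup H] [InnerProductSpace ℂ H] {U : Rd d → H →L[ℂ] H}

def IsT (U : Rd d → H →L[ℂ] H) (𝒰 : Ultrafilter (Rd d)) (T : H →L[ℂ] H) : Prop :=
  ∀ v u, Tendsto (fun x => (inner ℂ v (U x u) : ℂ)) 𝒰 (𝓝 (inner ℂ v (T u) : ℂ))

lemma IsT.comm (h : USys U) {𝒰 : Ultrafilter (Rd d)} {T : H →L[ℂ] H} (hT : IsT U 𝒰 T) (y : Rd d)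
    (u : H) : T (U y u) = U y (T u) := by
  refine ext_inner_left ℂ fun v => ?_
  refine tendsto_nhds_unique (hT v (U y u)) ?_
  have h1 := hT (U (-y) v) u
  rw [h.adj, neg_neg] at h1
  refine h1.congr fun x => ?_
  rw [h.adj, neg_neg, h.comm]

lemma IsT.star [CompleteSpace H] (h : USys U) {𝒰 : Ultrafilter (Rd d)} {T : H →L[ℂ] H}
    (hT : IsT U 𝒰 T) (u v : H) :
    Tendsto (fun x => (inner ℂ u (U (-x) v) : ℂ)) 𝒰 (𝓝 (inner ℂ (T u) v : ℂ)) := by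
  have h1 := (hT v u).star
  simp only [RCLike.star_def, inner_conj_symm] at h1
  refine h1.congr fun x => ?_
  rw [h.adj]

lemma IsT.normal [CompleteSpace H] (h : USys U) {𝒰 : Ultrafilter (Rd d)} {T : H →L[ℂ] H}
    (hT : IsT U 𝒰 T) (u v : H) :
    (inner ℂ (T u) (T v) : ℂ) = inner ℂ (T.adjoint u) (T.adjoint v) := by
  refine tendsto_nhds_unique (hT (T u) v) ?_
  have h1 := hT u (T.adjoint v)
  rw [← ContinuousLinearMap.adjoint_inner_left] at h1
  refine h1.congr fun x => ?_
  have : (inner ℂ (T u) (U x v) : ℂ) = inner ℂ (U (-x) (T u)) v := by rw [h.adj, neg_neg]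
  rw [this, ← hT.comm h, ← ContinuousLinearMap.adjoint_inner_right, h.adj, neg_neg]

theorem cover [CompleteSpace H] (h : USys U) {S : ℕ} (ξ : H) (η : Fin S → H)
    (hcyc : ∀ v, (∀ x, (inner ℂ v (U x ξ) : ℂ) = 0) → v = 0) (a : Fin S → Rd d → ℂ)
    (ha : ∀ s x, a s x = inner ℂ (η s) (U x ξ))
    (hinf : ∃ ε > (0:ℝ), ∀ x : Rd d, (∃ s, a s x ≠ 0) → ε ≤ ∑ s, ‖a s x‖)
    (hU : UniformlyDiscrete (⋃ s, {x | a s x ≠ 0})) : InJ (⋃ s, {x | a s x ≠ 0}) := by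
  by_contra hcon
  set Λ := ⋃ s, {x | a s x ≠ 0} with hΛ
  have memΛ : ∀ x, x ∈ Λ ↔ ∃ s, a s x ≠ 0 := by intro x; simp [hΛ]
  obtain ⟨ε, hε, hinf⟩ := hinf
  choose Top hTop using h.exists_T
  have hTop : ∀ 𝒰, IsT U 𝒰 (Top 𝒰) := hTop
  let 𝒬 : Set (Ultrafilter (Rd d)) := {𝒰 | Λ ∈ 𝒰 ∧ ∀ A ∈ 𝒰, ¬ InJ A}
  have h𝒬 : 𝒬.Nonempty := exists_ultra_avoid InJ InJ.empty (fun A B hh => InJ.mono hh)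
    (fun A B => InJ.union) Λ hcon
  -- minimiser
  have hmin : ∃ 𝒰 ∈ 𝒬, ∀ 𝒱 ∈ 𝒬, ‖Top 𝒰 ξ‖ ≤ ‖Top 𝒱 ξ‖ := by
    set N : Set ℝ := (fun 𝒱 => ‖Top 𝒱 ξ‖) '' 𝒬 with hN
    have hNe : N.Nonempty := h𝒬.image _
    have hNb : BddBelow N := ⟨0, by rintro _ ⟨𝒱, -, rfl⟩; exact norm_nonneg _⟩
    obtain ⟨u, -, hu2, hu3⟩ := exists_seq_tendsto_sInf hNe hNb
    choose 𝒱 h𝒱 hn using hu3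
    let W : Ultrafilter (Rd d) := Ultrafilter.bind (hyperfilter ℕ) 𝒱
    have hle : ((hyperfilter ℕ : Ultrafilter ℕ) : Filter ℕ) ≤ atTop := by
      rw [← Nat.cofinite_eq_atTop]; exact hyperfilter_le_cofinite
    refine ⟨W, ⟨?_, ?_⟩, ?_⟩
    · change ∀ᶠ n in (hyperfilter ℕ : Filter ℕ), Λ ∈ 𝒱 n
      exact Eventually.of_forall fun n => (h𝒱 n).1
    · intro A hA hJ
      have hA : ∀ᶠ n in (hyperfilter ℕ : Filter ℕ), A ∈ 𝒱 n := hA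
      obtain ⟨n, hn⟩ := hA.exists
      exact (h𝒱 n).2 A hn hJ
    · intro 𝒰' h𝒰'
      have h1 : ‖Top W ξ‖ * ‖Top W ξ‖ ≤ ‖Top W ξ‖ * sInf N := by
        -- weak limit along hyperfilter
        obtain ⟨c, hc, -⟩ := ultra_bdd (hyperfilter ℕ)
          (fun n => (inner ℂ (Top W ξ) (Top (𝒱 n) ξ) : ℂ)) (‖Top W ξ‖ * ‖ξ‖) (by
            intro n
            refine le_of_tendsto (hTop (𝒱 n) (Top W ξ) ξ).norm (Eventually.of_forall fun x => ?_)
            rw [← h.nrm x ξ]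
            exact norm_inner_le_norm _ _)
        have h2 := tendsto_bind (hyperfilter ℕ) 𝒱 _ _ c (fun n => hTop (𝒱 n) (Top W ξ) ξ) hc
        have h3 := tendsto_nhds_unique h2 (hTop W (Top W ξ) ξ)
        rw [h3] at hc
        have h4 := hc.norm
        rw [inner_self_eq_norm_sq_to_K, norm_pow, RCLike.norm_ofReal, abs_norm, sq] at h4
        refine le_of_tendsto_of_tendsto h4 ((hu2.mono_left hle).const_mul ‖Top W ξ‖)
          (Eventually.of_forall fun n => ?_)
        beta_reduce
        rw [← hn n]
        exact norm_inner_le_norm _ _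
      have h5 : sInf N ≤ ‖Top 𝒰' ξ‖ := csInf_le hNb ⟨𝒰', h𝒰', rfl⟩
      rcases (norm_nonneg (Top W ξ)).eq_or_lt with h0 | h0
      · rw [← h0]; exact norm_nonneg _
      · exact (le_of_mul_le_mul_left h1 h0).trans h5
  obtain ⟨𝒰, h𝒰, hmin⟩ := hmin
  set T := Top 𝒰 with hT
  set w := T ξ with hw
  have hlim : ∀ s z, Tendsto (fun l => a s (z + l)) 𝒰 (𝓝 (inner ℂ (η s) (U z w))) := by
    intro s z
    have h1 := hTop 𝒰 (U (-z) (η s)) ξ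
    rw [h.adj, neg_neg] at h1
    refine h1.congr fun x => ?_
    rw [h.adj, neg_neg, ha, h.add]
  set E : Set (Rd d) := {z | {l | z + l ∈ Λ} ∈ 𝒰} with hE
  have hE1 : ∀ z ∈ E, ε ≤ ∑ s, ‖(inner ℂ (η s) (U z w) : ℂ)‖ := by
    intro z hz
    refine ge_of_tendsto (tendsto_finsetSum _ fun s _ => (hlim s z).norm) ?_
    filter_upwards [hz] with l hl
    exact hinf _ ((memΛ _).1 hl)
  have hE2 : ∀ z, z ∉ E → ∀ s, (inner ℂ (η s) (U z w) : ℂ) = 0 := by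
    intro z hz s
    have hz' : {l | z + l ∈ Λ}ᶜ ∈ 𝒰 := Ultrafilter.compl_mem_iff_notMem.2 hz
    refine tendsto_nhds_unique (hlim s z) (tendsto_const_nhds.congr' ?_)
    filter_upwards [hz'] with l hl
    by_contra hne
    exact hl ((memΛ _).2 ⟨s, fun h0 => hne h0.symm⟩)
  have hE0 : (0 : Rd d) ∈ E := by
    have := h𝒰.1
    simpa [hE] using this
  -- the period group
  let P : AddSubgroup (Rd d) :=
    { carrier := {y | ∀ z, z ∈ E ↔ z + y ∈ E}
      zero_mem' := by intro z; simp
      add_mem' := by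
        intro x y hx hy z
        rw [hx z, hy (z + x), add_assoc]
      neg_mem' := by
        intro x hx z
        rw [hx (z + -x)]; simp }
  have hPE : ∀ y ∈ P, y ∈ E := by
    intro y hy
    have := (hy 0).1 hE0
    simpa using this
  have hEud : UniformlyDiscrete E := by
    obtain ⟨r, hr, hd⟩ := hU
    refine ⟨r, hr, fun x hx y hy hne => ?_⟩
    obtain ⟨l, hl1, hl2⟩ := 𝒰.nonempty_of_mem (inter_mem hx hy)
    have := hd _ hl1 _ hl2 (by simpa using hne)
    simpa using this
  have hPud : UniformlyDiscrete (P : Set (Rd d)) := by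
    obtain ⟨r, hr, hd⟩ := hEud
    exact ⟨r, hr, fun x hx y hy => hd x (hPE x hx) y (hPE y hy)⟩
  have hclose : ∃ δ > (0:ℝ), ∀ x x', ‖U x w - U x' w‖ < δ → x - x' ∈ P := by
    refine ⟨ε / (∑ s, ‖η s‖ + 1), by positivity, fun x x' hxx => ?_⟩
    have key : ∀ z, (∑ s, ‖(inner ℂ (η s) (U (z + x) w) - inner ℂ (η s) (U (z + x') w) : ℂ)‖) < ε := by
      intro z
      have : ∀ s, ‖(inner ℂ (η s) (U (z + x) w) - inner ℂ (η s) (U (z + x') w) : ℂ)‖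
          ≤ ‖η s‖ * ‖U x w - U x' w‖ := by
        intro s
        rw [← inner_sub_right, h.add, h.add, ← map_sub]
        refine (norm_inner_le_norm _ _).trans ?_
        rw [h.nrm]
      calc _ ≤ ∑ s, ‖η s‖ * ‖U x w - U x' w‖ := Finset.sum_le_sum fun s _ => this s
        _ = (∑ s, ‖η s‖) * ‖U x w - U x' w‖ := by rw [Finset.sum_mul]
        _ ≤ (∑ s, ‖η s‖ + 1) * ‖U x w - U x' w‖ := by gcongr; linarith
        _ < ε := by
          rw [lt_div_iff₀ (by positivity)] at hxx
          linarith
    have key2 : ∀ z, z + x ∈ E ↔ z + x' ∈ E := by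
      intro z
      constructor
      · intro h1
        by_contra h2
        have := key z
        simp only [hE2 _ h2, sub_zero] at this
        exact absurd (hE1 _ h1) (not_le.2 this)
      · intro h1
        by_contra h2
        have := key z
        simp only [hE2 _ h2, zero_sub, norm_neg] at this
        exact absurd (hE1 _ h1) (not_le.2 this)
    intro z
    have := key2 (z - x')
    rw [show z + (x - x') = z - x' + x by abel, this]; simp
  obtain ⟨δ, hδ, hclose⟩ := hclose
  have hstrong : ∀ 𝒱 : Ultrafilter (Rd d), E ∈ 𝒱 → Tendsto (fun x => U x w) 𝒱 (𝓝 (Top 𝒱 w)) := by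
    intro 𝒱 h𝒱
    let W : Ultrafilter (Rd d) := Ultrafilter.bind 𝒱 (fun x => 𝒰.map (fun l => x + l))
    have hW : W ∈ 𝒬 := by
      refine ⟨h𝒱, ?_⟩
      intro A hA hJ
      have hA : ∀ᶠ x in (𝒱 : Filter (Rd d)), {l | x + l ∈ A} ∈ 𝒰 := hA
      obtain ⟨x, hx⟩ := hA.exists
      refine h𝒰.2 _ hx ?_
      have := hJ.translate x
      simpa only [add_comm x] using this
    have hWw : Top W ξ = Top 𝒱 w := by
      refine ext_inner_left ℂ fun v => ?_
      refine tendsto_nhds_unique (hTop W v ξ) ?_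
      refine tendsto_bind 𝒱 _ _ _ _ (fun x => ?_) (hTop 𝒱 v w)
      have h1 := hTop 𝒰 (U (-x) v) ξ
      rw [h.adj, neg_neg] at h1
      rw [Ultrafilter.coe_map, tendsto_map'_iff]
      refine h1.congr fun l => ?_
      rw [h.adj, neg_neg, Function.comp, h.add]
    have hge : ‖w‖ ≤ ‖Top 𝒱 w‖ := by
      rw [← hWw]; exact hmin W hW
    have hsq : Tendsto (fun x => ‖U x w - Top 𝒱 w‖ ^ 2) 𝒱 (𝓝 0) := by
      have h1 : Tendsto (fun x => ‖w‖ ^ 2 - 2 * (inner ℂ (Top 𝒱 w) (U x w) : ℂ).re + ‖Top 𝒱 w‖ ^ 2) 𝒱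
          (𝓝 (‖w‖ ^ 2 - 2 * (inner ℂ (Top 𝒱 w) (Top 𝒱 w) : ℂ).re + ‖Top 𝒱 w‖ ^ 2)) := by
        refine Tendsto.add_const _ (Tendsto.const_sub _ (Tendsto.const_mul _ ?_))
        exact (Complex.continuous_re.tendsto _).comp (hTop 𝒱 (Top 𝒱 w) w)
      have h2 : (inner ℂ (Top 𝒱 w) (Top 𝒱 w) : ℂ).re = ‖Top 𝒱 w‖ ^ 2 := by
        have := @inner_self_eq_norm_sq ℂ _ _ _ _ (Top 𝒱 w)
        simpa using this
      have h3 : ∀ x, ‖U x w - Top 𝒱 w‖ ^ 2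
          = ‖w‖ ^ 2 - 2 * (inner ℂ (Top 𝒱 w) (U x w) : ℂ).re + ‖Top 𝒱 w‖ ^ 2 := by
        intro x
        rw [@norm_sub_sq ℂ, h.nrm, inner_re_symm]; rfl
      have h4 : ‖w‖ ^ 2 - 2 * (inner ℂ (Top 𝒱 w) (Top 𝒱 w) : ℂ).re + ‖Top 𝒱 w‖ ^ 2 = 0 := by
        have h5 : 0 ≤ ‖w‖ ^ 2 - 2 * (inner ℂ (Top 𝒱 w) (Top 𝒱 w) : ℂ).re + ‖Top 𝒱 w‖ ^ 2 :=
          ge_of_tendsto h1 (Eventually.of_forall fun x => by rw [← h3]; positivity)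
        rw [h2] at h5 ⊢
        nlinarith [norm_nonneg w]
      rw [h4] at h1
      exact h1.congr fun x => (h3 x).symm
    rw [tendsto_iff_norm_sub_tendsto_zero]
    have := hsq.sqrt
    simpa using this
  -- `E` is a finite union of cosets of `P`
  have hfin : ∃ s : Set (Rd d), s.Finite ∧ ∀ x ∈ E, ∃ p ∈ s, x - p ∈ P := by
    by_contra hcon2
    obtain ⟨𝒱, hV1, hV2⟩ := exists_ultra_avoid
      (fun A : Set (Rd d) => ∃ s : Set (Rd d), s.Finite ∧ ∀ x ∈ A, ∃ p ∈ s, x - p ∈ P)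
      ⟨∅, finite_empty, by simp⟩
      (fun A B hAB ⟨s, hs, h1⟩ => ⟨s, hs, fun x hx => h1 x (hAB hx)⟩)
      (fun A B ⟨s, hs, h1⟩ ⟨t, ht, h2⟩ => ⟨s ∪ t, hs.union ht, by
        rintro x (hx | hx)
        · obtain ⟨p, hp, hh⟩ := h1 x hx
          exact ⟨p, Or.inl hp, hh⟩
        · obtain ⟨p, hp, hh⟩ := h2 x hx
          exact ⟨p, Or.inr hp, hh⟩⟩) E hcon2
    have hst := hstrong 𝒱 hV1
    have hA := (Metric.tendsto_nhds.1 hst) (δ / 2) (by positivity)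
    obtain ⟨x0, hx0⟩ := hA.exists
    refine hV2 _ hA ⟨{x0}, finite_singleton _, fun x hx => ⟨x0, rfl, ?_⟩⟩
    apply hclose
    rw [← dist_eq_norm]
    have hx : dist (U x w) (Top 𝒱 w) < δ / 2 := hx
    linarith [dist_triangle_right (U x w) (U x0 w) (Top 𝒱 w)]
  obtain ⟨F, hF, hFE⟩ := hfin
  have hJ : ∀ z, InJ {l | z - l ∈ E} := by
    intro z
    refine ⟨(fun p => (z - p, P)) '' F, hF.image _, ?_, ?_⟩
    · rintro _ ⟨p, -, rfl⟩; exact hPud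
    · intro x hx
      obtain ⟨p, hp, hh⟩ := hFE _ hx
      refine ⟨_, ⟨p, hp, rfl⟩, ?_⟩
      have := P.neg_mem hh
      change x - (z - p) ∈ P
      convert this using 1; abel
  have hzero : ∀ s z, (inner ℂ (T (η s)) (U z w) : ℂ) = 0 := by
    intro s z
    refine tendsto_nhds_unique ((hTop 𝒰).star h (η s) (U z w)) (tendsto_const_nhds.congr' ?_)
    have : {l | z - l ∈ E}ᶜ ∈ 𝒰 := Ultrafilter.compl_mem_iff_notMem.2 fun hh => h𝒰.2 _ hh (hJ z)
    filter_upwards [this] with l hl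
    rw [← h.add, neg_add_eq_sub]
    exact (hE2 _ hl s).symm
  have hTη : ∀ s, T (η s) = 0 := by
    intro s
    have h1 : T.adjoint (T (η s)) = 0 := by
      apply hcyc
      intro x
      rw [ContinuousLinearMap.adjoint_inner_left, (hTop 𝒰).comm h]
      exact hzero s x
    rw [← inner_self_eq_zero (𝕜 := ℂ), ← ContinuousLinearMap.adjoint_inner_right, h1, inner_zero_right]
  have hTs : ∀ s, T.adjoint (η s) = 0 := by
    intro s
    rw [← inner_self_eq_zero (𝕜 := ℂ), ← (hTop 𝒰).normal h]
    have := hTη s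
    rw [hT] at this
    rw [this, inner_zero_right]
  have := hE1 0 hE0
  have h0 : ∀ s, (inner ℂ (η s) (U 0 w) : ℂ) = 0 := by
    intro s
    rw [h.zero, hw, ← ContinuousLinearMap.adjoint_inner_left, hTs, inner_zero_left]
  simp only [h0, norm_zero, Finset.sum_const_zero] at this
  linarith

end USys

theorem gns_aux {d S : ℕ} {V : Type} [SeminormedAddCommGroup V] [InnerProductSpace ℂ V]
    (U0 : Rd d → V →ₗ[ℂ] V)
    (hadd : ∀ x y v, U0 (x + y) v = U0 x (U0 y v)) (hzero : ∀ v, U0 0 v = v)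
    (hinn : ∀ x v w, (inner ℂ (U0 x v) (U0 x w) : ℂ) = inner ℂ v w)
    (ξ0 : V) (hspan : Submodule.span ℂ (range fun x => U0 x ξ0) = ⊤)
    (f : Fin S → V →ₗ[ℂ] ℂ) (C : ℝ) (hf : ∀ s v, ‖f s v‖ ≤ C * ‖v‖) :
    ∃ (H : Type) (_ : NormedAddCommGroup H) (_ : InnerProductSpace ℂ H) (_ : CompleteSpace H)
      (U : Rd d → H →L[ℂ] H) (_ : USys U) (ξ : H) (η : Fin S → H),
      (∀ v, (∀ x, (inner ℂ v (U x ξ) : ℂ) = 0) → v = 0) ∧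
      ∀ s x, f s (U0 x ξ0) = inner ℂ (η s) (U x ξ) := by
  have hn : ∀ x v, ‖U0 x v‖ ≤ 1 * ‖v‖ := by
    intro x v
    rw [@norm_eq_sqrt_re_inner ℂ, @norm_eq_sqrt_re_inner ℂ _ _ _ _ v, hinn, one_mul]
  let Uc : Rd d → V →L[ℂ] V := fun x => (U0 x).mkContinuous 1 (hn x)
  have hUc : ∀ x v, Uc x v = U0 x v := fun x v => rfl
  let fc : Fin S → V →L[ℂ] ℂ := fun s => (f s).mkContinuous C (hf s)
  have hfc : ∀ s v, fc s v = f s v := fun s v => rfl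
  let U : Rd d → UniformSpace.Completion V →L[ℂ] UniformSpace.Completion V := fun x => (Uc x).completion
  have hU : ∀ x (v : V), U x (v : UniformSpace.Completion V) = ((U0 x v : V) : UniformSpace.Completion V) :=
    fun x v => ContinuousLinearMap.completion_apply_coe _ _
  have hfz : ∀ s (v : V), (fc s).fromCompletion (v : UniformSpace.Completion V) = f s v :=
    fun s v => ContinuousLinearMap.fromCompletion_apply_coe _ _
  have hsys : USys U := by
    refine ⟨fun x y v => ?_, fun v => ?_, fun x v w => ?_⟩
    · induction v using UniformSpace.Completion.induction_on with
      | hp => exact isClosed_eq (by fun_prop) (by fun_prop)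
      | ih v => simp only [hU, hadd]
    · induction v using UniformSpace.Completion.induction_on with
      | hp => exact isClosed_eq (by fun_prop) (by fun_prop)
      | ih v => simp only [hU, hzero]
    · induction v, w using UniformSpace.Completion.induction_on₂ with
      | hp => exact isClosed_eq (by fun_prop) (by fun_prop)
      | ih v w => simp only [hU, UniformSpace.Completion.inner_coe, hinn]
  refine ⟨UniformSpace.Completion V, inferInstance, inferInstance, inferInstance, U, hsys, (ξ0 : UniformSpace.Completion V),
    fun s => (InnerProductSpace.toDual ℂ _).symm ((fc s).fromCompletion), ?_, ?_⟩
  · intro v hv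
    have h1 : ∀ u : V, (inner ℂ v (u : UniformSpace.Completion V) : ℂ) = 0 := by
      intro u
      have hu : u ∈ Submodule.span ℂ (range fun x => U0 x ξ0) := by rw [hspan]; trivial
      induction hu using Submodule.span_induction with
      | mem u hu =>
        obtain ⟨x, rfl⟩ := hu
        rw [← hv x, hU]
      | zero => rw [UniformSpace.Completion.coe_zero, inner_zero_right]
      | add x y _ _ hx hy => rw [UniformSpace.Completion.coe_add, inner_add_right, hx, hy, add_zero]
      | smul c x _ hx => rw [UniformSpace.Completion.coe_smul, inner_smul_right, hx, mul_zero]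
    have h2 : ∀ u : UniformSpace.Completion V, (inner ℂ v u : ℂ) = 0 := by
      intro u
      induction u using UniformSpace.Completion.induction_on with
      | hp => exact isClosed_eq (by fun_prop) (by fun_prop)
      | ih u => exact h1 u
    exact inner_self_eq_zero.1 (h2 v)
  · intro s x
    rw [InnerProductSpace.toDual_symm_apply, hU, hfz]

theorem gns {d S : ℕ} {V : Type} [AddCommGroup V] [Module ℂ V] (c : PreInnerProductSpace.Core ℂ V)
    (U0 : Rd d → V →ₗ[ℂ] V)
    (hadd : ∀ x y v, U0 (x + y) v = U0 x (U0 y v)) (hzero : ∀ v, U0 0 v = v)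
    (hinn : ∀ x v w, c.inner (U0 x v) (U0 x w) = c.inner v w)
    (ξ0 : V) (hspan : Submodule.span ℂ (range fun x => U0 x ξ0) = ⊤)
    (f : Fin S → V →ₗ[ℂ] ℂ) (C : ℝ) (hf : ∀ s v, ‖f s v‖ ≤ C * √((c.inner v v).re)) :
    ∃ (H : Type) (_ : NormedAddCommGroup H) (_ : InnerProductSpace ℂ H) (_ : CompleteSpace H)
      (U : Rd d → H →L[ℂ] H) (_ : USys U) (ξ : H) (η : Fin S → H),
      (∀ v, (∀ x, (inner ℂ v (U x ξ) : ℂ) = 0) → v = 0) ∧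
      ∀ s x, f s (U0 x ξ0) = inner ℂ (η s) (U x ξ) := by
  let _ : SeminormedAddCommGroup V := @InnerProductSpace.Core.toSeminormedAddCommGroup ℂ V _ _ _ c
  let _ : InnerProductSpace ℂ V := InnerProductSpace.ofCore c
  exact gns_aux U0 hadd hzero hinn ξ0 hspan f C hf

/-- symbol of a finitely supported function -/
def hat {d : ℕ} (γ : Rd d) : (Rd d →₀ ℂ) →ₗ[ℂ] ℂ := Finsupp.linearCombination ℂ (fun x => e2pi x γ)

lemma hat_single {d : ℕ} (γ x : Rd d) (c : ℂ) : hat γ (Finsupp.single x c) = c * e2pi x γ := by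
  simp [hat]

lemma hat_bound {d : ℕ} (c : Rd d →₀ ℂ) : ∃ K, 0 ≤ K ∧ ∀ γ, ‖hat γ c‖ ≤ K := by
  refine ⟨∑ x ∈ c.support, ‖c x‖, by positivity, fun γ => ?_⟩
  rw [hat, Finsupp.linearCombination_apply, Finsupp.sum]
  refine (norm_sum_le _ _).trans (Finset.sum_le_sum fun x _ => ?_)
  simp [e2pi_norm]

def trans0 {d : ℕ} (x : Rd d) : (Rd d →₀ ℂ) →ₗ[ℂ] (Rd d →₀ ℂ) := Finsupp.lmapDomain ℂ ℂ (fun y => x + y)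

lemma trans0_single {d : ℕ} (x y : Rd d) (c : ℂ) :
    trans0 x (Finsupp.single y c) = Finsupp.single (x + y) c := by
  simp [trans0]

lemma hat_trans0 {d : ℕ} (γ x : Rd d) (c : Rd d →₀ ℂ) : hat γ (trans0 x c) = e2pi x γ * hat γ c := by
  induction c using Finsupp.induction_linear with
  | zero => simp
  | add f g hf hg => simp only [map_add, hf, hg, mul_add]
  | single y z => rw [trans0_single, hat_single, hat_single, e2pi_add_left]; ring

lemma cs_tsum {α : Type*} (w h : α → ℝ) (hw : ∀ x, 0 ≤ w x) (hh : ∀ x, 0 ≤ h x)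
    (hs : Summable w) (hs2 : Summable fun x => w x * h x ^ 2) :
    ∑' x, w x * h x ≤ √(∑' x, w x) * √(∑' x, w x * h x ^ 2) := by
  have h1 : ∀ x, √(w x) ^ (2:ℝ) = w x := by
    intro x; rw [Real.rpow_two, Real.sq_sqrt (hw x)]
  have h2 : ∀ x, (√(w x) * h x) ^ (2:ℝ) = w x * h x ^ 2 := by
    intro x; rw [Real.rpow_two, mul_pow, Real.sq_sqrt (hw x)]
  have := Real.inner_le_Lp_mul_Lq_tsum_of_nonneg (f := fun x => √(w x)) (g := fun x => √(w x) * h x)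
    (p := 2) (q := 2) (by constructor <;> norm_num) (fun x => by positivity)
    (fun x => mul_nonneg (by positivity) (hh x)) (by simpa only [h1] using hs) (by simpa only [h2] using hs2)
  simp only [h1, h2] at this
  rw [Real.sqrt_eq_rpow, Real.sqrt_eq_rpow]
  refine le_trans (le_of_eq ?_) this
  refine tsum_congr fun x => ?_
  rw [← mul_assoc, Real.mul_self_sqrt (hw x)]

theorem model {d S : ℕ} (ω : ℕ → Rd d → ℝ) (hω : ∀ n γ, 0 ≤ ω n γ) (C : ℝ)
    (hs : ∀ n, Summable (ω n)) (hC : ∀ n, ∑' γ, ω n γ ≤ C)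
    (B : ℕ → Fin S → Rd d → ℂ) (hB : ∀ n s γ, ‖B n s γ‖ ≤ ω n γ)
    (a : Fin S → Rd d → ℂ) (ha : ∀ s x, ∀ᶠ n in atTop, a s x = ∑' γ, B n s γ * e2pi x γ) :
    ∃ (H : Type) (_ : NormedAddCommGroup H) (_ : InnerProductSpace ℂ H) (_ : CompleteSpace H)
      (U : Rd d → H →L[ℂ] H) (_ : USys U) (ξ : H) (η : Fin S → H),
      (∀ v, (∀ x, (inner ℂ v (U x ξ) : ℂ) = 0) → v = 0) ∧
      ∀ s x, a s x = inner ℂ (η s) (U x ξ) := by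
  have hle : ((hyperfilter ℕ : Ultrafilter ℕ) : Filter ℕ) ≤ atTop := by
    rw [← Nat.cofinite_eq_atTop]; exact hyperfilter_le_cofinite
  let form : ℕ → (Rd d →₀ ℂ) → (Rd d →₀ ℂ) → ℂ := fun n c c' =>
    ∑' γ, (ω n γ : ℂ) * ((starRingEnd ℂ) (hat γ c) * hat γ c')
  have hsum : ∀ n c c', Summable fun γ => (ω n γ : ℂ) * ((starRingEnd ℂ) (hat γ c) * hat γ c') := by
    intro n c c'
    obtain ⟨K, hK0, hK⟩ := hat_bound c
    obtain ⟨K', hK0', hK'⟩ := hat_bound c'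
    refine Summable.of_norm_bounded ((hs n).mul_right (K * K')) fun γ => ?_
    rw [norm_mul, norm_mul, RCLike.norm_conj, Complex.norm_real, Real.norm_of_nonneg (hω n γ)]
    have := hω n γ
    gcongr
    exacts [hK γ, hK' γ]
  have hbd : ∀ c c', ∃ z, Tendsto (fun n => form n c c') (hyperfilter ℕ) (𝓝 z) := by
    intro c c'
    obtain ⟨K, hK0, hK⟩ := hat_bound c
    obtain ⟨K', hK0', hK'⟩ := hat_bound c'
    obtain ⟨z, hz, -⟩ := ultra_bdd (hyperfilter ℕ) (fun n => form n c c') (C * (K * K')) (by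
      intro n
      refine (tsum_of_norm_bounded ((hs n).hasSum.mul_right (K * K')) fun γ => ?_).trans ?_
      · rw [norm_mul, norm_mul, RCLike.norm_conj, Complex.norm_real, Real.norm_of_nonneg (hω n γ)]
        have := hω n γ
        gcongr
        exacts [hK γ, hK' γ]
      · gcongr
        exact hC n)
    exact ⟨z, hz⟩
  choose I hI using hbd
  have hre : ∀ n c, form n c c = ((∑' γ, ω n γ * ‖hat γ c‖ ^ 2 : ℝ) : ℂ) := by
    intro n c
    rw [Complex.ofReal_tsum]
    refine tsum_congr fun γ => ?_
    rw [← Complex.normSq_eq_conj_mul_self, Complex.normSq_eq_norm_sq]; push_cast; ring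
  let core : PreInnerProductSpace.Core ℂ (Rd d →₀ ℂ) :=
    { inner := I
      conj_inner_symm := by
        intro x y
        refine tendsto_nhds_unique ((hI y x).star) ((hI x y).congr fun n => ?_)
        rw [← starRingEnd_apply, Complex.conj_tsum]
        refine tsum_congr fun γ => ?_
        rw [map_mul, map_mul, Complex.conj_conj, Complex.conj_ofReal]; ring
      re_inner_nonneg := by
        intro x
        refine ge_of_tendsto ((Complex.continuous_re.tendsto _).comp (hI x x))
          (Eventually.of_forall fun n => ?_)
        rw [Function.comp, hre, Complex.ofReal_re]
        exact tsum_nonneg fun γ => mul_nonneg (hω n γ) (by positivity)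
      add_left := by
        intro x y z
        refine tendsto_nhds_unique (hI (x + y) z) (((hI x z).add (hI y z)).congr fun n => ?_)
        rw [← (hsum n x z).tsum_add (hsum n y z)]
        refine tsum_congr fun γ => ?_
        rw [map_add, map_add]; ring
      smul_left := by
        intro x y r
        refine tendsto_nhds_unique (hI (r • x) y) (((hI x y).const_mul _).congr fun n => ?_)
        rw [← tsum_mul_left]
        refine tsum_congr fun γ => ?_
        rw [map_smul, smul_eq_mul, map_mul]; ring }
  have hcore : ∀ x y, core.inner x y = I x y := fun x y => rfl
  have := gns (S := S) core trans0 ?_ ?_ ?_ (Finsupp.single 0 1) ?_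
    (fun s => Finsupp.linearCombination ℂ (a s)) (√C) ?_
  · obtain ⟨H, i1, i2, i3, U, hU, ξ, η, h1, h2⟩ := this
    refine ⟨H, i1, i2, i3, U, hU, ξ, η, h1, fun s x => ?_⟩
    rw [← h2]; simp [trans0_single]
  · intro x y v
    induction v using Finsupp.induction_linear with
    | zero => simp
    | add f g hf hg => simp only [map_add, hf, hg]
    | single z w => simp only [trans0_single, add_assoc]
  · intro v
    induction v using Finsupp.induction_linear with
    | zero => simp
    | add f g hf hg => simp only [map_add, hf, hg]
    | single z w => simp only [trans0_single, zero_add]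
  · intro x v w
    rw [hcore, hcore]
    refine tendsto_nhds_unique (hI _ _) ((hI v w).congr fun n => ?_)
    refine tsum_congr fun γ => ?_
    rw [hat_trans0, hat_trans0, map_mul, e2pi_conj]
    field_simp [e2pi_ne_zero]
  · rw [eq_top_iff]
    rintro v -
    induction v using Finsupp.induction_linear with
    | zero => exact Submodule.zero_mem _
    | add f g hf hg => exact Submodule.add_mem _ hf hg
    | single z w =>
      have : Finsupp.single z w = w • trans0 z (Finsupp.single 0 1) := by
        rw [trans0_single]; simp
      rw [this]
      exact Submodule.smul_mem _ _ (Submodule.subset_span ⟨z, rfl⟩)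
  · intro s v
    rw [hcore]
    have h1 : ∀ᶠ n in (hyperfilter ℕ : Filter ℕ), Finsupp.linearCombination ℂ (a s) v
        = ∑' γ, B n s γ * hat γ v := by
      have hB' : ∀ n, Summable fun γ => ‖B n s γ‖ :=
        fun n => Summable.of_nonneg_of_le (fun _ => norm_nonneg _) (fun γ => hB n s γ) (hs n)
      have hB2 : ∀ n v, Summable fun γ => B n s γ * hat γ v := by
        intro n v
        obtain ⟨K, hK0, hK⟩ := hat_bound v
        refine Summable.of_norm_bounded ((hB' n).mul_right K) fun γ => ?_
        rw [norm_mul]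
        gcongr
        exact hK γ
      apply hle
      induction v using Finsupp.induction_linear with
      | zero => exact Eventually.of_forall fun n => by simp
      | add f g hf hg =>
        filter_upwards [hf, hg] with n hn hn'
        rw [map_add, hn, hn', ← (hB2 n f).tsum_add (hB2 n g)]
        refine tsum_congr fun γ => ?_
        rw [map_add, mul_add]
      | single z w =>
        filter_upwards [ha s z] with n hn
        rw [Finsupp.linearCombination_single, hn, smul_eq_mul, ← tsum_mul_left]
        refine tsum_congr fun γ => ?_
        rw [hat_single]; ring
    have h2 : Tendsto (fun n => √C * √(form n v v).re) (hyperfilter ℕ) (𝓝 (√C * √(I v v).re)) :=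
      (((Complex.continuous_re.tendsto _).comp (hI v v)).sqrt).const_mul _
    refine ge_of_tendsto h2 ?_
    filter_upwards [h1] with n hn
    rw [hn, hre, Complex.ofReal_re]
    obtain ⟨K, hK0, hK⟩ := hat_bound v
    have s1 : Summable fun γ => ω n γ * ‖hat γ v‖ :=
      Summable.of_nonneg_of_le (fun γ => mul_nonneg (hω n γ) (norm_nonneg _))
        (fun γ => mul_le_mul_of_nonneg_left (hK γ) (hω n γ)) ((hs n).mul_right K)
    have s2 : Summable fun γ => ω n γ * ‖hat γ v‖ ^ 2 :=
      Summable.of_nonneg_of_le (fun γ => mul_nonneg (hω n γ) (by positivity))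
        (fun γ => mul_le_mul_of_nonneg_left (pow_le_pow_left₀ (norm_nonneg _) (hK γ) 2) (hω n γ))
        ((hs n).mul_right (K ^ 2))
    calc _ ≤ ∑' γ, ω n γ * ‖hat γ v‖ := by
          refine tsum_of_norm_bounded s1.hasSum fun γ => ?_
          rw [norm_mul]
          gcongr
          exact hB n s γ
      _ ≤ √(∑' x, ω n x) * √(∑' x, ω n x * ‖hat x v‖ ^ 2) :=
        cs_tsum _ _ (hω n) (fun _ => norm_nonneg _) (hs n) s2
      _ ≤ _ := by
        gcongr
        exact hC n

lemma schwartz_dyadic {d : ℕ} (f : SchwartzMap (Rd d) ℂ) : ∃ D, 0 ≤ D ∧ ∀ y, ∃ k : ℕ, ‖y‖ < 2 ^ k ∧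
    ‖f y‖ ≤ D * ((2:ℝ) ^ k)⁻¹ ^ (d + 1) := by
  obtain ⟨C0, hC0, h0⟩ := f.decay 0 0
  obtain ⟨C1, hC1, h1⟩ := f.decay (d + 1) 0
  refine ⟨max C0 (2 ^ (d + 1) * C1), by positivity, fun y => ?_⟩
  have hex : ∃ k : ℕ, ‖y‖ < 2 ^ k := pow_unbounded_of_one_lt _ (by norm_num)
  classical
  refine ⟨Nat.find hex, Nat.find_spec hex, ?_⟩
  rcases hk : Nat.find hex with _ | k
  · have := h0 y
    simp at this ⊢
    exact Or.inl this
  · have hlt : ¬ ‖y‖ < 2 ^ k := Nat.find_min hex (by omega)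
    have h2 := h1 y
    rw [norm_iteratedFDeriv_zero] at h2
    have hp : (0:ℝ) < 2 ^ k := by positivity
    have h3 : ((2:ℝ) ^ k) ^ (d + 1) * ‖f y‖ ≤ C1 := by
      refine le_trans ?_ h2
      gcongr
      exact not_lt.1 hlt
    calc ‖f y‖ ≤ C1 * ((2:ℝ) ^ k)⁻¹ ^ (d + 1) := by
          rw [inv_pow, ← div_eq_mul_inv, le_div_iff₀ (by positivity)]; linarith
      _ = (2 ^ (d + 1) * C1) * ((2:ℝ) ^ (k + 1))⁻¹ ^ (d + 1) := by
          rw [pow_succ 2 k, mul_inv, mul_pow, inv_pow 2 (d + 1)]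
          field_simp
      _ ≤ _ := by gcongr; exact le_max_right _ _

lemma mass_bound {d : ℕ} (b : Rd d → ℂ) (ψ : SchwartzMap (Rd d) ℂ)
    (hvar : ∃ C r₀ : ℝ, ∀ r ≥ r₀, ballVar b r ≤ ENNReal.ofReal (C * r ^ d)) :
    ∃ K δ₀ : ℝ, 0 < δ₀ ∧ 0 ≤ K ∧ ∀ δ, 0 < δ → δ ≤ δ₀ →
      (Summable fun γ => ‖b γ * Wt ψ δ γ‖) → ∑' γ, ‖b γ * Wt ψ δ γ‖ ≤ K := by
  obtain ⟨C, r₀, hvar⟩ := hvar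
  obtain ⟨D, hD, hdy⟩ := schwartz_dyadic (𝓕⁻ ψ)
  set C' := max C 0 with hC'
  have hC0 : 0 ≤ C' := le_max_right _ _
  refine ⟨D * C' * 2, 1 / max r₀ 1, by positivity, by positivity, fun δ hδ hδ0 hsum => ?_⟩
  have hr : r₀ ≤ 1 / δ := by
    rw [le_div_iff₀ (by positivity)] at hδ0
    rw [le_div_iff₀ hδ]
    nlinarith [le_max_left r₀ 1]
  have hterm : ∀ γ, ENNReal.ofReal ‖b γ * Wt ψ δ γ‖ ≤ ∑' k : ℕ,
      ENNReal.ofReal (δ ^ d * D * ((2:ℝ) ^ k)⁻¹ ^ (d + 1)) *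
        (if ‖γ‖ < 2 ^ k / δ then (‖b γ‖₊ : ℝ≥0∞) else 0) := by
    intro γ
    obtain ⟨k, hk1, hk2⟩ := hdy (δ • γ)
    refine le_trans ?_ (ENNReal.le_tsum k)
    rw [norm_smul, Real.norm_of_nonneg hδ.le] at hk1
    rw [if_pos (by rw [lt_div_iff₀ hδ]; linarith), show ((‖b γ‖₊ : ℝ≥0∞)) = ENNReal.ofReal ‖b γ‖ from (ofReal_norm (b γ)).symm, ← ENNReal.ofReal_mul (by positivity)]
    apply ENNReal.ofReal_le_ofReal
    rw [norm_mul, Wt, norm_mul, Complex.norm_real, Real.norm_of_nonneg (by positivity)]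
    calc _ ≤ ‖b γ‖ * (δ ^ d * (D * ((2:ℝ) ^ k)⁻¹ ^ (d + 1))) := by gcongr
      _ = _ := by ring
  have hmain : ∑' γ, ENNReal.ofReal ‖b γ * Wt ψ δ γ‖ ≤ ENNReal.ofReal (D * C' * 2) := by
    calc _ ≤ ∑' γ, ∑' k : ℕ, ENNReal.ofReal (δ ^ d * D * ((2:ℝ) ^ k)⁻¹ ^ (d + 1)) *
        (if ‖γ‖ < 2 ^ k / δ then (‖b γ‖₊ : ℝ≥0∞) else 0) := ENNReal.tsum_le_tsum hterm
      _ = ∑' k : ℕ, ENNReal.ofReal (δ ^ d * D * ((2:ℝ) ^ k)⁻¹ ^ (d + 1)) * ballVar b (2 ^ k / δ) := by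
        rw [ENNReal.tsum_comm]
        refine tsum_congr fun k => ?_
        rw [ENNReal.tsum_mul_left, ballVar]
      _ ≤ ∑' k : ℕ, ENNReal.ofReal (D * C' * (1 / 2) ^ k) := by
        refine ENNReal.tsum_le_tsum fun k => ?_
        have h1 : ballVar b (2 ^ k / δ) ≤ ENNReal.ofReal (C' * (2 ^ k / δ) ^ d) := by
          refine (hvar _ (hr.trans ?_)).trans (ENNReal.ofReal_le_ofReal ?_)
          · gcongr
            exact one_le_pow₀ (by norm_num)
          · gcongr
            exact le_max_left _ _
        refine (mul_le_mul_right h1 _).trans ?_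
        rw [← ENNReal.ofReal_mul (by positivity)]
        apply ENNReal.ofReal_le_ofReal
        apply le_of_eq
        rw [div_pow, inv_pow, pow_succ, one_div, inv_pow]
        have hp : ((2:ℝ) ^ k) ≠ 0 := by positivity
        field_simp
      _ = ENNReal.ofReal (D * C' * 2) := by
        rw [← ENNReal.ofReal_tsum_of_nonneg (fun k => by positivity)
          ((summable_geometric_two).mul_left _), tsum_mul_left, tsum_geometric_two]
  rw [← ENNReal.ofReal_tsum_of_nonneg (fun _ => norm_nonneg _) hsum] at hmain
  exact (ENNReal.ofReal_le_ofReal_iff (by positivity)).1 hmain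

theorem exists_model {d S : ℕ} (a : Fin S → Rd d → ℂ) (b : Fin S → Rd d → ℂ)
    (hF : ∀ s, FPair (a s) (b s))
    (hvar : ∀ s, ∃ C r₀ : ℝ, ∀ r ≥ r₀, ballVar (b s) r ≤ ENNReal.ofReal (C * r ^ d))
    (hU : UniformlyDiscrete (⋃ s, {x | a s x ≠ 0})) :
    ∃ (H : Type) (_ : NormedAddCommGroup H) (_ : InnerProductSpace ℂ H) (_ : CompleteSpace H)
      (U : Rd d → H →L[ℂ] H) (_ : USys U) (ξ : H) (η : Fin S → H),
      (∀ v, (∀ x, (inner ℂ v (U x ξ) : ℂ) = 0) → v = 0) ∧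
      ∀ s x, a s x = inner ℂ (η s) (U x ξ) := by
  obtain ⟨ψ, h0, h1, -⟩ := exists_bump d
  choose K δ₀ hδ₀ hK0 hK using fun s => mass_bound (b s) ψ (hvar s)
  have hev : ∀ᶠ n : ℕ in atTop, ∀ s, 1 / ((n:ℝ) + 1) ≤ δ₀ s := by
    rw [eventually_all]
    intro s
    exact (tendsto_one_div_add_atTop_nhds_zero_nat).eventually (Iic_mem_nhds (hδ₀ s))
  obtain ⟨n0, hn0⟩ := eventually_atTop.1 hev
  let δ : ℕ → ℝ := fun n => 1 / (((n + n0 : ℕ) : ℝ) + 1)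
  have hδp : ∀ n, 0 < δ n := fun n => by positivity
  have hδ : ∀ n s, δ n ≤ δ₀ s := fun n s => hn0 (n + n0) (by omega) s
  have hδt : Tendsto δ atTop (𝓝 0) := by
    have := (tendsto_one_div_add_atTop_nhds_zero_nat (𝕜 := ℝ)).comp (tendsto_add_atTop_nat n0)
    exact this
  have hS : ∀ n s, Summable fun γ => ‖b s γ * Wt ψ (δ n) γ‖ := fun n s => (hF s).summable_Wt ψ _ (hδp n)
  refine model (fun n γ => ∑ s, ‖b s γ * Wt ψ (δ n) γ‖) (fun n γ => by positivity) (∑ s, K s)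
    (fun n => summable_sum fun s _ => hS n s) ?_ (fun n s γ => b s γ * Wt ψ (δ n) γ) ?_ a ?_
  · intro n
    rw [Summable.tsum_finsetSum fun s _ => hS n s]
    exact Finset.sum_le_sum fun s _ => hK s _ (hδp n) (hδ n s) (hS n s)
  · intro n s γ
    exact Finset.single_le_sum (f := fun s => ‖b s γ * Wt ψ (δ n) γ‖) (fun _ _ => norm_nonneg _) (Finset.mem_univ s)
  · intro s x
    have hiso : ∃ r > 0, ∀ y, a s y ≠ 0 → dist y x < r → y = x := by
      obtain ⟨r, hr, hd⟩ := hU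
      by_cases hx : ∃ z, a s z ≠ 0 ∧ dist z x < r / 2 ∧ z ≠ x
      · obtain ⟨z, hz, hzx, hne⟩ := hx
        refine ⟨min (dist z x) (r / 2), by
          have := dist_pos.2 hne
          positivity, fun y hy hyx => ?_⟩
        by_contra hyn
        have hyz : y ≠ z := by
          rintro rfl
          exact absurd (lt_of_lt_of_le hyx (min_le_left _ _)) (lt_irrefl _)
        have := hd y (mem_iUnion.2 ⟨s, hy⟩) z (mem_iUnion.2 ⟨s, hz⟩) hyz
        have h3 := lt_of_lt_of_le hyx (min_le_right _ _)
        linarith [dist_triangle_right y z x]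
      · push Not at hx
        exact ⟨r / 2, by positivity, fun y hy hyx => hx y hy hyx⟩
    obtain ⟨r, hr, hiso⟩ := hiso
    filter_upwards [hδt.eventually (gt_mem_nhds hr)] with n hn
    rw [← (hF s).key ψ (δ n) (hδp n) x]
    exact (isolate ψ h0 h1 (δ n) (hδp n) x fun y hy hyx => hiso y hy (hyx.trans hn)).symm

abbrev Bas (d : ℕ) := Module.Basis (Fin d) ℝ (Rd d)

def LatB {d : ℕ} (β : Bas d) : Submodule ℤ (Rd d) := Submodule.span ℤ (range β)

lemma mem_LatB {d : ℕ} {β : Bas d} {x : Rd d} : x ∈ LatB β ↔ ∀ k, ∃ n : ℤ, β.repr x k = n := by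
  rw [LatB, β.mem_span_iff_repr_mem ℤ]
  simp [eq_comm]

def dv {d : ℕ} (β : Bas d) (k : Fin d) : Rd d :=
  (InnerProductSpace.toDual ℝ (Rd d)).symm (LinearMap.toContinuousLinearMap (β.coord k))

lemma inner_dv {d : ℕ} (β : Bas d) (k : Fin d) (x : Rd d) : ⟪x, dv β k⟫ = β.repr x k := by
  rw [real_inner_comm, dv, InnerProductSpace.toDual_symm_apply]; simp

def InDual {d : ℕ} (β : Bas d) (m : Rd d) : Prop := ∀ l ∈ LatB β, ∃ n : ℤ, ⟪l, m⟫ = (n : ℝ)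

lemma inDual_dv {d : ℕ} (β : Bas d) (k : Fin d) : InDual β (dv β k) := by
  intro l hl
  rw [inner_dv]
  exact mem_LatB.1 hl k

lemma InDual.nsmul {d : ℕ} {β : Bas d} {m : Rd d} (h : InDual β m) (N : ℕ) : InDual β ((N:ℝ) • m) := by
  intro l hl
  obtain ⟨n, hn⟩ := h l hl
  exact ⟨N * n, by rw [inner_smul_right, hn]; push_cast; ring⟩

lemma exists_scaled {d : ℕ} (β : Bas d) (N : ℕ) (hN : 0 < N) :
    ∃ β' : Bas d, ∀ x k, β'.repr x k = N * β.repr x k := by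
  refine ⟨β.map (LinearEquiv.smulOfNeZero ℝ (Rd d) (N:ℝ) (by positivity)).symm, fun x k => ?_⟩
  simp

lemma ud_sub_Lat {d : ℕ} (P : AddSubgroup (Rd d)) (hP : UniformlyDiscrete (P : Set (Rd d))) :
    ∃ β : Bas d, ∀ x ∈ P, x ∈ LatB β := by
  let L : Submodule ℤ (Rd d) := AddSubgroup.toIntSubmodule P
  have hLP : ∀ x, x ∈ L ↔ x ∈ P := fun x => Iff.rfl
  have hd : DiscreteTopology L := by
    obtain ⟨r, hr, h⟩ := hP
    refine DiscreteTopology.of_forall_le_dist hr ?_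
    intro x y hne
    exact h x x.2 y y.2 (fun h => hne (Subtype.ext h))
  let b₀ := Module.Free.chooseBasis ℤ L
  let b : Module.Free.ChooseBasisIndex ℤ L → Rd d := Subtype.val ∘ b₀
  have hspan : Submodule.span ℤ (range b) = L := by
    have h1 : range b = L.subtype '' (range b₀) := by rw [← range_comp]; rfl
    rw [h1, ← Submodule.map_span, b₀.span_eq, Submodule.map_subtype_top]
  have hli : LinearIndependent ℝ b := by
    rw [linearIndependent_iff_card_eq_finrank_span]
    have hd' : DiscreteTopology (Submodule.span ℤ (range b)) := by rw [hspan]; exact hd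
    have := Real.finrank_eq_int_finrank_of_discrete hd'
    have h5 : Module.finrank ℝ ↥(Submodule.span ℝ (range b)) = Module.finrank ℤ ↥(Submodule.span ℤ (range b)) := this
    have h6 : Set.finrank ℝ (range b) = _ := h5
    rw [hspan] at h6
    rw [← Module.finrank_eq_card_chooseBasisIndex]
    exact h6.symm
  let e := Module.Basis.extend hli.linearIndepOn_id
  have hfin : Finite (hli.linearIndepOn_id.extend (subset_univ (range b))) :=
    Module.Finite.finite_basis e
  have : Fintype (hli.linearIndepOn_id.extend (subset_univ (range b))) := Fintype.ofFinite _
  have hcard : Fintype.card (hli.linearIndepOn_id.extend (subset_univ (range b))) = d := by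
    rw [← Module.finrank_eq_card_basis e]; simp
  let β : Bas d := e.reindex (Fintype.equivFinOfCardEq hcard)
  refine ⟨β, fun x hx => ?_⟩
  have hx' : x ∈ Submodule.span ℤ (range b) := by rw [hspan]; exact hx
  refine Submodule.span_mono ?_ hx'
  have h1 : range β = range e := by simp [β]
  rw [h1, Module.Basis.range_extend]
  exact hli.linearIndepOn_id.subset_extend _

def GoodM {d : ℕ} (p q : Rd d × Bas d) (m : Rd d) : Prop :=
  InDual p.2 m ∧ ((∀ N : ℕ, 0 < N → ∃ l ∈ LatB q.2, ∀ n : ℤ, (N:ℝ) * ⟪l, m⟫ ≠ n) ∨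
    (InDual q.2 m ∧ ∀ n : ℤ, ⟪q.1 - p.1, m⟫ ≠ n))

theorem exists_cover {d : ℕ} {Λ : Set (Rd d)} (hJ : InJ Λ) :
    ∃ s : Finset (Rd d × Bas d), (∀ x ∈ Λ, ∃ p ∈ s, x - p.1 ∈ LatB p.2) ∧
      ∀ p ∈ s, ∀ q ∈ s, p ≠ q → ∃ m, GoodM p q m := by
  classical
  have hex : ∃ n : ℕ, ∃ s : Finset (Rd d × Bas d), s.card = n ∧ ∀ x ∈ Λ, ∃ p ∈ s, x - p.1 ∈ LatB p.2 := by
    obtain ⟨t, ht, h1, h2⟩ := hJ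
    haveI : Nonempty (Bas d) := ⟨(EuclideanSpace.basisFun (Fin d) ℝ).toBasis⟩
    choose! β hβ using fun (P : AddSubgroup (Rd d)) (hP : UniformlyDiscrete (P : Set (Rd d))) => ud_sub_Lat P hP
    refine ⟨_, ht.toFinset.image (fun p => (p.1, β p.2)), rfl, fun x hx => ?_⟩
    obtain ⟨p, hp, hh⟩ := h2 x hx
    exact ⟨_, Finset.mem_image.2 ⟨p, by simpa using hp, rfl⟩, hβ _ (h1 p hp) _ hh⟩
  obtain ⟨s, hs, hcov⟩ := Nat.find_spec hex
  refine ⟨s, hcov, fun p hp q hq hne => ?_⟩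
  by_contra hno
  push Not at hno
  have h1 : ∀ k, ∃ N : ℕ, 0 < N ∧ ∀ l ∈ LatB q.2, ∃ n : ℤ, (N:ℝ) * ⟪l, dv p.2 k⟫ = n := by
    intro k
    by_contra hcon
    push Not at hcon
    exact hno _ ⟨inDual_dv _ _, Or.inl hcon⟩
  choose N hN hl using h1
  set M := ∏ k, N k with hM
  have hMp : 0 < M := Finset.prod_pos fun k _ => hN k
  have h2 : ∀ k, InDual q.2 ((M:ℝ) • dv p.2 k) := by
    intro k l hl'
    obtain ⟨n, hn⟩ := hl k l hl'
    refine ⟨(∏ i ∈ Finset.univ.erase k, N i : ℕ) * n, ?_⟩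
    rw [inner_smul_right, hM, ← Finset.mul_prod_erase _ _ (Finset.mem_univ k)]
    push_cast
    rw [← hn]; ring
  have h3 : ∀ k, ∃ n : ℤ, ⟪q.1 - p.1, (M:ℝ) • dv p.2 k⟫ = n := by
    intro k
    by_contra hcon
    push Not at hcon
    exact hno _ ⟨(inDual_dv p.2 k).nsmul M, Or.inr ⟨h2 k, hcon⟩⟩
  obtain ⟨β', hβ'⟩ := exists_scaled p.2 M hMp
  have hsub : ∀ x, (x - p.1 ∈ LatB p.2 ∨ x - q.1 ∈ LatB q.2) → x - p.1 ∈ LatB β' := by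
    rintro x (hx | hx)
    · rw [mem_LatB] at hx ⊢
      intro k
      obtain ⟨n, hn⟩ := hx k
      exact ⟨M * n, by rw [hβ', hn]; push_cast; ring⟩
    · rw [mem_LatB]
      intro k
      obtain ⟨n, hn⟩ := h3 k
      obtain ⟨n', hn'⟩ := h2 k _ hx
      refine ⟨n' + n, ?_⟩
      rw [hβ', ← inner_dv, ← inner_smul_right, show x - p.1 = (x - q.1) + (q.1 - p.1) by abel,
        inner_add_left, hn, hn']; push_cast; ring
  have hlt : (insert (p.1, β') ((s.erase p).erase q)).card < s.card := by
    have c1 := Finset.card_insert_le (p.1, β') ((s.erase p).erase q)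
    have c2 : ((s.erase p).erase q).card = s.card - 1 - 1 := by
      rw [Finset.card_erase_of_mem (Finset.mem_erase.2 ⟨hne.symm, hq⟩), Finset.card_erase_of_mem hp]
    have c3 : 1 < s.card := Finset.one_lt_card.2 ⟨p, hp, q, hq, hne⟩
    omega
  rw [hs] at hlt
  refine Nat.find_min hex hlt ⟨_, rfl, fun x hx => ?_⟩
  obtain ⟨r, hr, hrx⟩ := hcov x hx
  by_cases hrp : r = p
  · exact ⟨_, Finset.mem_insert_self _ _, hsub x (Or.inl (hrp ▸ hrx))⟩
  by_cases hrq : r = q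
  · exact ⟨_, Finset.mem_insert_self _ _, hsub x (Or.inr (hrq ▸ hrx))⟩
  exact ⟨r, Finset.mem_insert_of_mem (Finset.mem_erase.2 ⟨hrq, Finset.mem_erase.2 ⟨hrp, hr⟩⟩), hrx⟩

lemma Lat_isFullRank {d : ℕ} (β : Bas d) : IsFullRankLattice (LatB β : Set (Rd d)) := by
  let e := (EuclideanSpace.basisFun (Fin d) ℝ).toBasis.equiv β (Equiv.refl _)
  refine ⟨e.toLinearMap, e.bijective, ?_⟩
  have hr : ∀ y k, β.repr (e y) k = y k := by
    intro y k
    have : β.repr (e y) = (EuclideanSpace.basisFun (Fin d) ℝ).toBasis.repr y := by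
      simp [e, Module.Basis.equiv]
    rw [this]; simp
  ext x
  constructor
  · intro hx
    refine ⟨e.symm x, fun i => ?_, by simp⟩
    obtain ⟨n, hn⟩ := mem_LatB.1 hx i
    exact ⟨n, by rw [← hn, ← hr]; simp⟩
  · rintro ⟨y, hy, rfl⟩
    refine mem_LatB.2 fun k => ?_
    obtain ⟨n, hn⟩ := hy k
    exact ⟨n, by rw [← hn]; exact hr y k⟩

structure ChiSys {K X : Type*} [AddCommGroup K] (χ : K → X → ℂ) (F : ℕ → Finset X) : Prop where
  add : ∀ k k' x, χ (k + k') x = χ k x * χ k' x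
  zero : ∀ x, χ 0 x = 1
  nrm : ∀ k x, ‖χ k x‖ = 1
  ne : ∀ n, (F n).Nonempty
  mean : ∀ k, k ≠ 0 → Tendsto (fun n => (∑ x ∈ F n, χ k x) / ((F n).card : ℂ)) atTop (𝓝 0)

def Co {K X : Type*} [AddCommGroup K] (χ : K → X → ℂ) (F : ℕ → Finset X) (f : X → ℂ) (u : K → ℂ) : Prop :=
  ∀ k, Tendsto (fun n => (∑ x ∈ F n, f x * χ (-k) x) / ((F n).card : ℂ)) (hyperfilter ℕ : Filter ℕ) (𝓝 (u k))

section cosec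
variable {K X : Type*} [AddCommGroup K] {χ : K → X → ℂ} {F : ℕ → Finset X}

lemma Co.exists (h : ChiSys χ F) (f : X → ℂ) (C : ℝ) (hC : ∀ x, ‖f x‖ ≤ C) : ∃ u, Co χ F f u := by
  have : ∀ k, ∃ c, Tendsto (fun n => (∑ x ∈ F n, f x * χ (-k) x) / ((F n).card : ℂ)) (hyperfilter ℕ : Filter ℕ) (𝓝 c) := by
    intro k
    obtain ⟨c, hc, _⟩ := ultra_bdd (hyperfilter ℕ)
      (fun n => (∑ x ∈ F n, f x * χ (-k) x) / ((F n).card : ℂ)) C (by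
        intro n
        have hp : (0:ℝ) < (F n).card := by exact_mod_cast (h.ne n).card_pos
        rw [norm_div, Complex.norm_natCast, div_le_iff₀ hp]
        refine (norm_sum_le _ _).trans ?_
        calc ∑ x ∈ F n, ‖f x * χ (-k) x‖ ≤ ∑ x ∈ F n, C :=
              Finset.sum_le_sum fun x _ => by rw [norm_mul, h.nrm, mul_one]; exact hC x
          _ = C * (F n).card := by rw [Finset.sum_const, nsmul_eq_mul, mul_comm])
    exact ⟨c, hc⟩
  choose u hu using this
  exact ⟨u, hu⟩

lemma Co.unique {f : X → ℂ} {u u' : K → ℂ} (h : Co χ F f u) (h' : Co χ F f u') : u = u' :=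
  funext fun k => tendsto_nhds_unique (h k) (h' k)

lemma Co.fac (h : ChiSys χ F) {f : X → ℂ} {u : K → ℂ} (hf : Co χ F f u) (z : ℂ) (m : K) :
    Co χ F (fun x => (1 - z * χ m x) * f x) (fun k => u k - z * u (k - m)) := by
  intro k
  have := (hf k).sub ((hf (k - m)).const_mul z)
  refine this.congr fun n => ?_
  rw [mul_div_assoc', ← sub_div, Finset.mul_sum, ← Finset.sum_sub_distrib]
  congr 1
  refine Finset.sum_congr rfl fun x _ => ?_
  rw [show -(k - m) = m + -k by abel, h.add]; ring

lemma Co.trig (h : ChiSys χ F) (t : K →₀ ℂ) :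
    Co χ F (fun x => ∑ k ∈ t.support, t k * χ k x) t := by
  classical
  intro k
  have h1 : ∀ κ, Tendsto (fun n => t κ * ((∑ x ∈ F n, χ (κ + -k) x) / ((F n).card : ℂ)))
      (hyperfilter ℕ : Filter ℕ) (𝓝 (if κ = k then t κ else 0)) := by
    intro κ
    split_ifs with hk
    · subst hk
      refine (tendsto_const_nhds (x := t κ)).congr fun n => ?_
      have hp : ((F n).card : ℂ) ≠ 0 := by exact_mod_cast (h.ne n).card_pos.ne'
      simp [h.zero, hp]
    · have := ((h.mean (κ + -k) (by rwa [← sub_eq_add_neg, sub_ne_zero])).mono_left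
        (Nat.hyperfilter_le_atTop)).const_mul (t κ)
      simpa using this
  have h2 := tendsto_finsetSum t.support fun κ _ => h1 κ
  have h3 : ∑ κ ∈ t.support, (if κ = k then t κ else 0) = t k := by
    rw [Finset.sum_ite_eq']
    split_ifs with hk
    · rfl
    · simpa using (Finsupp.notMem_support_iff.1 hk).symm
  rw [h3] at h2
  refine h2.congr fun n => ?_
  simp_rw [mul_div_assoc', ← Finset.sum_div, Finset.mul_sum]
  rw [Finset.sum_comm]
  congr 1
  refine Finset.sum_congr rfl fun x _ => ?_
  rw [Finset.sum_mul]
  refine Finset.sum_congr rfl fun κ _ => ?_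
  rw [h.add]; ring

lemma ChiSys.conj (h : ChiSys χ F) (k : K) (x : X) : (starRingEnd ℂ) (χ k x) = χ (-k) x := by
  have h1 : χ k x * χ (-k) x = 1 := by rw [← h.add, add_neg_cancel, h.zero]
  have h2 : χ k x * (starRingEnd ℂ) (χ k x) = 1 := by
    rw [Complex.mul_conj, Complex.normSq_eq_norm_sq, h.nrm]; simp
  have h3 : χ k x ≠ 0 := by intro h0; have := h.nrm k x; rw [h0] at this; simp at this
  exact mul_left_cancel₀ h3 (h2.trans h1.symm)

lemma Co.bessel (h : ChiSys χ F) {f : X → ℂ} {u : K → ℂ} (hf : Co χ F f u) (C : ℝ)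
    (hC : ∀ x, ‖f x‖ ≤ C) (A : Finset K) : ∑ k ∈ A, ‖u k‖ ^ 2 ≤ C ^ 2 := by
  classical
  let t : K →₀ ℂ := Finsupp.onFinset A (fun k => if k ∈ A then u k else 0) (by intro k; simp; tauto)
  set g : X → ℂ := fun x => ∑ k ∈ t.support, t k * χ k x with hg
  have hgA : ∀ x, g x = ∑ k ∈ A, u k * χ k x := by
    intro x
    rw [hg]
    simp only
    rw [Finset.sum_subset (Finsupp.support_onFinset_subset : t.support ⊆ A)]
    · refine Finset.sum_congr rfl fun k hk => by simp [t, hk]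
    · intro k _ hk
      rw [Finsupp.notMem_support_iff.1 hk, zero_mul]
  have hgc : Co χ F g t := Co.trig h t
  have key : ∀ (f' : X → ℂ) (u' : K → ℂ), Co χ F f' u' →
      Tendsto (fun n => (∑ x ∈ F n, f' x * (starRingEnd ℂ) (g x)) / ((F n).card : ℂ)) (hyperfilter ℕ : Filter ℕ)
        (𝓝 (∑ k ∈ A, (starRingEnd ℂ) (u k) * u' k)) := by
    intro f' u' hf'
    refine (tendsto_finsetSum A fun k _ => (hf' k).const_mul ((starRingEnd ℂ) (u k))).congr fun n => ?_
    simp_rw [mul_div_assoc', ← Finset.sum_div, Finset.mul_sum]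
    rw [Finset.sum_comm]
    congr 1
    refine Finset.sum_congr rfl fun x _ => ?_
    rw [hgA, map_sum, Finset.mul_sum]
    refine Finset.sum_congr rfl fun k _ => ?_
    rw [map_mul, h.conj]; ring
  have hS : ∀ u' : K → ℂ, (∀ k ∈ A, u' k = u k) → (∑ k ∈ A, (starRingEnd ℂ) (u k) * u' k) = ((∑ k ∈ A, ‖u k‖ ^ 2 : ℝ) : ℂ) := by
    intro u' hu'
    push_cast
    refine Finset.sum_congr rfl fun k hk => ?_
    rw [hu' k hk, ← Complex.normSq_eq_conj_mul_self, Complex.normSq_eq_norm_sq]; push_cast; rfl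
  have k1 := key f u hf
  have k2 := key g t hgc
  rw [hS u fun _ _ => rfl] at k1
  rw [hS t fun k hk => by simp [t, hk]] at k2
  have k3 := ((Complex.continuous_re.tendsto _).comp k1).const_mul 2
  have k4 := k3.sub ((Complex.continuous_re.tendsto _).comp k2)
  have h5 := le_of_tendsto k4 (b := C ^ 2) (Eventually.of_forall fun n => ?_)
  · simp only [Complex.ofReal_re] at h5; linarith
  · have hp : (0:ℝ) < (F n).card := by exact_mod_cast (h.ne n).card_pos
    simp only [Function.comp]
    rw [Complex.div_natCast_re, Complex.div_natCast_re, mul_div_assoc', ← sub_div, div_le_iff₀ hp,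
      Complex.re_sum, Complex.re_sum, Finset.mul_sum, ← Finset.sum_sub_distrib]
    calc _ ≤ ∑ x ∈ F n, C ^ 2 := Finset.sum_le_sum fun x _ => ?_
      _ = C ^ 2 * (F n).card := by rw [Finset.sum_const, nsmul_eq_mul, mul_comm]
    have e1 : ‖f x‖ ^ 2 ≤ C ^ 2 := pow_le_pow_left₀ (norm_nonneg _) (hC x) 2
    rw [← Complex.normSq_eq_norm_sq, Complex.normSq_apply] at e1
    simp only [Complex.mul_re, Complex.conj_re, Complex.conj_im]
    nlinarith [sq_nonneg ((f x).re - (g x).re), sq_nonneg ((f x).im - (g x).im)]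

lemma Co.c0 (h : ChiSys χ F) {f : X → ℂ} {u : K → ℂ} (hf : Co χ F f u) (C : ℝ)
    (hC : ∀ x, ‖f x‖ ≤ C) (ε : ℝ) (hε : 0 < ε) : {k | ε ≤ ‖u k‖}.Finite := by
  by_contra hinf
  obtain ⟨N, hN⟩ := exists_nat_gt (C ^ 2 / ε ^ 2)
  obtain ⟨A, hA, hcard⟩ := Set.Infinite.exists_subset_card_eq hinf N
  have h1 := hf.bessel h C hC A
  have h2 : (N:ℝ) * ε ^ 2 ≤ ∑ k ∈ A, ‖u k‖ ^ 2 := by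
    rw [← hcard, ← nsmul_eq_mul, ← Finset.sum_const]
    exact Finset.sum_le_sum fun k hk => pow_le_pow_left₀ hε.le (hA hk) 2
  rw [div_lt_iff₀ (by positivity)] at hN
  linarith

lemma orbit (u : K → ℂ) (hc : ∀ ε > (0:ℝ), {k | ε ≤ ‖u k‖}.Finite) (z : ℂ) (m : K)
    (hzm : (‖z‖ = 1 ∧ ∀ N : ℕ, 0 < N → N • m ≠ 0) ∨ (m = 0 ∧ z ≠ 1))
    (hS : {k | u k - z * u (k - m) ≠ 0}.Finite) : {k | u k ≠ 0}.Finite := by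
  rcases hzm with ⟨hz, hm⟩ | ⟨rfl, hz⟩
  · have hsub : {k | u k ≠ 0} ⊆ ⋃ s ∈ {k | u k - z * u (k - m) ≠ 0}, {k | u k ≠ 0 ∧ ‖u k‖ = ‖u (s - m)‖} := by
      intro k hk
      by_contra hno
      simp only [mem_iUnion, not_exists] at hno
      have hall : ∀ j : ℕ, ‖u (k + j • m)‖ = ‖u k‖ := by
        intro j
        induction j with
        | zero => simp
        | succ j ih =>
          have e : k + (j + 1) • m - m = k + j • m := by rw [add_nsmul]; abel_nf
          by_cases hs : k + (j + 1) • m ∈ {k | u k - z * u (k - m) ≠ 0}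
          · exact absurd ⟨hk, by rw [e, ih]⟩ (hno _ hs)
          · simp only [mem_ofPred_eq, not_not, e, sub_eq_zero] at hs
            rw [hs, norm_mul, hz, one_mul, ih]
      have hinj : Function.Injective fun j : ℕ => k + j • m := by
        intro i j hij
        simp only [add_right_inj] at hij
        rcases lt_trichotomy i j with hlt | heq | hlt
        · exact absurd (by rw [sub_nsmul _ hlt.le, hij]; simp) (hm (j - i) (by omega))
        · exact heq
        · exact absurd (by rw [sub_nsmul _ hlt.le, hij]; simp) (hm (i - j) (by omega))
      exact Set.infinite_of_injective_forall_mem hinj (fun j => (hall j).ge) (hc ‖u k‖ (norm_pos_iff.2 hk))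
    refine Finite.subset (hS.biUnion fun s _ => ?_) hsub
    by_cases h0 : u (s - m) = 0
    · convert Set.finite_empty
      ext k; simp [h0]
    · exact (hc _ (norm_pos_iff.2 h0)).subset fun k hk => hk.2.ge
  · refine hS.subset fun k hk => ?_
    simp only [sub_zero, mem_ofPred_eq] at hk ⊢
    rw [← one_sub_mul]
    exact mul_ne_zero (sub_ne_zero.2 hz.symm) hk

def IsTP (χ : K → X → ℂ) (f : X → ℂ) : Prop := ∃ t : K →₀ ℂ, ∀ x, f x = ∑ k ∈ t.support, t k * χ k x

lemma IsTP.of_sum (χ : K → X → ℂ) {ι : Type*} (A : Finset ι) (g : ι → ℂ) (κ : ι → K) :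
    IsTP χ (fun x => ∑ i ∈ A, g i * χ (κ i) x) := by
  classical
  refine ⟨∑ i ∈ A, Finsupp.single (κ i) (g i), fun x => ?_⟩
  have : ∀ t : K →₀ ℂ, ∑ k ∈ t.support, t k * χ k x = t.sum (fun k c => c * χ k x) := fun t => rfl
  rw [this, ← Finsupp.sum_finsetSum_index (by simp) (by intros; ring)]
  refine Finset.sum_congr rfl fun i _ => ?_
  rw [Finsupp.sum_single_index]; simp

lemma IsTP.sub {f g : X → ℂ} (hf : IsTP χ f) (hg : IsTP χ g) : IsTP χ (fun x => f x - g x) := by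
  obtain ⟨t, ht⟩ := hf
  obtain ⟨r, hr⟩ := hg
  have := IsTP.of_sum χ (t.support.disjSum r.support) (Sum.elim t (fun k => - r k)) (Sum.elim id id)
  refine (congrArg (IsTP χ) (funext fun x => ?_)).mp this
  rw [Finset.sum_disjSum, ht, hr]
  simp [sub_eq_add_neg]

lemma IsTP.fac (h : ChiSys χ F) {f : X → ℂ} (hf : IsTP χ f) (z : ℂ) (m : K) :
    IsTP χ (fun x => (1 - z * χ m x) * f x) := by
  obtain ⟨t, ht⟩ := hf
  have := (show IsTP χ f from ⟨t, ht⟩).sub (IsTP.of_sum χ t.support (fun k => z * t k) (fun k => m + k))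
  refine (congrArg (IsTP χ) (funext fun x => ?_)).mp this
  rw [sub_mul, one_mul, ht x, Finset.mul_sum]
  congr 1
  refine Finset.sum_congr rfl fun k _ => ?_
  rw [h.add]; ring

theorem chi_div (h : ChiSys χ F) {ι : Type*} (A : Finset ι) (z : ι → ℂ) (m : ι → K)
    (hzm : ∀ i ∈ A, ‖z i‖ = 1 ∧ ((∀ N : ℕ, 0 < N → N • m i ≠ 0) ∨ (m i = 0 ∧ z i ≠ 1)))
    (c : X → ℂ) (C : ℝ) (hC : ∀ x, ‖c x‖ ≤ C)
    (hT : IsTP χ (fun x => (∏ i ∈ A, (1 - z i * χ (m i) x)) * c x)) :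
    ∃ p, IsTP χ p ∧ ∀ x, (∏ i ∈ A, (1 - z i * χ (m i) x)) * (c x - p x) = 0 := by
  classical
  obtain ⟨u, hu⟩ := Co.exists h c C hC
  -- coefficient of product
  have main : ∀ B ⊆ A, ∀ (f : X → ℂ) (v : K → ℂ) (C : ℝ), (∀ x, ‖f x‖ ≤ C) → Co χ F f v →
      ∃ w C', (∀ x, ‖(∏ i ∈ B, (1 - z i * χ (m i) x)) * f x‖ ≤ C') ∧
        Co χ F (fun x => (∏ i ∈ B, (1 - z i * χ (m i) x)) * f x) w ∧
        ({k | w k ≠ 0}.Finite → {k | v k ≠ 0}.Finite) ∧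
        ∀ (g : X → ℂ), Co χ F g v → Co χ F (fun x => (∏ i ∈ B, (1 - z i * χ (m i) x)) * g x) w := by
    intro B
    induction B using Finset.induction_on with
    | empty => intro _ f v C hC hf; exact ⟨v, C, by simpa using hC, by simpa using hf, id, fun g hg => by simpa using hg⟩
    | insert i B hi ih =>
      intro hB f v C hC hf
      obtain ⟨w, C', h1, h2, h3, h4⟩ := ih (fun j hj => hB (Finset.mem_insert_of_mem hj)) f v C hC hf
      have hziA := hzm i (hB (Finset.mem_insert_self _ _))
      refine ⟨fun k => w k - z i * w (k - m i), 2 * C', fun x => ?_, ?_, fun hfin => ?_, fun g hg => ?_⟩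
      · rw [Finset.prod_insert hi, mul_assoc, norm_mul]
        have : ‖1 - z i * χ (m i) x‖ ≤ 2 := by
          refine (norm_sub_le _ _).trans ?_
          rw [norm_mul, h.nrm, hziA.1, norm_one]; norm_num
        exact mul_le_mul this (h1 x) (norm_nonneg _) (by norm_num)
      · refine (congrArg (fun f => Co χ F f _) (funext fun x => ?_)).mp (h2.fac h (z i) (m i))
        rw [Finset.prod_insert hi, mul_assoc]
      · refine h3 (orbit w (fun ε hε => h2.c0 h C' h1 ε hε) (z i) (m i) ?_ hfin)
        rcases hziA with ⟨hz, hh | hh⟩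
        · exact Or.inl ⟨hz, hh⟩
        · exact Or.inr hh
      · refine (congrArg (fun f => Co χ F f _) (funext fun x => ?_)).mp ((h4 g hg).fac h (z i) (m i))
        rw [Finset.prod_insert hi, mul_assoc]
  obtain ⟨w, C', h1, h2, h3, h4⟩ := main A subset_rfl c u C hC hu
  obtain ⟨t, ht⟩ := id hT
  have hwt : w = t := by
    refine h2.unique ?_
    have := Co.trig h t
    exact (congrArg (fun f => Co χ F f _) (funext fun x => (ht x).symm)).mp this
  have hufin := h3 (by rw [hwt]; exact (t.support.finite_toSet).subset fun k hk => by simpa using hk)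
  let r : K →₀ ℂ := Finsupp.onFinset hufin.toFinset u (by intro k hk; simpa using hk)
  have hr : (r : K → ℂ) = u := rfl
  set p : X → ℂ := fun x => ∑ k ∈ r.support, r k * χ k x with hp
  have hpT : IsTP χ p := ⟨r, fun x => rfl⟩
  have hpc : Co χ F p u := hr ▸ Co.trig h r
  have hpp := h4 p hpc
  have hTP : ∀ B : Finset ι, IsTP χ (fun x => (∏ i ∈ B, (1 - z i * χ (m i) x)) * p x) := by
    intro B
    induction B using Finset.induction_on with
    | empty => simpa using hpT
    | insert i B hi ih =>
      refine (congrArg (IsTP χ) (funext fun x => ?_)).mp (ih.fac h (z i) (m i))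
      rw [Finset.prod_insert hi, mul_assoc]
  obtain ⟨t', ht'⟩ := hTP A
  have hwt' : w = t' := by
    refine hpp.unique ?_
    have := Co.trig h t'
    exact (congrArg (fun f => Co χ F f _) (funext fun x => (ht' x).symm)).mp this
  have : t = t' := DFunLike.coe_injective (hwt.symm.trans hwt')
  refine ⟨p, hpT, fun x => ?_⟩
  have e1 := ht x
  have e2 := ht' x
  simp only at e1 e2
  rw [mul_sub, e1, e2, this, sub_self]

end cosec

lemma inDual_of_basis {d : ℕ} {β : Bas d} {m : Rd d} (h : ∀ i, ∃ n : ℤ, ⟪β i, m⟫ = (n:ℝ)) : InDual β m := by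
  intro l hl
  induction hl using Submodule.span_induction with
  | mem x hx => obtain ⟨i, rfl⟩ := hx; exact h i
  | zero => exact ⟨0, by simp⟩
  | add x y _ _ hx hy =>
    obtain ⟨n, hn⟩ := hx
    obtain ⟨k, hk⟩ := hy
    exact ⟨n + k, by rw [inner_add_left, hn, hk]; push_cast; rfl⟩
  | smul a x _ hx =>
    obtain ⟨n, hn⟩ := hx
    refine ⟨a * n, ?_⟩
    rw [← Int.cast_smul_eq_zsmul ℝ, real_inner_smul_left, hn]; push_cast; rfl

def DualB {d : ℕ} (β : Bas d) : AddSubgroup (Rd d) where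
  carrier := {m | InDual β m}
  zero_mem' := fun l _ => ⟨0, by simp⟩
  add_mem' := by
    intro x y hx hy l hl
    obtain ⟨n, hn⟩ := hx l hl
    obtain ⟨k, hk⟩ := hy l hl
    exact ⟨n + k, by rw [inner_add_right, hn, hk]; push_cast; rfl⟩
  neg_mem' := by
    intro x hx l hl
    obtain ⟨n, hn⟩ := hx l hl
    exact ⟨-n, by rw [inner_neg_right, hn]; push_cast; rfl⟩

lemma mem_DualB {d : ℕ} {β : Bas d} {m : Rd d} : m ∈ DualB β ↔ InDual β m := Iff.rfl

def chiL {d : ℕ} (β : Bas d) (k : Rd d ⧸ DualB β) (l : LatB β) : ℂ := e2pi l (Quotient.out k)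

lemma InDual.e2pi {d : ℕ} {β : Bas d} {m : Rd d} (h : InDual β m) {l : Rd d} (hl : l ∈ LatB β) : e2pi l m = 1 :=
  (e2pi_eq_one_iff _ _).2 (h l hl)

lemma chiL_mk {d : ℕ} (β : Bas d) (γ : Rd d) (l : LatB β) : chiL β (QuotientAddGroup.mk γ) l = e2pi l γ := by
  obtain ⟨h, hh⟩ := QuotientAddGroup.mk_out_eq_add (DualB β) γ
  rw [chiL, hh, e2pi_add_right, (mem_DualB.1 h.2).e2pi l.2, mul_one]

def latPt {d : ℕ} (β : Bas d) (k : Fin d → ℕ) : LatB β :=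
  ⟨∑ i, k i • β i, Submodule.sum_mem _ fun i _ => nsmul_mem (show β i ∈ LatB β from Submodule.subset_span (mem_range_self i)) _⟩

lemma latPt_inj {d : ℕ} (β : Bas d) : Function.Injective (latPt β) := by
  intro k k' h
  have h1 : ∑ i, k i • β i = ∑ i, k' i • β i := congrArg Subtype.val h
  ext i
  have h2 := congrArg (fun x => β.repr x i) h1
  simp only [← Nat.cast_smul_eq_nsmul ℝ] at h2
  rw [β.repr_sum_self, β.repr_sum_self] at h2
  exact_mod_cast h2

lemma e2pi_latPt {d : ℕ} (β : Bas d) (k : Fin d → ℕ) (γ : Rd d) :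
    e2pi (latPt β k) γ = ∏ i, (e2pi (β i) γ) ^ (k i) := by
  have h1 : ∀ (x : Rd d) (n : ℕ), e2pi (n • x) γ = (e2pi x γ) ^ n := by
    intro x n
    induction n with
    | zero => simp
    | succ n ih => rw [add_nsmul, one_nsmul, e2pi_add_left, ih, pow_succ]
  have h2 : ∀ (A : Finset (Fin d)), e2pi (∑ i ∈ A, k i • β i) γ = ∏ i ∈ A, (e2pi (β i) γ) ^ (k i) := by
    intro A
    induction A using Finset.induction_on with
    | empty => simp
    | insert i A hi ih => rw [Finset.sum_insert hi, Finset.prod_insert hi, e2pi_add_left, ih, h1]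
  exact h2 _

def boxL {d : ℕ} (β : Bas d) (n : ℕ) : Finset (LatB β) :=
  (Fintype.piFinset fun _ : Fin d => Finset.range (n + 1)).map ⟨latPt β, latPt_inj β⟩

lemma chiSys_L {d : ℕ} (β : Bas d) : ChiSys (chiL β) (boxL β) := by
  refine ⟨fun k k' x => ?_, fun x => ?_, fun k x => e2pi_norm _ _, fun n => ?_, fun k hk => ?_⟩
  · induction k using QuotientAddGroup.induction_on with | H γ =>
    induction k' using QuotientAddGroup.induction_on with | H γ' =>
    rw [← QuotientAddGroup.mk_add, chiL_mk, chiL_mk, chiL_mk, e2pi_add_right]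
  · rw [← QuotientAddGroup.mk_zero, chiL_mk, e2pi_zero_right]
  · rw [boxL, Finset.map_nonempty, Fintype.piFinset_nonempty]
    intro i; simp
  · induction k using QuotientAddGroup.induction_on with | H γ =>
    have hγ : ∃ i, e2pi (β i) γ ≠ 1 := by
      by_contra hno
      push Not at hno
      refine hk ((QuotientAddGroup.eq_zero_iff _).2 (mem_DualB.2 (inDual_of_basis fun i => ?_)))
      exact (e2pi_eq_one_iff _ _).1 (hno i)
    obtain ⟨i₀, hi₀⟩ := hγ
    set w : Fin d → ℂ := fun i => e2pi (β i) γ with hw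
    have hwn : ∀ i, ‖w i‖ = 1 := fun i => e2pi_norm _ _
    have hcard : ∀ n, ((boxL β n).card : ℂ) = ∏ i : Fin d, ((n:ℂ) + 1) := by
      intro n
      rw [boxL, Finset.card_map, Fintype.card_piFinset]
      push_cast
      refine Finset.prod_congr rfl fun i _ => by rw [Finset.card_range]; push_cast; rfl
    have hsum : ∀ n, ∑ x ∈ boxL β n, chiL β (QuotientAddGroup.mk γ) x = ∏ i : Fin d, ∑ j ∈ Finset.range (n+1), w i ^ j := by
      intro n
      rw [Finset.prod_univ_sum, boxL, Finset.sum_map]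
      refine Finset.sum_congr rfl fun k _ => ?_
      rw [chiL_mk]
      exact e2pi_latPt β k γ
    have hle : ∀ n : ℕ, ‖(∑ x ∈ boxL β n, chiL β (QuotientAddGroup.mk γ) x) / ((boxL β n).card : ℂ)‖ ≤
        (2 / ‖w i₀ - 1‖) * (1 / ((n:ℝ) + 1)) := by
      intro n
      rw [hcard, hsum, ← Finset.prod_div_distrib, norm_prod, ← Finset.mul_prod_erase _ _ (Finset.mem_univ i₀)]
      have hn1 : ‖((n:ℂ) + 1)‖ = (n:ℝ) + 1 := by
        rw [show ((n:ℂ) + 1) = (((n + 1 : ℕ)) : ℂ) by push_cast; rfl, Complex.norm_natCast]; push_cast; rfl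
      have b1 : ‖(∑ j ∈ Finset.range (n+1), w i₀ ^ j) / ((n:ℂ) + 1)‖ ≤ (2 / ‖w i₀ - 1‖) * (1 / ((n:ℝ) + 1)) := by
        rw [norm_div, hn1, geom_sum_eq hi₀, norm_div, div_eq_mul_one_div (‖_‖ / ‖_‖)]
        gcongr
        refine (norm_sub_le _ _).trans ?_
        rw [norm_pow, hwn, one_pow, norm_one]; norm_num
      have b2 : ∏ i ∈ Finset.univ.erase i₀, ‖(∑ j ∈ Finset.range (n+1), w i ^ j) / ((n:ℂ) + 1)‖ ≤ 1 := by
        refine Finset.prod_le_one (fun _ _ => norm_nonneg _) fun i _ => ?_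
        rw [norm_div, hn1, div_le_one (by positivity)]
        refine (norm_sum_le _ _).trans ?_
        simp [hwn]
      calc _ ≤ (2 / ‖w i₀ - 1‖) * (1 / ((n:ℝ) + 1)) * 1 :=
            mul_le_mul b1 b2 (Finset.prod_nonneg fun _ _ => norm_nonneg _) (by positivity)
        _ = _ := mul_one _
    refine squeeze_zero_norm hle ?_
    simpa using (tendsto_one_div_add_atTop_nhds_zero_nat (𝕜 := ℝ)).const_mul (2 / ‖w i₀ - 1‖)

lemma latB_locFinite {d : ℕ} (β : Bas d) (v : Rd d) : LocFinite {x | x - v ∈ LatB β} := by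
  intro x r
  have h := ZSpan.setFinite_inter β (s := ball (x - v) r) Metric.isBounded_ball
  refine (h.image (fun y => y + v)).subset ?_
  rintro y ⟨hy, hyb⟩
  refine ⟨y - v, ⟨?_, hy⟩, by simp⟩
  rw [mem_ball] at hyb ⊢
  simpa using hyb

lemma LocFinite.union {d : ℕ} {A B : Set (Rd d)} (hA : LocFinite A) (hB : LocFinite B) : LocFinite (A ∪ B) := by
  intro x r
  rw [union_inter_distrib_right]
  exact (hA x r).union (hB x r)

lemma LocFinite.mono {d : ℕ} {A B : Set (Rd d)} (hA : LocFinite A) (h : B ⊆ A) : LocFinite B :=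
  fun x r => (hA x r).subset (inter_subset_inter_left _ h)

lemma LocFinite.shift {d : ℕ} {A : Set (Rd d)} (hA : LocFinite A) (v : Rd d) : LocFinite {x | x - v ∈ A} := by
  intro x r
  refine ((hA (x - v) r).image (fun y => y + v)).subset ?_
  rintro y ⟨hy, hyb⟩
  refine ⟨y - v, ⟨hy, ?_⟩, by simp⟩
  rw [mem_ball] at hyb ⊢
  simpa using hyb

lemma FPair.prod {d : ℕ} {a b : Rd d → ℂ} (h : FPair a b) (hb : LocFinite {x | b x ≠ 0})
    {ι : Type*} (A : Finset ι) (p m : ι → Rd d) :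
    ∃ B, FPair (fun x => (∏ i ∈ A, (1 - e2pi (x - p i) (m i))) * a x) B ∧ LocFinite {x | B x ≠ 0} := by
  classical
  induction A using Finset.induction_on with
  | empty => exact ⟨b, by simpa using h, hb⟩
  | insert i A hi ih =>
    obtain ⟨B, h1, h2⟩ := ih
    have h3 := h1.add ((h1.modul (m i)).smul (- e2pi (- p i) (m i)))
    refine ⟨_, (congrArg (fun f => FPair f _) (funext fun x => ?_)).mp h3, ?_⟩
    · rw [Finset.prod_insert hi, sub_eq_add_neg x, e2pi_add_left]; ring
    · refine (h2.union (h2.shift (m i))).mono fun x hx => ?_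
      by_contra hno
      simp only [mem_union, mem_ofPred_eq, not_or, not_not] at hno
      apply hx
      simp [hno.1, hno.2]

lemma fund_dual {d : ℕ} (β : Bas d) : ∃ r : ℝ, ∀ γ : Rd d, ∃ m, InDual β m ∧ ‖γ - m‖ < r := by
  refine ⟨∑ k, ‖dv β k‖ + 1, fun γ => ⟨∑ k, ⌊⟪β k, γ⟫⌋ • dv β k, ?_, ?_⟩⟩
  · exact (DualB β).sum_mem fun k _ => (DualB β).zsmul_mem (inDual_dv β k) _
  · have h1 : γ = ∑ k, ⟪β k, γ⟫ • dv β k := by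
      have : ∀ x, ⟪x, γ⟫ = ⟪x, ∑ k, ⟪β k, γ⟫ • dv β k⟫ := by
        intro x
        rw [inner_sum]
        simp_rw [inner_smul_right, inner_dv]
        conv_lhs => rw [← β.sum_repr x]
        rw [sum_inner]
        simp_rw [real_inner_smul_left]
        exact Finset.sum_congr rfl fun k _ => mul_comm _ _
      exact ext_inner_left ℝ this
    have h2 : γ - ∑ k, ⌊⟪β k, γ⟫⌋ • dv β k = ∑ k, Int.fract ⟪β k, γ⟫ • dv β k := by
      conv_lhs => lhs; rw [h1]
      rw [← Finset.sum_sub_distrib]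
      refine Finset.sum_congr rfl fun k _ => ?_
      rw [← Int.cast_smul_eq_zsmul ℝ, ← sub_smul]; rfl
    rw [h2]
    refine lt_of_le_of_lt (norm_sum_le _ _) (lt_of_le_of_lt (Finset.sum_le_sum fun k _ => ?_) (lt_add_one _))
    rw [norm_smul, Real.norm_eq_abs, abs_of_nonneg (Int.fract_nonneg _)]
    exact mul_le_of_le_one_left (norm_nonneg _) (Int.fract_lt_one _).le

lemma lattice_trig {d : ℕ} {A B : Rd d → ℂ} (h : FPair A B) (hB : LocFinite {x | B x ≠ 0})
    (β : Bas d) (v : Rd d) (hA : ∀ x, A x ≠ 0 → x - v ∈ LatB β) :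
    IsTP (chiL β) (fun l => A (v + l)) := by
  classical
  -- invariance
  have hinv : ∀ m, InDual β m → ∀ γ, B (γ - m) = e2pi v m * B γ := by
    intro m hm γ
    have h1 := h.modul m
    have h2 := h.smul (e2pi v m)
    have h3 : (fun x => e2pi x m * A x) = (fun x => e2pi v m * A x) := by
      funext x
      by_cases hx : A x = 0
      · simp [hx]
      · have : e2pi (x - v) m = 1 := hm.e2pi (hA x hx)
        rw [show x = v + (x - v) by abel, e2pi_add_left, this, mul_one]
    rw [h3] at h1
    have := h1.unique h2 (hB.shift m) (hB.mono fun x hx => right_ne_zero_of_mul hx)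
    exact congrFun this γ
  obtain ⟨r, hr⟩ := fund_dual β
  have hfin : {k : Rd d ⧸ DualB β | ∃ γ, B γ ≠ 0 ∧ QuotientAddGroup.mk γ = k}.Finite := by
    refine ((hB 0 r).image (QuotientAddGroup.mk (s := DualB β))).subset ?_
    rintro k ⟨γ, hγ, rfl⟩
    obtain ⟨m, hm, hlt⟩ := hr γ
    refine ⟨γ - m, ⟨?_, by simpa using hlt⟩, ?_⟩
    · rw [mem_ofPred_eq, hinv m hm]
      exact mul_ne_zero (e2pi_ne_zero _ _) hγ
    · rw [QuotientAddGroup.eq]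
      simpa using (mem_DualB.2 hm)
  obtain ⟨ψ, h0, h1, -⟩ := exists_bump d
  obtain ⟨δ, hδ, hiso⟩ := (latB_locFinite β 0).isolated 0
  let g : Rd d → ℂ := fun γ => B γ * Wt ψ δ γ * e2pi v γ
  have hg : Summable g := by
    refine Summable.of_norm ((h.summable_Wt ψ δ hδ).congr fun γ => ?_)
    simp only [g]
    rw [norm_mul _ (e2pi v γ), e2pi_norm, mul_one]
  have hval : ∀ l : LatB β, A (v + l) = ∑' γ, g γ * e2pi l γ := by
    intro l
    rw [← isolate (a := A) ψ h0 h1 δ hδ (v + l) ?_, h.key ψ δ hδ]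
    · refine tsum_congr fun γ => ?_
      simp only [g]; rw [e2pi_add_left]; ring
    · intro y hy hd
      have h2 : y - v - l ∈ LatB β := (LatB β).sub_mem (hA y hy) l.2
      have h3 := hiso (y - v - l) (by simpa using h2) (by
        rw [dist_eq_norm, sub_zero]; rw [dist_eq_norm] at hd
        rwa [sub_sub])
      rw [sub_sub, sub_eq_zero] at h3
      exact h3
  have hrepr : ∀ l : LatB β, A (v + l) = ∑ k ∈ hfin.toFinset,
      (∑' γ, if QuotientAddGroup.mk γ = k then g γ else 0) * chiL β k l := by
    intro l
    have hs : ∀ k : Rd d ⧸ DualB β, Summable fun γ : Rd d => if QuotientAddGroup.mk γ = k then g γ else 0 := by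
      intro k
      refine Summable.of_norm (Summable.of_nonneg_of_le (fun γ => norm_nonneg _) (fun γ => ?_) hg.norm)
      split_ifs
      · exact le_rfl
      · simp
    simp_rw [← tsum_mul_right]
    rw [← Summable.tsum_finsetSum (fun k _ => (hs k).mul_right _), hval]
    refine tsum_congr fun γ => ?_
    by_cases hγ : B γ = 0
    · simp [g, hγ]
    · rw [Finset.sum_eq_single (QuotientAddGroup.mk γ)]
      · rw [if_pos rfl, chiL_mk]
      · intro k _ hk
        rw [if_neg (Ne.symm hk), zero_mul]
      · intro hno
        exact absurd (by simpa using ⟨γ, hγ, rfl⟩) hno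
  have := IsTP.of_sum (chiL β) hfin.toFinset (fun k => ∑' γ, if QuotientAddGroup.mk γ = k then g γ else 0) id
  refine (congrArg (IsTP (chiL β)) (funext fun l => ?_)).mp this
  rw [hrepr]; rfl

lemma isTrigPoly_of_sum {d : ℕ} {ι : Type*} (A : Finset ι) (c : ι → ℂ) (w : ι → Rd d) :
    IsTrigPoly (fun x => ∑ i ∈ A, c i * e2pi x (w i)) := by
  refine ⟨A.card, fun j => c (A.equivFin.symm j), fun j => w (A.equivFin.symm j), fun x => ?_⟩
  show ∑ i ∈ A, c i * e2pi x (w i) = _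
  rw [← Finset.sum_coe_sort A]
  exact (Equiv.sum_comp A.equivFin.symm (fun i : A => c i * e2pi x (w i))).symm

theorem partD {d : ℕ} {a b : Rd d → ℂ} (h : FPair a b) (hb : LocFinite {x | b x ≠ 0}) (C : ℝ)
    (hC : ∀ x, ‖a x‖ ≤ C) (s : Finset (Rd d × Bas d))
    (hcov : ∀ x, a x ≠ 0 → ∃ p ∈ s, x - p.1 ∈ LatB p.2) (q : Rd d × Bas d)
    (m : Rd d × Bas d → Rd d) (hm : ∀ p ∈ s, p ≠ q → GoodM p q (m p)) :
    ∃ P, IsTrigPoly P ∧ ∀ x, x - q.1 ∈ LatB q.2 →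
      (∀ p ∈ s, p ≠ q → ∀ n : ℤ, ⟪x - p.1, m p⟫ ≠ n) → a x = P x := by
  classical
  obtain ⟨B, hB, hBf⟩ := h.prod hb (s.erase q) Prod.fst m
  have hT := lattice_trig hB hBf q.2 q.1 (by
    intro x hx
    obtain ⟨p, hp, hpx⟩ := hcov x (right_ne_zero_of_mul hx)
    by_cases hpq : p = q
    · exact hpq ▸ hpx
    · exfalso
      refine Finset.prod_ne_zero_iff.1 (left_ne_zero_of_mul hx) p (Finset.mem_erase.2 ⟨hpq, hp⟩) ?_
      rw [(hm p hp hpq).1.e2pi hpx, sub_self])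
  have hfac : ∀ (l : LatB q.2) (p : Rd d × Bas d),
      1 - e2pi (q.1 + (l : Rd d) - p.1) (m p) = 1 - e2pi (q.1 - p.1) (m p) * chiL q.2 (QuotientAddGroup.mk (m p)) l := by
    intro l p
    rw [chiL_mk, ← e2pi_add_left]; congr 2; abel
  simp only [hfac] at hT
  obtain ⟨P, ⟨t, ht⟩, hP⟩ := chi_div (chiSys_L q.2) (s.erase q) (fun p => e2pi (q.1 - p.1) (m p))
    (fun p => QuotientAddGroup.mk (m p)) (by
      intro p hp
      rw [Finset.mem_erase] at hp
      refine ⟨e2pi_norm _ _, ?_⟩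
      rcases (hm p hp.2 hp.1).2 with h1 | ⟨h1, h2⟩
      · left
        intro N hN h0
        obtain ⟨l, hl, hne⟩ := h1 N hN
        rw [← QuotientAddGroup.mk_nsmul, QuotientAddGroup.eq_zero_iff, mem_DualB] at h0
        obtain ⟨n, hn⟩ := h0 l hl
        rw [← Nat.cast_smul_eq_nsmul ℝ, inner_smul_right] at hn
        exact hne n hn
      · right
        refine ⟨(QuotientAddGroup.eq_zero_iff _).2 (mem_DualB.2 h1), fun h3 => ?_⟩
        obtain ⟨n, hn⟩ := (e2pi_eq_one_iff _ _).1 h3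
        exact h2 n hn)
    (fun l => a (q.1 + l)) C (fun l => hC _) hT
  refine ⟨_, isTrigPoly_of_sum t.support (fun k => t k * e2pi (-q.1) (Quotient.out k)) (fun k => Quotient.out k), ?_⟩
  intro x hx hn
  have e := hP ⟨x - q.1, hx⟩
  rw [mul_eq_zero, or_iff_right, sub_eq_zero, ht] at e
  · simp only [add_sub_cancel] at e
    rw [e]
    refine Finset.sum_congr rfl fun k _ => ?_
    rw [chiL, mul_assoc, ← e2pi_add_left, neg_add_eq_sub]
  · rw [Finset.prod_eq_zero_iff]
    rintro ⟨p, hp, h0⟩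
    rw [Finset.mem_erase] at hp
    rw [← hfac, sub_eq_zero] at h0
    simp only [add_sub_cancel] at h0
    obtain ⟨n, hn'⟩ := (e2pi_eq_one_iff _ _).1 h0.symm
    exact hn p hp.2 hp.1 n hn'

lemma hyperplane {d : ℕ} (β : Bas d) (m : Rd d)
    (hinf : ∀ N : ℕ, 0 < N → ∃ l ∈ LatB β, ∀ n : ℤ, (N:ℝ) * ⟪l, m⟫ ≠ n) :
    ∃ w : Rd d, w ≠ 0 ∧ ∀ l ∈ LatB β, (∃ n : ℤ, ⟪l, m⟫ = (n:ℝ)) → ⟪l, w⟫ = 0 := by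
  classical
  let S : Set (Rd d) := {l | l ∈ LatB β ∧ ∃ n : ℤ, ⟪l, m⟫ = (n:ℝ)}
  by_cases hW : Submodule.span ℝ S = ⊤
  · exfalso
    let e := Module.Basis.ofSpan hW.ge
    have hfin := Module.Finite.finite_basis e
    have ft := Fintype.ofFinite
      ((linearIndepOn_empty ℝ (id : Rd d → Rd d)).extend (empty_subset S))
    have hcard : Fintype.card ((linearIndepOn_empty ℝ (id : Rd d → Rd d)).extend (empty_subset S)) = d := by
      rw [← Module.finrank_eq_card_basis e]; simp
    let γ : Bas d := e.reindex (Fintype.equivFinOfCardEq hcard)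
    have hγ : ∀ j, γ j ∈ S := by
      intro j
      apply Module.Basis.ofSpan_subset hW.ge
      simp [γ, e]
    have h1 : ∀ i j, ∃ n : ℤ, β.repr (γ j) i = n := fun i j => mem_LatB.1 (hγ j).1 i
    choose A hA using h1
    have h2 : ∀ j, ∃ n : ℤ, ⟪γ j, m⟫ = (n:ℝ) := fun j => (hγ j).2
    choose n hn using h2
    let M : Matrix (Fin d) (Fin d) ℤ := Matrix.of fun j i => A i j
    have hdet : M.det ≠ 0 := by
      intro h0
      have h3 : ((Int.castRingHom ℝ) M.det) = β.det γ := by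
        rw [RingHom.map_det, Module.Basis.det_apply, ← Matrix.det_transpose]
        congr 1
        ext i j
        simp [M, Module.Basis.toMatrix_apply, hA]
      have h4 := (β.isUnit_det γ).ne_zero
      rw [← h3, h0] at h4
      simp at h4
    let y : Fin d → ℝ := fun i => ⟪β i, m⟫
    have hy : (M.map (Int.cast : ℤ → ℝ)).mulVec y = fun j => (n j : ℝ) := by
      ext j
      rw [← hn, ← β.sum_repr (γ j), sum_inner]
      simp only [Matrix.mulVec, dotProduct, real_inner_smul_left, M, Matrix.map_apply, Matrix.of_apply, hA, y]
    have hy2 : ∀ i, ((M.det : ℤ) : ℝ) * y i = ((M.adjugate.mulVec n i : ℤ) : ℝ) := by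
      intro i
      have h5 : (M.map (Int.cast : ℤ → ℝ)).adjugate.mulVec ((M.map (Int.cast : ℤ → ℝ)).mulVec y) =
          (M.map (Int.cast : ℤ → ℝ)).det • y := by
        rw [Matrix.mulVec_mulVec, Matrix.adjugate_mul, Matrix.smul_mulVec, Matrix.one_mulVec]
      rw [hy] at h5
      have h6 : (M.map (Int.cast : ℤ → ℝ)).det = (M.det : ℝ) := (RingHom.map_det (Int.castRingHom ℝ) M).symm
      have h7 : (M.map (Int.cast : ℤ → ℝ)).adjugate = M.adjugate.map (Int.cast : ℤ → ℝ) :=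
        (RingHom.map_adjugate (Int.castRingHom ℝ) M).symm
      rw [h6, h7] at h5
      have h8 := congrFun h5 i
      simp only [Pi.smul_apply, smul_eq_mul] at h8
      rw [← h8]
      simp [Matrix.mulVec, dotProduct]
    have hD : InDual β (((M.det : ℤ) : ℝ) • m) := inDual_of_basis fun i =>
      ⟨_, by rw [inner_smul_right]; exact hy2 i⟩
    obtain ⟨l, hl, hne⟩ := hinf M.det.natAbs (Int.natAbs_pos.2 hdet)
    obtain ⟨k, hk⟩ := hD l hl
    rw [inner_smul_right] at hk
    clear hy2 hD hdet hy
    generalize M.det = D at hk hne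
    rcases Int.natAbs_eq D with h | h
    · refine hne k ?_
      rw [h] at hk; rw [Int.cast_natCast] at hk; exact hk
    · refine hne (-k) ?_
      rw [h, Int.cast_neg, Int.cast_natCast] at hk; rw [Int.cast_neg]; linarith
  · have hW' : (Submodule.span ℝ S)ᗮ ≠ ⊥ := fun h => hW (Submodule.orthogonal_eq_bot_iff.1 h)
    obtain ⟨w, hw, hw0⟩ := Submodule.exists_mem_ne_zero_of_ne_bot hW'
    exact ⟨w, hw0, fun l hl hn => (Submodule.mem_orthogonal _ _).1 hw l (Submodule.subset_span ⟨hl, hn⟩)⟩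

def APS {d : ℕ} (h : Rd d → ℂ) : Prop :=
  ∀ t : ℕ → Rd d, ∃ k : Rd d → ℂ, ∀ ε > (0:ℝ), ∀ᶠ n in (hyperfilter ℕ : Filter ℕ), ∀ y, ‖h (y + t n) - k y‖ < ε

lemma APS.add {d : ℕ} {h h' : Rd d → ℂ} (H : APS h) (H' : APS h') : APS (fun y => h y + h' y) := by
  intro t
  obtain ⟨k, hk⟩ := H t
  obtain ⟨k', hk'⟩ := H' t
  refine ⟨fun y => k y + k' y, fun ε hε => ?_⟩
  filter_upwards [hk (ε/2) (by positivity), hk' (ε/2) (by positivity)] with n h1 h2 y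
  calc _ = ‖(h (y + t n) - k y) + (h' (y + t n) - k' y)‖ := by congr 1; ring
    _ < ε := (norm_add_le _ _).trans_lt (by linarith [h1 y, h2 y])

lemma APS.zero {d : ℕ} : APS (fun _ : Rd d => (0:ℂ)) := fun t => ⟨fun _ => 0, fun ε hε => by simp [hε]⟩

lemma APS.smul {d : ℕ} {h : Rd d → ℂ} (H : APS h) (c : ℂ) : APS (fun y => c * h y) := by
  intro t
  obtain ⟨k, hk⟩ := H t
  refine ⟨fun y => c * k y, fun ε hε => ?_⟩
  filter_upwards [hk (ε/(‖c‖ + 1)) (by positivity)] with n h1 y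
  rw [← mul_sub, norm_mul]
  have := h1 y
  rw [lt_div_iff₀ (by positivity)] at this
  nlinarith [norm_nonneg c, norm_nonneg (h (y + t n) - k y)]

lemma APS.sum {d : ℕ} {ι : Type*} (A : Finset ι) (h : ι → Rd d → ℂ) (H : ∀ i ∈ A, APS (h i)) :
    APS (fun y => ∑ i ∈ A, h i y) := by
  classical
  induction A using Finset.induction_on with
  | empty => simpa using APS.zero
  | insert i A hi ih =>
    simp_rw [Finset.sum_insert hi]
    exact (H i (Finset.mem_insert_self _ _)).add (ih fun j hj => H j (Finset.mem_insert_of_mem hj))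

lemma APS.series {d : ℕ} (g : Rd d → ℂ) (hg : Summable fun γ => ‖g γ‖) :
    APS (fun y => ∑' γ, g γ * e2pi y γ) := by
  intro t
  have := fun γ => ultra_bdd (hyperfilter ℕ) (fun n => e2pi (t n) γ) 1 (fun n => (e2pi_norm _ _).le)
  choose c hc hc1 using this
  have hlim : Tendsto (fun n => ∑' γ, ‖g γ‖ * ‖e2pi (t n) γ - c γ‖) (hyperfilter ℕ : Filter ℕ) (𝓝 (∑' _ : Rd d, (0:ℝ))) := by
    refine tendsto_tsum_of_dominated_convergence (bound := fun γ => ‖g γ‖ * 2) (hg.mul_right 2) (fun γ => ?_)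
      (Eventually.of_forall fun n γ => ?_)
    · have := ((hc γ).sub_const (c γ)).norm.const_mul ‖g γ‖
      simpa using this
    · rw [Real.norm_of_nonneg (by positivity)]
      gcongr
      refine (norm_sub_le _ _).trans ?_
      rw [e2pi_norm]; linarith [hc1 γ]
  rw [tsum_zero] at hlim
  have hs1 : ∀ z : Rd d, Summable fun γ => g γ * e2pi z γ := fun z =>
    Summable.of_norm (hg.congr fun γ => by rw [norm_mul, e2pi_norm, mul_one])
  have hs2 : ∀ z : Rd d, Summable fun γ => g γ * (e2pi z γ * c γ) := fun z =>
    Summable.of_norm (Summable.of_nonneg_of_le (fun γ => norm_nonneg _) (fun γ => by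
      rw [norm_mul, norm_mul, e2pi_norm, one_mul]
      exact mul_le_of_le_one_right (norm_nonneg _) (hc1 γ)) hg)
  refine ⟨fun y => ∑' γ, g γ * (e2pi y γ * c γ), fun ε hε => ?_⟩
  filter_upwards [hlim.eventually_lt_const hε] with n hn y
  refine lt_of_le_of_lt ?_ hn
  rw [← (hs1 _).tsum_sub (hs2 y)]
  have he : ∀ γ, ‖g γ * e2pi (y + t n) γ - g γ * (e2pi y γ * c γ)‖ = ‖g γ‖ * ‖e2pi (t n) γ - c γ‖ := by
    intro γ
    rw [e2pi_add_left, ← mul_sub, ← mul_sub, norm_mul, norm_mul, e2pi_norm, one_mul]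
  refine (norm_tsum_le_tsum_norm ?_).trans (le_of_eq (tsum_congr he))
  simp_rw [he]
  refine Summable.of_nonneg_of_le (fun γ => by positivity) (fun γ => ?_) (hg.mul_right 2)
  gcongr
  refine (norm_sub_le _ _).trans ?_
  rw [e2pi_norm]; linarith [hc1 γ]

lemma fund_lat {d : ℕ} (β : Bas d) : ∃ r : ℝ, 0 ≤ r ∧ ∀ x : Rd d, ∃ l ∈ LatB β, ‖x - l‖ ≤ r := by
  refine ⟨∑ i, ‖β i‖, by positivity, fun x => ⟨ZSpan.floor β x, (ZSpan.floor β x).2, ?_⟩⟩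
  rw [← ZSpan.fract_apply]
  exact ZSpan.norm_fract_le β x

lemma APS.quasi {d : ℕ} (β : Bas d) (ω : Rd d) (h : Rd d → ℂ) (hc : Continuous h)
    (hq : ∀ l ∈ LatB β, ∀ y, h (y + l) = e2pi l ω * h y) : APS h := by
  obtain ⟨r, hr0, hr⟩ := fund_lat β
  have hK : IsCompact (closedBall (0 : Rd d) (2 * r)) := isCompact_closedBall _ _
  have hn : ∀ l ∈ LatB β, ∀ y, h y = e2pi l ω * h (y - l) := by
    intro l hl y
    rw [← hq l hl, sub_add_cancel]
  obtain ⟨C, hC⟩ := hK.exists_bound_of_continuousOn hc.continuousOn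
  have hbd : ∀ y, ‖h y‖ ≤ C := by
    intro y
    obtain ⟨l, hl, hle⟩ := hr y
    rw [hn l hl, norm_mul, e2pi_norm, one_mul]
    exact hC _ (by rw [mem_closedBall_zero_iff]; linarith)
  have huc := hK.uniformContinuousOn_of_continuous hc.continuousOn
  rw [Metric.uniformContinuousOn_iff] at huc
  intro t
  choose l hl hlr using fun n => hr (t n)
  obtain ⟨c, hcl, hc1⟩ := ultra_bdd (hyperfilter ℕ) (fun n => e2pi (l n) ω) 1 (fun n => (e2pi_norm _ _).le)
  obtain ⟨f0, hf0, hf⟩ := (isCompact_closedBall (0 : Rd d) r).ultrafilter_le_nhds'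
    ((hyperfilter ℕ).map fun n => t n - l n) (by
      change ∀ᶠ n in (hyperfilter ℕ : Filter ℕ), _
      exact Eventually.of_forall fun n => by simpa using hlr n)
  have hf' : Tendsto (fun n => t n - l n) (hyperfilter ℕ : Filter ℕ) (𝓝 f0) := hf
  have hC0 : 0 ≤ C := (norm_nonneg _).trans (hbd 0)
  refine ⟨fun y => c * h (y + f0), fun ε hε => ?_⟩
  obtain ⟨δ, hδ, hu⟩ := huc (ε/2) (by positivity)
  have e1 := (Metric.tendsto_nhds.1 hf') δ hδ
  have e2 := (Metric.tendsto_nhds.1 hcl) (ε/2/(C+1)) (by positivity)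
  filter_upwards [e1, e2] with n h1 h2 y
  obtain ⟨l', hl', hle⟩ := hr y
  have a1 : h (y + t n) = e2pi (l n) ω * h (y + (t n - l n)) := by
    rw [hn (l n) (hl n)]; congr 2; abel
  have a2 : ‖h (y + (t n - l n)) - h (y + f0)‖ < ε/2 := by
    rw [hn l' hl' (y + (t n - l n)), hn l' hl' (y + f0), ← mul_sub, norm_mul, e2pi_norm, one_mul, ← dist_eq_norm]
    apply hu
    · rw [mem_closedBall_zero_iff, show y + (t n - l n) - l' = (y - l') + (t n - l n) by abel]
      exact (norm_add_le _ _).trans (by linarith [hlr n])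
    · rw [mem_closedBall_zero_iff, show y + f0 - l' = (y - l') + f0 by abel]
      rw [mem_closedBall_zero_iff] at hf0
      exact (norm_add_le _ _).trans (by linarith)
    · rw [dist_sub_right, dist_add_left]; exact h1
  rw [a1, show e2pi (l n) ω * h (y + (t n - l n)) - c * h (y + f0) =
    e2pi (l n) ω * (h (y + (t n - l n)) - h (y + f0)) + (e2pi (l n) ω - c) * h (y + f0) by ring]
  refine (norm_add_le _ _).trans_lt ?_
  rw [norm_mul, norm_mul, e2pi_norm, one_mul]
  rw [dist_eq_norm, lt_div_iff₀ (by positivity)] at h2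
  nlinarith [hbd (y + f0), norm_nonneg (e2pi (l n) ω - c), norm_nonneg (h (y + f0))]

lemma supp_smooth {d : ℕ} (ψ : SchwartzMap (Rd d) ℂ) (h1 : ∀ y, 1 ≤ ‖y‖ → ψ y = 0) (δ : ℝ) (hδ : 0 < δ)
    (x y : Rd d) (h : ψ (δ⁻¹ • (x - y)) ≠ 0) : dist x y < δ := by
  by_contra hno
  push Not at hno
  apply h (h1 _ _)
  rw [norm_smul, norm_inv, Real.norm_of_nonneg hδ.le, ← dist_eq_norm, inv_mul_eq_div, le_div_iff₀ hδ]
  linarith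

lemma smooth_finsupp {d : ℕ} (ψ : SchwartzMap (Rd d) ℂ) (h1 : ∀ y, 1 ≤ ‖y‖ → ψ y = 0) (δ : ℝ) (hδ : 0 < δ)
    (f : Rd d → ℂ) (hf : LocFinite {x | f x ≠ 0}) (y : Rd d) :
    Summable fun x => f x * ψ (δ⁻¹ • (x - y)) := by
  refine summable_of_hasFiniteSupport ((hf y δ).subset fun x hx => ?_)
  exact ⟨left_ne_zero_of_mul hx, supp_smooth ψ h1 δ hδ x y (right_ne_zero_of_mul hx)⟩

lemma smooth_cont {d : ℕ} (ψ : SchwartzMap (Rd d) ℂ) (h1 : ∀ y, 1 ≤ ‖y‖ → ψ y = 0) (δ : ℝ) (hδ : 0 < δ)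
    (f : Rd d → ℂ) (hf : LocFinite {x | f x ≠ 0}) :
    Continuous fun y => ∑' x, f x * ψ (δ⁻¹ • (x - y)) := by
  rw [continuous_iff_continuousAt]
  intro y0
  have hev : (fun y => ∑ x ∈ (hf y0 (1 + δ)).toFinset, f x * ψ (δ⁻¹ • (x - y))) =ᶠ[𝓝 y0]
      fun y => ∑' x, f x * ψ (δ⁻¹ • (x - y)) := by
    filter_upwards [ball_mem_nhds y0 one_pos] with y hy
    symm
    apply tsum_eq_sum
    intro x hx
    by_contra h0
    apply hx
    simp only [Finite.mem_toFinset]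
    refine ⟨left_ne_zero_of_mul h0, ?_⟩
    have := supp_smooth ψ h1 δ hδ x y (right_ne_zero_of_mul h0)
    rw [mem_ball] at hy ⊢
    linarith [dist_triangle x y y0]
  refine ContinuousAt.congr ?_ hev
  have := ψ.continuous
  fun_prop

lemma APS.comb {d : ℕ} (ψ : SchwartzMap (Rd d) ℂ) (h1 : ∀ y, 1 ≤ ‖y‖ → ψ y = 0) (δ : ℝ) (hδ : 0 < δ)
    (β : Bas d) (v : Rd d) (P : Rd d → ℂ) (hP : IsTrigPoly P) :
    APS (fun y => ∑' x, indicator {x | x - v ∈ LatB β} P x * ψ (δ⁻¹ • (x - y))) := by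
  classical
  obtain ⟨n, c, w, hw⟩ := hP
  have hlf : ∀ f : Rd d → ℂ, LocFinite {x | indicator {x | x - v ∈ LatB β} f x ≠ 0} := fun f =>
    (latB_locFinite β v).mono fun x hx => mem_of_indicator_ne_zero hx
  have hsingle : ∀ ω : Rd d, APS (fun y => ∑' x, indicator {x | x - v ∈ LatB β} (fun x => e2pi x ω) x * ψ (δ⁻¹ • (x - y))) := by
    intro ω
    refine APS.quasi β ω _ (smooth_cont ψ h1 δ hδ _ (hlf _)) fun l hl y => ?_
    rw [← tsum_mul_left, ← (Equiv.addRight l).tsum_eq]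
    refine tsum_congr fun x => ?_
    simp only [Equiv.coe_addRight, add_sub_add_right_eq_sub]
    rw [← mul_assoc]
    congr 1
    have hiff : (x + l - v ∈ LatB β) ↔ x - v ∈ LatB β := by
      rw [show x + l - v = (x - v) + l by abel]
      exact Submodule.add_mem_iff_left _ hl
    simp only [indicator_apply, mem_ofPred_eq, hiff]
    split_ifs
    · rw [e2pi_add_left]; ring
    · simp
  have := APS.sum Finset.univ _ (fun i _ => (hsingle (w i)).smul (c i))
  refine (congrArg APS (funext fun y => ?_)).mp this
  simp_rw [← tsum_mul_left]
  rw [← Summable.tsum_finsetSum fun i _ => (smooth_finsupp ψ h1 δ hδ _ (hlf _) y).mul_left _]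
  refine tsum_congr fun x => ?_
  simp only [indicator_apply]
  split_ifs
  · rw [hw, Finset.sum_mul]
    exact Finset.sum_congr rfl fun i _ => by ring
  · simp

theorem partE {d : ℕ} {a b : Rd d → ℂ} (h : FPair a b) (s : Finset (Rd d × Bas d))
    (hcov : ∀ x, a x ≠ 0 → ∃ p ∈ s, x - p.1 ∈ LatB p.2)
    (P : Rd d × Bas d → Rd d → ℂ) (hP : ∀ q ∈ s, IsTrigPoly (P q))
    (W : Set (Rd d × ℝ)) (hWf : W.Finite) (hW : ∀ p ∈ W, p.1 ≠ 0)
    (hR : ∀ x, a x ≠ ∑ q ∈ s, indicator {x | x - q.1 ∈ LatB q.2} (P q) x → ∃ p ∈ W, ⟪x, p.1⟫ = p.2) :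
    ∀ x, a x = ∑ q ∈ s, indicator {x | x - q.1 ∈ LatB q.2} (P q) x := by
  classical
  intro x₀
  obtain ⟨ψ, h0, h1, -⟩ := exists_bump d
  have hV : LocFinite {x | ∃ p ∈ s, x - p.1 ∈ LatB p.2} := by
    intro x r
    refine (s.finite_toSet.biUnion fun p _ => latB_locFinite p.2 p.1 x r).subset ?_
    rintro y ⟨⟨p, hp, hy⟩, hyb⟩
    exact mem_biUnion hp ⟨hy, hyb⟩
  set R : Rd d → ℂ := fun x => a x + ∑ q ∈ s, (-1) * indicator {x | x - q.1 ∈ LatB q.2} (P q) x with hRdef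
  have hR0 : ∀ x, R x = 0 ↔ a x = ∑ q ∈ s, indicator {x | x - q.1 ∈ LatB q.2} (P q) x := by
    intro x
    rw [hRdef]
    simp only
    rw [← Finset.mul_sum, neg_one_mul, ← sub_eq_add_neg, sub_eq_zero]
  have hRV : LocFinite {x | R x ≠ 0} := by
    refine hV.mono fun x hx => ?_
    by_contra hno
    apply hx
    rw [hR0, Finset.sum_eq_zero]
    · by_contra h2; exact hno (hcov x h2)
    · intro q hq
      apply indicator_of_notMem
      intro h2; exact hno ⟨q, hq, h2⟩
  obtain ⟨δ, hδ, hiso⟩ := hRV.isolated x₀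
  rw [← hR0, ← isolate (a := R) ψ h0 h1 δ hδ x₀ hiso]
  have hI : ∀ q : Rd d × Bas d, LocFinite {x | indicator {x | x - q.1 ∈ LatB q.2} (P q) x ≠ 0} := fun q =>
    (latB_locFinite q.2 q.1).mono fun x hx => mem_of_indicator_ne_zero hx
  have ha : LocFinite {x | a x ≠ 0} := hV.mono fun x hx => hcov x hx
  set G : Rd d → ℂ := fun y => ∑' x, R x * ψ (δ⁻¹ • (x - y)) with hG
  have hAP : APS G := by
    have h2 : APS (fun y => ∑' x, a x * ψ (δ⁻¹ • (x - y))) := by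
      have := APS.series (fun γ => b γ * Wt ψ δ γ) (h.summable_Wt ψ δ hδ)
      refine (congrArg APS (funext fun y => ?_)).mp this
      rw [h.key ψ δ hδ]
    have h3 := h2.add (APS.sum s _ fun q hq => (APS.comb ψ h1 δ hδ q.2 q.1 (P q) (hP q hq)).smul (-1))
    refine (congrArg APS (funext fun y => ?_)).mp h3
    simp only [hG, hRdef]
    simp_rw [← tsum_mul_left]
    have hs2 : ∀ q ∈ s, Summable fun x => (-1) * (indicator {x | x - q.1 ∈ LatB q.2} (P q) x * ψ (δ⁻¹ • (x - y))) :=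
      fun q _ => (smooth_finsupp ψ h1 δ hδ _ (hI q) y).mul_left (-1)
    rw [← Summable.tsum_finsetSum hs2,
      ← (smooth_finsupp ψ h1 δ hδ a ha y).tsum_add (summable_sum hs2)]
    refine tsum_congr fun x => ?_
    rw [add_mul, Finset.sum_mul]
    congr 1
    exact Finset.sum_congr rfl fun q _ => by ring
  -- direction
  have : Finite W := hWf
  obtain ⟨f, hf⟩ := Module.exists_dual_forall_apply_ne_zero (K := ℝ) (fun p : W => p.1.1) (fun p => hW _ p.2)
  let u : Rd d := (InnerProductSpace.toDual ℝ (Rd d)).symm (LinearMap.toContinuousLinearMap f)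
  have hu : ∀ p ∈ W, ⟪u, p.1⟫ ≠ 0 := by
    intro p hp
    simp only [u]
    rw [InnerProductSpace.toDual_symm_apply]
    exact hf ⟨p, hp⟩
  obtain ⟨k, hk⟩ := hAP (fun n => (n:ℝ) • u)
  have hev : ∀ y, ∀ᶠ n : ℕ in atTop, G (y + (n:ℝ) • u) = 0 := by
    intro y
    have : ∀ᶠ n : ℕ in atTop, ∀ p ∈ W, |p.2| + δ * ‖p.1‖ + |⟪y, p.1⟫| < n * |⟪u, p.1⟫| := by
      rw [hWf.eventually_all]
      intro p hp
      have hpos : 0 < |⟪u, p.1⟫| := abs_pos.2 (hu p hp)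
      exact (tendsto_natCast_atTop_atTop.atTop_mul_const hpos).eventually_gt_atTop _
    filter_upwards [this] with n hn
    have hz : ∀ x, R x * ψ (δ⁻¹ • (x - (y + (n:ℝ) • u))) = 0 := by
      intro x
      by_contra hne
      obtain ⟨p, hp, hpx⟩ := hR x (fun h2 => left_ne_zero_of_mul hne ((hR0 x).2 h2))
      have hd := supp_smooth ψ h1 δ hδ _ _ (right_ne_zero_of_mul hne)
      have e1 : n * ⟪u, p.1⟫ = p.2 - ⟪x - (y + (n:ℝ) • u), p.1⟫ - ⟪y, p.1⟫ := by
        rw [inner_sub_left, inner_add_left, real_inner_smul_left, hpx]; ring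
      have e2 : |⟪x - (y + (n:ℝ) • u), p.1⟫| ≤ δ * ‖p.1‖ := by
        refine (abs_real_inner_le_norm _ _).trans ?_
        rw [← dist_eq_norm]
        gcongr
      have e3 := hn p hp
      rw [← abs_of_nonneg (Nat.cast_nonneg (α := ℝ) n), ← abs_mul, e1] at e3
      have e4 := abs_sub (p.2 - ⟪x - (y + (n:ℝ) • u), p.1⟫) ⟪y, p.1⟫
      have e5 := abs_sub p.2 ⟪x - (y + (n:ℝ) • u), p.1⟫
      linarith
    simp only [hG, hz, tsum_zero]
  have hk0 : ∀ y, k y = 0 := by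
    intro y
    rw [← norm_eq_zero]
    by_contra hne
    have hpos : 0 < ‖k y‖ := lt_of_le_of_ne (norm_nonneg _) (Ne.symm hne)
    obtain ⟨n, hn1, hn2⟩ := ((hk _ hpos).and (Nat.hyperfilter_le_atTop (hev y))).exists
    have := hn1 y
    rw [hn2, zero_sub, norm_neg] at this
    exact lt_irrefl _ this
  change G x₀ = 0
  rw [← norm_eq_zero]
  by_contra hne
  have hpos : 0 < ‖G x₀‖ := lt_of_le_of_ne (norm_nonneg _) (Ne.symm hne)
  obtain ⟨n, hn⟩ := (hk _ hpos).exists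
  have := hn (x₀ - (n:ℝ) • u)
  rw [hk0, sub_zero, sub_add_cancel] at this
  exact lt_irrefl _ this

theorem final_comb {d : ℕ} {a b : Rd d → ℂ} (h : FPair a b) (hb : LocFinite {x | b x ≠ 0}) (C : ℝ)
    (hC : ∀ x, ‖a x‖ ≤ C) (hJ : InJ {x | a x ≠ 0}) :
    ∃ (s : Finset (Rd d × Bas d)) (P : Rd d × Bas d → Rd d → ℂ), (∀ q ∈ s, IsTrigPoly (P q)) ∧
      ∀ x, a x = ∑ q ∈ s, indicator {x | x - q.1 ∈ LatB q.2} (P q) x := by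
  classical
  obtain ⟨s, hcov, hgood⟩ := exists_cover hJ
  have hcov' : ∀ x, a x ≠ 0 → ∃ p ∈ s, x - p.1 ∈ LatB p.2 := fun x hx => hcov x hx
  choose! m hm using hgood
  have hD := fun q (hq : q ∈ s) => partD h hb C hC s hcov' q (fun p => m p q) (fun p hp hne => hm p hp q hq hne)
  choose! P hP hPa using hD
  have hw : ∀ p q : Rd d × Bas d, (∀ N : ℕ, 0 < N → ∃ l ∈ LatB q.2, ∀ n : ℤ, (N:ℝ) * ⟪l, m p q⟫ ≠ n) →
      ∃ wc : Rd d × ℝ, wc.1 ≠ 0 ∧ ∀ x, x - q.1 ∈ LatB q.2 → (∃ n : ℤ, ⟪x - p.1, m p q⟫ = n) → ⟪x, wc.1⟫ = wc.2 := by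
    intro p q hinf
    obtain ⟨w, hw0, hw⟩ := hyperplane q.2 (m p q) hinf
    by_cases hex : ∃ x₁, x₁ - q.1 ∈ LatB q.2 ∧ ∃ n : ℤ, ⟪x₁ - p.1, m p q⟫ = n
    · obtain ⟨x₁, h1, n₁, hn₁⟩ := hex
      refine ⟨(w, ⟪x₁, w⟫), hw0, ?_⟩
      rintro x hx ⟨n, hn⟩
      have h2 : x - x₁ ∈ LatB q.2 := by
        have := (LatB q.2).sub_mem hx h1
        simpa using this
      have h3 := hw _ h2 ⟨n - n₁, by
        rw [show x - x₁ = (x - p.1) - (x₁ - p.1) by abel, inner_sub_left, hn, hn₁]; push_cast; rfl⟩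
      rw [inner_sub_left, sub_eq_zero] at h3
      exact h3
    · exact ⟨(w, 0), hw0, fun x hx hn => absurd ⟨x, hx, hn⟩ hex⟩
  choose! wc hwc0 hwc using hw
  refine ⟨s, P, hP, partE h s hcov' P hP
    {y | ∃ pq ∈ (s : Set (Rd d × Bas d)) ×ˢ (s : Set (Rd d × Bas d)),
      (∀ N : ℕ, 0 < N → ∃ l ∈ LatB pq.2.2, ∀ n : ℤ, (N:ℝ) * ⟪l, m pq.1 pq.2⟫ ≠ n) ∧ wc pq.1 pq.2 = y} ?_ ?_ ?_⟩
  · refine ((s.finite_toSet.prod s.finite_toSet).image fun pq => wc pq.1 pq.2).subset ?_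
    rintro y ⟨pq, h1, -, rfl⟩
    exact ⟨pq, h1, rfl⟩
  · rintro y ⟨pq, h1, h2, rfl⟩
    exact hwc0 _ _ h2
  · intro x hx
    have hcx : ∃ q ∈ s, x - q.1 ∈ LatB q.2 := by
      by_contra hno
      apply hx
      rw [Finset.sum_eq_zero]
      · by_contra h2; exact hno (hcov x h2)
      · intro q hq
        apply indicator_of_notMem
        intro h2; exact hno ⟨q, hq, h2⟩
    obtain ⟨q, hq, hxq⟩ := hcx
    by_cases hall : ∀ p ∈ s, p ≠ q → ∀ n : ℤ, ⟪x - p.1, m p q⟫ ≠ n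
    · exfalso
      apply hx
      rw [Finset.sum_eq_single q, indicator_of_mem (by exact hxq), hPa q hq x hxq hall]
      · intro p hp hpq
        apply indicator_of_notMem
        intro h2
        obtain ⟨n, hn⟩ := (hm p hp q hq hpq).1 _ h2
        exact hall p hp hpq n hn
      · intro h2; exact absurd hq h2
    · push Not at hall
      obtain ⟨p, hp, hpq, n, hn⟩ := hall
      rcases (hm p hp q hq hpq).2 with h1 | ⟨h1, h2⟩
      · exact ⟨wc p q, ⟨(p, q), ⟨hp, hq⟩, h1, rfl⟩, hwc p q h1 x hxq ⟨n, hn⟩⟩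
      · exfalso
        obtain ⟨k, hk⟩ := h1 _ hxq
        refine h2 (n - k) ?_
        rw [show q.1 - p.1 = (x - p.1) - (x - q.1) by abel, inner_sub_left, hn, hk]; push_cast; rfl

end Helpers

/-- (Second part of Theorem 9.) Under the hypotheses of
Statement 3, if moreover the union of the supports is uniformly discrete, then
every `μ_s` with locally finite spectrum is a generalized lattice Dirac comb
`Σ_j Σ_{λ ∈ λ_j + L_j} P_j(λ) δ_λ` with full-rank lattices `L_j` and
trigonometric polynomials `P_j`. -/
theorem statement4 {d S : ℕ} (a : Fin S → Rd d → ℂ) (f : Fin S → TemperedDist d)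
    (b : Fin S → Rd d → ℂ)
    (hrep : ∀ s, RepMeasure (a s) (f s))
    (hud : ∀ s, UniformlyDiscrete {x | a s x ≠ 0})
    (hrepF : ∀ s, RepMeasure (b s) (fourierTD (f s)))
    (hvar : ∀ s, ∃ C r₀ : ℝ, ∀ r ≥ r₀, ballVar (b s) r ≤ ENNReal.ofReal (C * r ^ d))
    (hinf : ∃ ε > (0:ℝ), ∀ x : Rd d, (∃ s, a s x ≠ 0) → ε ≤ ∑ s, ‖a s x‖)
    (hU : UniformlyDiscrete (⋃ s, {x | a s x ≠ 0})) :
    ∀ s, LocFinite {x | b s x ≠ 0} →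
      ∃ (J : ℕ) (L : Fin J → Set (Rd d)) (v : Fin J → Rd d) (P : Fin J → Rd d → ℂ),
        (∀ j, IsFullRankLattice (L j)) ∧ (∀ j, IsTrigPoly (P j)) ∧
        ∀ x : Rd d, a s x = ∑ j, Set.indicator ((fun y => v j + y) '' (L j)) (P j) x := by
  classical
  intro s hbs
  have hF : ∀ s, FPair (a s) (b s) := fun s => FPair.of_rep (hrep s) (hrepF s)
  obtain ⟨H, _, _, _, U, hUS, ξ, η, hcyc, ha⟩ := exists_model a b hF hvar hU
  have hJ : InJ (⋃ s, {x | a s x ≠ 0}) := USys.cover hUS ξ η hcyc a ha hinf hU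
  have hJs : InJ {x | a s x ≠ 0} := InJ.mono (subset_iUnion (fun s => {x | a s x ≠ 0}) s) hJ
  have hC : ∀ x, ‖a s x‖ ≤ ‖η s‖ * ‖ξ‖ := by
    intro x
    rw [ha s x]
    calc _ ≤ ‖η s‖ * ‖U x ξ‖ := norm_inner_le_norm _ _
      _ = _ := by rw [hUS.nrm]
  obtain ⟨t, P, hP, hsum⟩ := final_comb (hF s) hbs _ hC hJs
  let e := t.equivFin
  refine ⟨t.card, fun j => (LatB (e.symm j).1.2 : Set (Rd d)), fun j => (e.symm j).1.1,
    fun j => P (e.symm j).1, fun j => Lat_isFullRank _, fun j => hP _ (e.symm j).2, fun x => ?_⟩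
  have hset : ∀ q : Rd d × Bas d, (fun y => q.1 + y) '' (LatB q.2 : Set (Rd d))
      = {x | x - q.1 ∈ LatB q.2} := by
    intro q
    ext z
    constructor
    · rintro ⟨y, hy, rfl⟩
      simpa using hy
    · intro hz
      exact ⟨z - q.1, hz, by simp⟩
  rw [hsum x, ← Finset.sum_coe_sort,
    ← Equiv.sum_comp e.symm (fun q : t => indicator {x | x - q.1.1 ∈ LatB q.1.2} (P q.1) x)]
  refine Finset.sum_congr rfl fun j _ => ?_
  rw [hset (e.symm j).1]
end
end

section
/- If a tempered distribution f on ℝ^d has locally finite support Λ, then there exist K < ∞ (independent of λ) and complex numbers p_k(λ) such that f = Σ_{λ∈Λ} Σ_{‖k‖≤K} p_k(λ) D^k δ_λ, with k ∈ (ℕ∪{0})^d. -/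
open MeasureTheory SchwartzMap Metric Set
open scoped Pointwise RealInnerProductSpace ENNReal NNReal

noncomputable section

section aux7
open LineDeriv Filter Topology
open scoped ContDiff

def PD7 {d : ℕ} (l : List (Fin d)) (φ : SchwartzMap (Rd d) ℂ) : SchwartzMap (Rd d) ℂ :=
  l.foldr (fun i g => ∂_{(EuclideanSpace.single i (1:ℝ) : Rd d)} g) φ

theorem lineDeriv_comm7 {d : ℕ} (v w : Rd d) (φ : SchwartzMap (Rd d) ℂ) :
    (∂_{v} (∂_{w} φ : SchwartzMap (Rd d) ℂ) : SchwartzMap (Rd d) ℂ)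
      = ∂_{w} (∂_{v} φ : SchwartzMap (Rd d) ℂ) := by
  have key : ∀ (v w : Rd d) (x : Rd d),
      (∂_{v} (∂_{w} φ : SchwartzMap (Rd d) ℂ) : SchwartzMap (Rd d) ℂ) x
        = fderiv ℝ (fderiv ℝ φ) x v w := by
    intro v w x
    rw [SchwartzMap.lineDerivOp_apply_eq_fderiv]
    have h1 : (⇑(∂_{w} φ : SchwartzMap (Rd d) ℂ)) = fun y => fderiv ℝ φ y w := by
      ext y; rfl
    rw [h1]
    have h2 : DifferentiableAt ℝ (fderiv ℝ φ) x := by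
      have : ContDiff ℝ 1 (fderiv ℝ φ) := (φ.smooth 2).fderiv_right (by norm_num)
      exact (this.differentiable (by norm_num)) x
    rw [fderiv_clm_apply h2 (differentiableAt_const _)]
    simp
  ext x
  rw [key, key]
  exact ((φ.smooth 2).contDiffAt.isSymmSndFDerivAt (by simp)) v w

theorem PD7_perm {d : ℕ} {l₁ l₂ : List (Fin d)} (h : l₁.Perm l₂) (φ : SchwartzMap (Rd d) ℂ) :
    PD7 l₁ φ = PD7 l₂ φ := by
  unfold PD7
  refine h.foldr_eq' ?_ φ
  intro x _ y _ z
  exact lineDeriv_comm7 _ _ _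

theorem PD7_append {d : ℕ} (l₁ l₂ : List (Fin d)) (φ : SchwartzMap (Rd d) ℂ) :
    PD7 (l₁ ++ l₂) φ = PD7 l₁ (PD7 l₂ φ) := by
  simp [PD7]

theorem PD7_replicate {d : ℕ} (n : ℕ) (i : Fin d) (φ : SchwartzMap (Rd d) ℂ) :
    ⇑(PD7 (List.replicate n i) φ) = (pderiv' i)^[n] ⇑φ := by
  induction n with
  | zero => rfl
  | succ n ih =>
    rw [Function.iterate_succ_apply', ← ih, List.replicate_succ]
    rfl

theorem Dmulti_eq7 {d : ℕ} (k : Fin d → ℕ) (φ : SchwartzMap (Rd d) ℂ) :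
    Dmulti k ⇑φ = ⇑(PD7 ((List.finRange d).flatMap fun i => List.replicate (k i) i) φ) := by
  unfold Dmulti
  generalize List.finRange d = L
  induction L with
  | nil => rfl
  | cons a L ih =>
    simp only [List.map_cons, List.foldr_cons, List.flatMap_cons, PD7_append, PD7_replicate,
      Function.comp_apply]
    rw [ih]

theorem iter_eq7 {d n : ℕ} (l : Fin n → Fin d) (φ : SchwartzMap (Rd d) ℂ) (x : Rd d) :
    iteratedFDeriv ℝ n φ x (fun i => EuclideanSpace.single (l i) (1:ℝ))
      = PD7 (List.ofFn l) φ x := by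
  rw [← SchwartzMap.iteratedLineDerivOp_eq_iteratedFDeriv]
  congr 1
  induction n with
  | zero => simp [PD7]
  | succ n ih =>
    rw [iteratedLineDerivOp_succ_left, List.ofFn_succ]
    have := ih (fun i => l i.succ)
    simp only [PD7, List.foldr_cons] at this ⊢
    rw [← this]
    rfl

theorem list_perm7 {d : ℕ} (l : List (Fin d)) :
    l.Perm ((List.finRange d).flatMap fun i => List.replicate (l.count i) i) := by
  rw [List.perm_iff_count]
  intro a
  rw [List.count_flatMap]
  have : (List.map (List.count a ∘ fun i => List.replicate (List.count i l) i) (List.finRange d)).sum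
    = ∑ i : Fin d, if i = a then List.count i l else 0 := by
    rw [Fin.sum_univ_def]
    congr 1
    apply List.map_congr_left
    intro i _
    simp [List.count_replicate]
  rw [this]
  simp

theorem mem_mIdx7 {d K : ℕ} {k : Fin d → ℕ} : k ∈ mIdx d K ↔ ∑ i, k i ≤ K := by
  unfold mIdx
  simp only [Finset.mem_filter, Finset.mem_Iic, and_iff_right_iff_imp]
  intro h i
  exact (Finset.single_le_sum (f := k) (fun _ _ => Nat.zero_le _) (Finset.mem_univ i)).trans h

theorem iter_zero7 {d K : ℕ} (φ : SchwartzMap (Rd d) ℂ) (x : Rd d)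
    (h : ∀ k ∈ mIdx d K, Dmulti k ⇑φ x = 0) (n : ℕ) (hn : n ≤ K) :
    iteratedFDeriv ℝ n φ x = 0 := by
  apply ContinuousMultilinearMap.toMultilinearMap_injective
  apply Module.Basis.ext_multilinear (fun _ => (EuclideanSpace.basisFun (Fin d) ℝ).toBasis)
  intro v
  have h1 := iter_eq7 v φ x
  simp only [OrthonormalBasis.coe_toBasis, EuclideanSpace.basisFun_apply,
    ContinuousMultilinearMap.coe_coe]
  rw [h1, PD7_perm (list_perm7 (List.ofFn v)), ← Dmulti_eq7]
  have h2 := (list_perm7 (List.ofFn v)).length_eq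
  rw [h _ ?_]
  · simp
  · rw [mem_mIdx7]
    refine le_trans (le_of_eq ?_) hn
    rw [List.length_flatMap] at h2
    simp only [List.length_replicate, List.length_ofFn] at h2
    rw [Fin.sum_univ_def, ← h2]

theorem bound7 {d : ℕ} (f : TemperedDist d) :
    ∃ (C : ℝ) (K : ℕ), 0 ≤ C ∧ ∀ (φ : SchwartzMap (Rd d) ℂ) (M : ℝ), 0 ≤ M →
      (∀ k ≤ K, ∀ n ≤ K, ∀ x, ‖x‖ ^ k * ‖iteratedFDeriv ℝ n φ x‖ ≤ M) → ‖f φ‖ ≤ C * M := by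
  let q : Seminorm ℂ (SchwartzMap (Rd d) ℂ) := (normSeminorm ℂ ℂ).comp f.toLinearMap
  have hq : Continuous q := continuous_norm.comp f.continuous
  obtain ⟨s, C, -, h⟩ := Seminorm.bound_of_continuous
    (schwartz_withSeminorms ℂ (Rd d) ℂ) q hq
  refine ⟨C, s.sup (fun m => max m.1 m.2), C.2, fun φ M hM hb => ?_⟩
  have h1 : q φ ≤ (C • s.sup (schwartzSeminormFamily ℂ (Rd d) ℂ)) φ := h φ
  have h2 : (s.sup (schwartzSeminormFamily ℂ (Rd d) ℂ)) φ ≤ M := by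
    apply Seminorm.finset_sup_apply_le hM
    intro m hm
    have hm' := Finset.le_sup (f := fun m : ℕ × ℕ => max m.1 m.2) hm
    exact SchwartzMap.seminorm_le_bound ℂ m.1 m.2 φ hM
      (hb _ ((le_max_left _ _).trans hm') _ ((le_max_right _ _).trans hm'))
  calc ‖f φ‖ = q φ := rfl
    _ ≤ C * (s.sup (schwartzSeminormFamily ℂ (Rd d) ℂ)) φ := h1
    _ ≤ C * M := by gcongr

theorem vanish7 {d : ℕ} (f : TemperedDist d) (φ : SchwartzMap (Rd d) ℂ)
    (hc : HasCompactSupport φ) (hd : ∀ x ∈ tdSupport f, x ∉ tsupport φ) : f φ = 0 := by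
  have h1 : ∀ x : tsupport φ, ∃ U : Set (Rd d), IsOpen U ∧ (x : Rd d) ∈ U ∧
      ∀ ψ : SchwartzMap (Rd d) ℂ, HasCompactSupport ψ → tsupport ψ ⊆ U → f ψ = 0 := by
    intro x
    have : (x : Rd d) ∉ tdSupport f := fun h => hd _ h x.2
    simp only [tdSupport, mem_ofPred_eq, not_forall, not_exists, not_and, not_not] at this
    obtain ⟨U, hU, hxU, h⟩ := this
    exact ⟨U, hU, hxU, h⟩
  choose U hUo hxU hU using h1
  obtain ⟨t, ht⟩ := hc.isCompact.elim_finite_subcover U hUo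
    (fun x hx => mem_iUnion.2 ⟨⟨x, hx⟩, hxU _⟩)
  obtain ⟨ρ, hρ⟩ := SmoothPartitionOfUnity.exists_isSubordinate (modelWithCornersSelf ℝ (Rd d))
    (isClosed_tsupport φ) (fun i : t => U i) (fun i => hUo i) (by
      intro x hx
      obtain ⟨i, hi, hxi⟩ := mem_iUnion₂.1 (ht hx)
      exact mem_iUnion.2 ⟨⟨i, hi⟩, hxi⟩)
  have hs : ∀ i, ContDiff ℝ ∞ (fun x => (ρ i x : ℂ) * φ x) := fun i =>
    (Complex.ofRealCLM.contDiff.comp (ρ i).contMDiff.contDiff).mul (φ.smooth ⊤)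
  have hcs : ∀ i, HasCompactSupport (fun x => (ρ i x : ℂ) * φ x) := fun i => hc.mul_left
  have hsum : φ = ∑ i : t, (hcs i).toSchwartzMap (hs i) := by
    ext x
    rw [_root_.sum_apply]
    simp only [HasCompactSupport.toSchwartzMap_toFun]
    rw [← Finset.sum_mul]
    by_cases hx : x ∈ tsupport φ
    · have := ρ.sum_eq_one hx
      rw [finsum_eq_sum_of_fintype] at this
      rw [← Complex.ofReal_sum, this]; simp
    · rw [image_eq_zero_of_notMem_tsupport hx]; simp
  rw [hsum, map_sum]
  apply Finset.sum_eq_zero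
  intro i _
  refine hU i _ (hcs i) ?_
  refine Subset.trans ?_ (hρ i)
  refine (tsupport_mul_subset_left (f := fun x => (ρ i x : ℂ))).trans ?_
  apply closure_mono
  intro x hx
  simpa using hx

theorem vanish7' {d : ℕ} (f : TemperedDist d) (φ : SchwartzMap (Rd d) ℂ)
    (hc : HasCompactSupport φ) (hd : ∀ x ∈ tdSupport f, ∀ᶠ y in 𝓝 x, φ y = 0) : f φ = 0 :=
  vanish7 f φ hc fun x hx => notMem_tsupport_iff_eventuallyEq.2 (hd x hx)

theorem taylor7 {d K : ℕ} (φ : SchwartzMap (Rd d) ℂ) (a : Rd d)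
    (h : ∀ n ≤ K, iteratedFDeriv ℝ n φ a = 0) :
    ∃ M : ℝ, 0 ≤ M ∧ ∀ n ≤ K + 1, ∀ x, ‖iteratedFDeriv ℝ n φ x‖ ≤ M * ‖x - a‖ ^ (K + 1 - n) := by
  obtain ⟨M, hM0, hM⟩ := φ.decay 0 (K + 1)
  refine ⟨M, hM0.le, ?_⟩
  have key : ∀ m ≤ K + 1, ∀ x, ‖iteratedFDeriv ℝ (K + 1 - m) φ x‖ ≤ M * ‖x - a‖ ^ m := by
    intro m
    induction m with
    | zero => intro _ x; simpa using hM x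
    | succ m ih =>
      intro hm x
      have ih := ih (by omega)
      have hidx : K + 1 - m = (K + 1 - (m + 1)) + 1 := by omega
      rw [hidx] at ih
      set n := K + 1 - (m + 1) with hn
      have hdiff : Differentiable ℝ (iteratedFDeriv ℝ n φ) :=
        (φ.smooth ⊤).differentiable_iteratedFDeriv (mod_cast ENat.natCast_lt_top n)
      have := (convex_closedBall a ‖x - a‖).norm_image_sub_le_of_norm_fderiv_le (𝕜 := ℝ)
        (f := iteratedFDeriv ℝ n φ) (C := M * ‖x - a‖ ^ m) (x := a) (y := x)
        (fun y _ => hdiff y) (fun y hy => by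
          rw [norm_fderiv_iteratedFDeriv]
          refine (ih y).trans ?_
          have : ‖y - a‖ ≤ ‖x - a‖ := by simpa [dist_eq_norm] using hy
          gcongr) (by simp) (by simp [dist_eq_norm])
      rw [h n (by omega), sub_zero] at this
      rw [pow_succ, ← mul_assoc]; exact this
  intro n hn x
  have := key (K + 1 - n) (by omega) x
  rwa [show K + 1 - (K + 1 - n) = n by omega] at this

def bump7 (d : ℕ) : ContDiffBump (0 : Rd d) := ⟨1/2, 1, by norm_num, by norm_num⟩

def chi7 {d : ℕ} (a : Rd d) (ε : ℝ) : Rd d → ℂ := fun x => ((bump7 d (ε⁻¹ • (x - a)) : ℝ) : ℂ)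

theorem chi7_smooth {d : ℕ} (a : Rd d) (ε : ℝ) : ContDiff ℝ ∞ (chi7 a ε) := by
  unfold chi7
  refine Complex.ofRealCLM.contDiff.comp ((bump7 d).contDiff.comp ?_)
  fun_prop

theorem chi7_one {d : ℕ} (a : Rd d) {ε : ℝ} (hε : 0 < ε) : ∀ᶠ y in 𝓝 a, chi7 a ε y = 1 := by
  filter_upwards [ball_mem_nhds a (half_pos hε)] with y hy
  unfold chi7
  rw [(bump7 d).one_of_mem_closedBall]; · simp
  rw [mem_closedBall_zero_iff, norm_smul, norm_inv, Real.norm_of_nonneg hε.le]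
  rw [mem_ball, dist_eq_norm] at hy
  change _ ≤ (1/2 : ℝ)
  rw [inv_mul_le_iff₀ hε]; linarith

theorem chi7_zero {d : ℕ} (a : Rd d) {ε : ℝ} (hε : 0 < ε) {y : Rd d} (hy : ε ≤ dist y a) :
    chi7 a ε y = 0 := by
  unfold chi7
  rw [(bump7 d).zero_of_le_dist]; · simp
  rw [dist_zero_right, norm_smul, norm_inv, Real.norm_of_nonneg hε.le]
  rw [dist_eq_norm] at hy
  change (1 : ℝ) ≤ _
  rw [le_inv_mul_iff₀ hε]; linarith

theorem chi7_tsupport {d : ℕ} (a : Rd d) {ε : ℝ} (hε : 0 < ε) :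
    tsupport (chi7 a ε) ⊆ closedBall a ε := by
  apply closure_minimal _ isClosed_closedBall
  intro y hy
  by_contra h
  rw [mem_closedBall, not_le] at h
  exact hy (chi7_zero a hε h.le)

theorem chi7_compact {d : ℕ} (a : Rd d) {ε : ℝ} (hε : 0 < ε) :
    HasCompactSupport (chi7 a ε) :=
  HasCompactSupport.of_support_subset_isCompact (isCompact_closedBall a ε)
    (subset_closure.trans (chi7_tsupport a hε))

theorem chi7_temp {d : ℕ} (a : Rd d) {ε : ℝ} (hε : 0 < ε) :
    (chi7 a ε).HasTemperateGrowth := (chi7_compact a hε).hasTemperateGrowth (chi7_smooth a ε)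

theorem chi7_bound (d K : ℕ) : ∃ B : ℝ, 0 ≤ B ∧ ∀ (a : Rd d) (ε : ℝ), 0 < ε → ∀ n ≤ K, ∀ x,
    ‖iteratedFDeriv ℝ n (chi7 a ε) x‖ ≤ (ε⁻¹) ^ n * B := by
  let g : Rd d → ℂ := fun x => ((bump7 d x : ℝ) : ℂ)
  have hg : ContDiff ℝ ∞ g := Complex.ofRealCLM.contDiff.comp (bump7 d).contDiff
  have hgc : HasCompactSupport g := (bump7 d).hasCompactSupport.comp_left (g := Complex.ofReal) (by simp)
  let G := hgc.toSchwartzMap hg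
  choose C hC0 hC using fun n => G.decay 0 n
  refine ⟨∑ n ∈ Finset.range (K + 1), C n, Finset.sum_nonneg fun n _ => (hC0 n).le, ?_⟩
  intro a ε hε n hn x
  have h1 : chi7 a ε = fun x => (fun y => g (ε⁻¹ • y)) (x - a) := rfl
  rw [h1, iteratedFDeriv_comp_sub (f := fun y => g (ε⁻¹ • y)), iteratedFDeriv_comp_const_smul (i := n) _ (hg.of_le (mod_cast le_top))]
  rw [norm_smul, norm_pow, norm_inv, Real.norm_of_nonneg hε.le]
  gcongr
  have h2 := hC n (ε⁻¹ • (x - a))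
  simp only [pow_zero, one_mul] at h2
  exact h2.trans (Finset.single_le_sum (f := C) (fun n _ => (hC0 n).le)
    (Finset.mem_range.2 (by omega)))

theorem chi7_apply {d : ℕ} (a : Rd d) {ε : ℝ} (hε : 0 < ε) (φ : SchwartzMap (Rd d) ℂ) (x : Rd d) :
    SchwartzMap.smulLeftCLM ℂ (chi7 a ε) φ x = chi7 a ε x * φ x := by
  rw [SchwartzMap.smulLeftCLM_apply_apply (chi7_temp a hε)]; rfl

theorem core7 {d : ℕ} (f : TemperedDist d) {C : ℝ} {K : ℕ} (hC : 0 ≤ C)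
    (hb : ∀ (φ : SchwartzMap (Rd d) ℂ) (M : ℝ), 0 ≤ M →
      (∀ k ≤ K, ∀ n ≤ K, ∀ x, ‖x‖ ^ k * ‖iteratedFDeriv ℝ n φ x‖ ≤ M) → ‖f φ‖ ≤ C * M)
    (φ : SchwartzMap (Rd d) ℂ) (hc : HasCompactSupport φ) (a : Rd d)
    (hd : ∀ x ∈ tdSupport f, x ≠ a → ∀ᶠ y in 𝓝 x, φ y = 0)
    (h0 : ∀ n ≤ K, iteratedFDeriv ℝ n φ a = 0) : f φ = 0 := by
  obtain ⟨M, hM0, hM⟩ := taylor7 φ a h0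
  obtain ⟨B, hB0, hB⟩ := chi7_bound d K
  have est : ∀ ε : ℝ, 0 < ε → ε ≤ 1 →
      ‖f φ‖ ≤ (C * ((‖a‖ + 1) ^ K * (2 ^ K * (B * M)))) * ε := by
    intro ε hε hε1
    obtain ⟨ψ, hψv⟩ : ∃ ψ : SchwartzMap (Rd d) ℂ, ∀ x, ψ x = chi7 a ε x * φ x :=
      ⟨SchwartzMap.smulLeftCLM ℂ (chi7 a ε) φ, chi7_apply a hε φ⟩
    have hψf : ⇑ψ = fun x => chi7 a ε x • φ x := funext hψv
    have e1 : f (φ - ψ) = 0 := by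
      have hcc : HasCompactSupport ⇑(φ - ψ) := by
        refine hc.mono ?_
        intro y hy hy0
        apply hy
        rw [_root_.sub_apply, hψv, hy0]; simp
      apply vanish7' f _ hcc
      intro x hx
      by_cases hxa : x = a
      · subst hxa
        filter_upwards [chi7_one x hε] with y hy
        simp [hψv, hy]
      · filter_upwards [hd x hx hxa] with y hy
        simp [hψv, hy]
    rw [map_sub, sub_eq_zero] at e1
    rw [e1]
    have e2 := hb ψ ((‖a‖ + 1) ^ K * (2 ^ K * (B * M) * ε)) (by positivity) ?_
    · calc _ ≤ _ := e2
        _ = _ := by ring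
    intro k hk n hn x
    by_cases hx : x ∈ closedBall a ε
    · have hxa : ‖x - a‖ ≤ ε := by simpa [dist_eq_norm] using hx
      have hxn : ‖x‖ ≤ ‖a‖ + 1 := by
        have := norm_add_le (x - a) a
        rw [sub_add_cancel] at this
        linarith
      have hk' : ‖x‖ ^ k ≤ (‖a‖ + 1) ^ K :=
        (pow_le_pow_left₀ (norm_nonneg _) hxn k).trans
          (pow_le_pow_right₀ (by linarith [norm_nonneg a]) hk)
      refine mul_le_mul hk' ?_ (norm_nonneg _) (by positivity)
      rw [hψf]
      refine (norm_iteratedFDeriv_smul_le (chi7_smooth a ε) (φ.smooth ⊤) x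
        (mod_cast le_top)).trans ?_
      have term : ∀ i ∈ Finset.range (n + 1),
          (n.choose i : ℝ) * ‖iteratedFDeriv ℝ i (chi7 a ε) x‖ * ‖iteratedFDeriv ℝ (n - i) φ x‖
            ≤ (n.choose i : ℝ) * (B * M * ε) := by
        intro i hi
        have hi : i ≤ n := by simpa [Nat.lt_succ_iff] using hi
        rw [mul_assoc]
        refine mul_le_mul_of_nonneg_left ?_ (Nat.cast_nonneg _)
        calc _ ≤ ((ε⁻¹) ^ i * B) * (M * ε ^ (K + 1 - (n - i))) := by
              refine mul_le_mul (hB a ε hε i (by omega) x) ?_ (norm_nonneg _) (by positivity)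
              refine (hM (n - i) (by omega) x).trans ?_
              gcongr
          _ = B * M * ε ^ (K + 1 - n) := by
              rw [show K + 1 - (n - i) = i + (K + 1 - n) by omega, pow_add, inv_pow]
              field_simp
          _ ≤ B * M * ε := by
              gcongr
              exact pow_le_of_le_one hε.le hε1 (by omega)
      refine (Finset.sum_le_sum term).trans ?_
      rw [← Finset.sum_mul, ← Nat.cast_sum, Nat.sum_range_choose]
      push_cast
      rw [mul_assoc (2 ^ K)]
      gcongr
      norm_num
    · have : x ∉ tsupport ψ := by
        intro h
        rw [hψf] at h
        exact hx (chi7_tsupport a hε (tsupport_smul_subset_left _ _ h))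
      have h2 : iteratedFDeriv ℝ n ψ x = 0 := by
        by_contra h
        exact this (support_iteratedFDeriv_subset n h)
      rw [h2]; simp; positivity
  set D := C * ((‖a‖ + 1) ^ K * (2 ^ K * (B * M))) with hD
  have hlim : Tendsto (fun ε : ℝ => D * ε) (𝓝[>] 0) (𝓝 (D * 0)) :=
    (tendsto_id.const_mul D).mono_left nhdsWithin_le_nhds
  rw [mul_zero] at hlim
  have : ‖f φ‖ ≤ 0 := by
    refine ge_of_tendsto hlim ?_
    filter_upwards [Ioc_mem_nhdsGT (show (0:ℝ) < 1 by norm_num)] with ε hε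
    exact est ε hε.1 hε.2
  exact norm_le_zero_iff.1 this

theorem PD7_add {d : ℕ} (l : List (Fin d)) (φ ψ : SchwartzMap (Rd d) ℂ) :
    PD7 l (φ + ψ) = PD7 l φ + PD7 l ψ := by
  induction l with
  | nil => rfl
  | cons a l ih =>
    simp only [PD7, List.foldr_cons] at ih ⊢
    rw [ih, lineDerivOp_add]

theorem PD7_smul {d : ℕ} (l : List (Fin d)) (c : ℂ) (φ : SchwartzMap (Rd d) ℂ) :
    PD7 l (c • φ) = c • PD7 l φ := by
  induction l with
  | nil => rfl
  | cons a l ih =>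
    simp only [PD7, List.foldr_cons] at ih ⊢
    rw [ih, lineDerivOp_smul]

def dkLin7 {d : ℕ} (k : Fin d → ℕ) (a : Rd d) : SchwartzMap (Rd d) ℂ →ₗ[ℂ] ℂ where
  toFun φ := dkDelta k a φ
  map_add' φ ψ := by
    simp only [dkDelta, Dmulti_eq7, PD7_add, _root_.add_apply, mul_add]
  map_smul' c φ := by
    simp only [dkDelta, Dmulti_eq7, PD7_smul, _root_.smul_apply, smul_eq_mul,
      RingHom.id_apply]
    ring

theorem isolated7 {d : ℕ} {A : Set (Rd d)} (h : LocFinite A) (a : Rd d) :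
    ∃ r > (0:ℝ), ∀ y ∈ A, y ≠ a → r < dist y a := by
  have hf : ((A ∩ ball a 1) \ {a}).Finite := (h a 1).subset sdiff_subset
  have ho : ((A ∩ ball a 1) \ {a})ᶜ ∈ 𝓝 a := hf.isClosed.isOpen_compl.mem_nhds (by simp)
  obtain ⟨r, hr, hb⟩ := Metric.mem_nhds_iff.1 ho
  refine ⟨min r 1 / 2, by positivity, fun y hy hya => ?_⟩
  by_contra hlt
  have hm : 0 < min r 1 := by positivity
  have h1 : dist y a < min r 1 := by linarith
  exact hb (mem_ball.2 (h1.trans_le (min_le_left _ _)))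
    ⟨⟨hy, mem_ball.2 (h1.trans_le (min_le_right _ _))⟩, hya⟩

theorem chi7_far {d : ℕ} (a : Rd d) {ε : ℝ} (hε : 0 < ε) {x : Rd d} (hx : ε < dist x a) :
    ∀ᶠ y in 𝓝 x, chi7 a ε y = 0 := by
  have : ∀ᶠ y in 𝓝 x, ε < dist y a :=
    (continuous_id.dist continuous_const).continuousAt.eventually (lt_mem_nhds hx)
  filter_upwards [this] with y hy
  exact chi7_zero a hε hy.le

theorem chi7_cs {d : ℕ} (a : Rd d) {ε : ℝ} (hε : 0 < ε) (φ : SchwartzMap (Rd d) ℂ) :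
    HasCompactSupport (SchwartzMap.smulLeftCLM ℂ (chi7 a ε) φ) := by
  have : ⇑(SchwartzMap.smulLeftCLM ℂ (chi7 a ε) φ) = chi7 a ε * ⇑φ :=
    funext (chi7_apply a hε φ)
  rw [this]
  exact (chi7_compact a hε).mul_right

theorem local7 {d : ℕ} (f : TemperedDist d) {C : ℝ} {K : ℕ} (hC : 0 ≤ C)
    (hb : ∀ (φ : SchwartzMap (Rd d) ℂ) (M : ℝ), 0 ≤ M →
      (∀ k ≤ K, ∀ n ≤ K, ∀ x, ‖x‖ ^ k * ‖iteratedFDeriv ℝ n φ x‖ ≤ M) → ‖f φ‖ ≤ C * M)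
    (a : Rd d) {r : ℝ} (hr : 0 < r) (hiso : ∀ y ∈ tdSupport f, y ≠ a → r < dist y a) :
    ∃ p : (Fin d → ℕ) → ℂ, ∀ φ : SchwartzMap (Rd d) ℂ,
      f (SchwartzMap.smulLeftCLM ℂ (chi7 a r) φ) = ∑ k ∈ mIdx d K, p k * dkDelta k a φ := by
  classical
  let T : SchwartzMap (Rd d) ℂ →ₗ[ℂ] ℂ :=
    (f.comp (SchwartzMap.smulLeftCLM ℂ (chi7 a r))).toLinearMap
  have hT : ∀ φ, T φ = f (SchwartzMap.smulLeftCLM ℂ (chi7 a r) φ) := fun _ => rfl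
  have hker : ⨅ i : mIdx d K, LinearMap.ker (dkLin7 (i : Fin d → ℕ) a) ≤ LinearMap.ker T := by
    intro φ hφ
    rw [Submodule.mem_iInf] at hφ
    rw [LinearMap.mem_ker, hT]
    refine core7 f hC hb _ (chi7_cs a hr φ) a ?_ ?_
    · intro x hx hxa
      filter_upwards [chi7_far a hr (hiso x hx hxa)] with y hy
      rw [chi7_apply a hr, hy, zero_mul]
    · intro n hn
      have he : ⇑(SchwartzMap.smulLeftCLM ℂ (chi7 a r) φ) =ᶠ[𝓝 a] ⇑φ := by
        filter_upwards [chi7_one a hr] with y hy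
        rw [chi7_apply a hr, hy, one_mul]
      rw [(Filter.EventuallyEq.iteratedFDeriv ℝ he n).eq_of_nhds]
      refine iter_zero7 (K := K) φ a ?_ n hn
      intro k hk
      have h1 : dkDelta k a φ = 0 := hφ ⟨k, hk⟩
      unfold dkDelta at h1
      exact (mul_eq_zero.1 h1).resolve_left (pow_ne_zero _ (by norm_num))
  have hsp := mem_span_of_iInf_ker_le_ker hker
  obtain ⟨c, hc⟩ := (Submodule.mem_span_range_iff_exists_fun ℂ).1 hsp
  refine ⟨fun k => if h : k ∈ mIdx d K then c ⟨k, h⟩ else 0, fun φ => ?_⟩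
  rw [← hT, ← hc, LinearMap.sum_apply, ← Finset.sum_coe_sort (mIdx d K)]
  apply Finset.sum_congr rfl
  intro i _
  simp [dkLin7]

end aux7

/-- (Proposition 1 i.) If a tempered distribution `f` on `ℝ^d`
has locally finite support `Λ`, then there exist `K < ∞` (independent of `λ`)
and complex coefficients `p_k(λ)` such that
`f = Σ_{λ∈Λ} Σ_{‖k‖≤K} p_k(λ) D^k δ_λ`. -/
theorem statement7 {d : ℕ} (f : TemperedDist d)
    (hlf : LocFinite (tdSupport f)) :
    ∃ (K : ℕ) (p : (Fin d → ℕ) → Rd d → ℂ),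
      (∀ k x, p k x ≠ 0 → x ∈ tdSupport f) ∧
      ∀ φ : SchwartzMap (Rd d) ℂ, HasCompactSupport (⇑φ) →
        f φ = ∑' x : Rd d, ∑ k ∈ mIdx d K, p k x * dkDelta k x φ := by  classical
  obtain ⟨C, K, hC, hb⟩ := bound7 f
  choose r hr hiso using isolated7 hlf
  choose p hp using fun a => local7 f hC hb a (hr a) (hiso a)
  refine ⟨K, fun k x => if x ∈ tdSupport f then p x k else 0, ?_, ?_⟩
  · intro k x h
    by_contra hx
    exact h (by simp [hx])
  intro φ hφ
  have hfin : (tdSupport f ∩ tsupport φ).Finite := by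
    obtain ⟨R, hR⟩ := hφ.isCompact.isBounded.subset_ball 0
    exact (hlf 0 R).subset (inter_subset_inter_right _ hR)
  have hnear : ∀ x ∈ tdSupport f, x ∉ hfin.toFinset → φ =ᶠ[nhds x] 0 := by
    intro x hx hxF
    apply notMem_tsupport_iff_eventuallyEq.1
    intro h
    exact hxF (hfin.mem_toFinset.2 ⟨hx, h⟩)
  rw [tsum_eq_sum (s := hfin.toFinset)]
  · have e1 : f (φ - ∑ a ∈ hfin.toFinset, SchwartzMap.smulLeftCLM ℂ (chi7 a (r a)) φ) = 0 := by
      have hval : ∀ y, (φ - ∑ a ∈ hfin.toFinset,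
          SchwartzMap.smulLeftCLM ℂ (chi7 a (r a)) φ) y
          = φ y - ∑ a ∈ hfin.toFinset, chi7 a (r a) y * φ y := by
        intro y
        rw [_root_.sub_apply, _root_.sum_apply]
        congr 1
        exact Finset.sum_congr rfl fun a _ => chi7_apply a (hr a) φ y
      apply vanish7'
      · refine hφ.mono ?_
        intro y hy hy0
        apply hy
        rw [hval, hy0]; simp
      · intro x hx
        by_cases hxF : x ∈ hfin.toFinset
        · have h1 : ∀ᶠ y in nhds x, ∀ a ∈ hfin.toFinset, a ≠ x → chi7 a (r a) y = 0 := by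
            rw [Filter.eventually_all_finset]
            intro a ha
            by_cases hax : a = x
            · simp [hax]
            · filter_upwards [chi7_far a (hr a) (hiso a x hx (Ne.symm hax))] with y hy _
              exact hy
          filter_upwards [h1, chi7_one x (hr x)] with y hy1 hy2
          rw [hval, Finset.sum_eq_single_of_mem x hxF, hy2]
          · ring
          · intro a ha hax
            rw [hy1 a ha hax, zero_mul]
        · filter_upwards [hnear x hx hxF] with y hy
          rw [hval, hy]; simp
    rw [map_sub, sub_eq_zero, map_sum] at e1
    rw [e1]
    apply Finset.sum_congr rfl
    intro a ha
    have : a ∈ tdSupport f := (hfin.mem_toFinset.1 ha).1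
    simp only [this, if_true]
    exact hp a φ
  · intro x hxF
    by_cases hx : x ∈ tdSupport f
    · simp only [hx, if_true]
      rw [← hp x φ]
      apply vanish7' f _ (chi7_cs x (hr x) φ)
      intro z hz
      by_cases hzx : z = x
      · subst hzx
        filter_upwards [hnear z hz hxF] with y hy
        rw [chi7_apply z (hr z), hy]; simp
      · filter_upwards [chi7_far x (hr x) (hiso x z hz hzx)] with y hy
        rw [chi7_apply x (hr x), hy, zero_mul]
    · simp [hx]
end
end
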